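/- Let d ≥ 1, 0 < λ ≤ Λ, Θ > 0, L > 0, and let ω : [0,∞) → [0,∞) be nondecreasing with ω(t) → 0 as t → 0⁺. For every δ > 0 there exists ε > 0, depending only on δ, d, λ, Λ, Θ, L and ω, with the following property: whenever F : Sym(d) → ℝ is uniformly (λ,Λ)-elliptic and convex, θ : cl(B₁) → ℝ is continuous with −1 < θ(x) ≤ Θ for all x and |θ(x) − θ(z)| ≤ L ω(|x − z|) for all x, z, f : B₁ → ℝ is continuous with ‖f‖_{L∞(B₁)} ≤ ε, and u ∈ C(B₁) is a normalized viscosity solution of |Du|^{θ(x)} F(D²u) = f(x) in B₁ which is differentiable at 0 with u(0) = 0 and Du(0) = 0, then there exists h ∈ C(B_{1/2}) which is a viscosity solution of F(D²h) = 0 in B_{1/2}, is differentiable at 0 with h(0) = 0 and Dh(0) = 0, and satisfies sup_{B_{1/2}} |u − h| < δ. -/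

import Mathlib

/-!
Viscosity solutions are handled through second order jets: `subS_of_visc` turns the equation into
the property `SubS`, which only remembers that the operator is elliptic and that the right-hand
side is small for every exponent in `(-1, Θ]`, and `visc_of_subP` turns the jet property `SubP`
back into a viscosity statement.  A supersolution for `F` is minus a subsolution for the dual
operator `dualF F`.

Two facts rest on the theorem on sums (`jensen_ishii`, obtained from Lasry-Lions regularization
and the Jensen lemma): comparison for `F(D²u) = 0`, and an interior Lipschitz estimate
(`lipschitz_est`) for `|q + Du|^θ F(D²u) = f` whose constant does not depend on the shift `q`.

Convexity of `F` replaces the Evans-Krylov theory by an elementary argument.  A convex elliptic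
operator is a supremum of affine operators, each a nonnegative combination of pure second
derivatives, with a common finite set of directions that all of them weight uniformly from below
(`exists_adm`).  The corresponding monotone finite difference scheme is solvable, and discrete Bernstein estimates bound first and second differences of its
solutions independently of the mesh.  In the limit (`exists_harmonic`) one gets a solution `h` of
`F(D²h) = 0` with prescribed Lipschitz boundary data and `|h(x) - h(0) - ⟨b, x⟩| ≤ C |x|²`.

Compactness, stability and comparison show that `u` is within `C ρ²` of such an `h` as soon as
`f` is small (`approx`); in the stability step a small concave kink `-|⟨w, ·⟩|` keeps the
gradient of the test function away from zero, where the equation says nothing.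

The hypothesis `Du(0) = 0` then controls `b`.  The blow-up
`(u(ρ x) - h(0) - ρ ⟨b, x⟩) / (2 C ρ²)` is a normalized solution of a shifted equation, hence
Lipschitz near `0` with a universal constant `K`, and its gradient at `0` is `-b / (2 C ρ)`, so
`|b| ≤ 2 C ρ K`.  Subtracting `h(0) + ⟨b, x⟩` from `h` does not affect `F(D²h) = 0` and changes
`h` by `O(ρ)`; with `ρ` small in terms of `δ` this is the function sought.
-/

open Metric Set Filter
open scoped RealInnerProductSpace

noncomputable section

abbrev Euc (d : ℕ) := EuclideanSpace ℝ (Fin d)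
abbrev Mat (d : ℕ) := Matrix (Fin d) (Fin d) ℝ

noncomputable def matOpNorm {n : Type*} [Fintype n] [DecidableEq n]
    (M : Matrix n n ℝ) : ℝ := ‖Matrix.toEuclideanCLM (𝕜 := ℝ) M‖

def UniformlyElliptic {d : ℕ} (lam Lam : ℝ) (F : Mat d → ℝ) : Prop :=
  F 0 = 0 ∧ ∀ M N : Mat d, M.IsHermitian → N.PosSemidef →
    lam * matOpNorm N ≤ F (M + N) - F M ∧ F (M + N) - F M ≤ Lam * matOpNorm N

noncomputable def hessM {d : ℕ} (φ : Euc d → ℝ) (x : Euc d) : Mat d :=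
  Matrix.of fun i j =>
    iteratedFDeriv ℝ 2 φ x ![EuclideanSpace.single i 1, EuclideanSpace.single j 1]

def ViscSubSol {d : ℕ} (F : Mat d → ℝ) (θ f : Euc d → ℝ) (q : Euc d) (u : Euc d → ℝ) : Prop :=
  ∀ x₀ ∈ ball (0 : Euc d) 1, ∀ φ : Euc d → ℝ, ContDiffAt ℝ 2 φ x₀ →
    IsLocalMax (fun x => u x - φ x) x₀ → q + gradient φ x₀ ≠ 0 →
      f x₀ ≤ ‖q + gradient φ x₀‖ ^ (θ x₀) * F (hessM φ x₀)

def ViscSuperSol {d : ℕ} (F : Mat d → ℝ) (θ f : Euc d → ℝ) (q : Euc d) (u : Euc d → ℝ) : Prop :=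
  ∀ x₀ ∈ ball (0 : Euc d) 1, ∀ φ : Euc d → ℝ, ContDiffAt ℝ 2 φ x₀ →
    IsLocalMin (fun x => u x - φ x) x₀ → q + gradient φ x₀ ≠ 0 →
      ‖q + gradient φ x₀‖ ^ (θ x₀) * F (hessM φ x₀) ≤ f x₀

def ViscSol {d : ℕ} (F : Mat d → ℝ) (θ f : Euc d → ℝ) (q : Euc d) (u : Euc d → ℝ) : Prop :=
  ViscSubSol F θ f q u ∧ ViscSuperSol F θ f q u

def ViscSubSolPure {d : ℕ} (F : Mat d → ℝ) (g : Euc d → ℝ) (u : Euc d → ℝ)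
    (s : Set (Euc d)) : Prop :=
  ∀ x₀ ∈ s, ∀ φ : Euc d → ℝ, ContDiffAt ℝ 2 φ x₀ →
    IsLocalMax (fun x => u x - φ x) x₀ → g x₀ ≤ F (hessM φ x₀)

def ViscSuperSolPure {d : ℕ} (F : Mat d → ℝ) (g : Euc d → ℝ) (u : Euc d → ℝ)
    (s : Set (Euc d)) : Prop :=
  ∀ x₀ ∈ s, ∀ φ : Euc d → ℝ, ContDiffAt ℝ 2 φ x₀ →
    IsLocalMin (fun x => u x - φ x) x₀ → F (hessM φ x₀) ≤ g x₀

def ViscSolPure {d : ℕ} (F : Mat d → ℝ) (g : Euc d → ℝ) (u : Euc d → ℝ)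
    (s : Set (Euc d)) : Prop :=
  ViscSubSolPure F g u s ∧ ViscSuperSolPure F g u s

/-! ### Quadratic forms and ellipticity -/

/-- The operator on Euclidean space given by a matrix. -/
def opM {d : ℕ} (X : Mat d) : Euc d →L[ℝ] Euc d := Matrix.toEuclideanCLM (𝕜 := ℝ) X

/-- The quadratic form `⟪y, X y⟫`. -/
def qf {d : ℕ} (X : Mat d) (y : Euc d) : ℝ := ⟪y, opM X y⟫

section qf
open Topology
variable {d : ℕ}

lemma opM_add (X Y : Mat d) : opM (X + Y) = opM X + opM Y := by simp [opM]
lemma opM_sub (X Y : Mat d) : opM (X - Y) = opM X - opM Y := by simp [opM]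
lemma opM_neg (X : Mat d) : opM (-X) = -opM X := by simp [opM]
lemma opM_smul (c : ℝ) (X : Mat d) : opM (c • X) = c • opM X := by simp [opM]
lemma opM_zero : opM (0 : Mat d) = 0 := by simp [opM]
lemma opM_one : opM (1 : Mat d) = 1 := by simp [opM]

lemma opM_apply (X : Mat d) (y : Euc d) (i : Fin d) : opM X y i = ∑ j, X i j * y j := by
  simp [opM, Matrix.mulVec, dotProduct]

lemma opM_single (X : Mat d) (i j : Fin d) : opM X (EuclideanSpace.single j 1) i = X i j := by
  simp [opM_apply]

lemma qf_add (X Y : Mat d) (y) : qf (X + Y) y = qf X y + qf Y y := by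
  simp [qf, opM_add, inner_add_right]
lemma qf_sub (X Y : Mat d) (y) : qf (X - Y) y = qf X y - qf Y y := by
  simp [qf, opM_sub, inner_sub_right]
lemma qf_neg (X : Mat d) (y) : qf (-X) y = - qf X y := by
  simp [qf, opM_neg]
lemma qf_smul (c : ℝ) (X : Mat d) (y) : qf (c • X) y = c * qf X y := by
  simp [qf, opM_smul, inner_smul_right]
lemma qf_zero (y : Euc d) : qf (0 : Mat d) y = 0 := by
  simp [qf, opM_zero]
lemma qf_one (y : Euc d) : qf (1 : Mat d) y = ‖y‖ ^ 2 := by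
  simp [qf, opM_one]
lemma qf_zero_vec (X : Mat d) : qf X 0 = 0 := by simp [qf]
lemma qf_smul_vec (X : Mat d) (c : ℝ) (y) : qf X (c • y) = c ^ 2 * qf X y := by
  simp [qf, inner_smul_right, inner_smul_left]; ring
lemma qf_neg_vec (X : Mat d) (y) : qf X (-y) = qf X y := by
  simp [qf]

lemma qf_eq_sum (X : Mat d) (y : Euc d) : qf X y = ∑ i, ∑ j, X i j * y i * y j := by
  rw [qf, PiLp.inner_apply]
  refine Finset.sum_congr rfl fun i _ => ?_
  rw [opM_apply]
  simp [Finset.sum_mul]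
  refine Finset.sum_congr rfl fun j _ => by ring

lemma inner_opM_symm {X : Mat d} (hX : X.IsSymm) (y z : Euc d) :
    ⟪y, opM X z⟫ = ⟪opM X y, z⟫ := by
  rw [PiLp.inner_apply, PiLp.inner_apply]
  simp only [opM_apply]
  simp [Finset.mul_sum, Finset.sum_mul]
  rw [Finset.sum_comm]
  refine Finset.sum_congr rfl fun i _ => Finset.sum_congr rfl fun j _ => ?_
  rw [hX.apply i j]; ring

lemma qf_add_vec {X : Mat d} (hX : X.IsSymm) (y z : Euc d) :
    qf X (y + z) = qf X y + 2 * ⟪opM X y, z⟫ + qf X z := by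
  simp only [qf, map_add, inner_add_left, inner_add_right]
  rw [inner_opM_symm hX y z, real_inner_comm (opM X y) z]; ring

lemma continuous_qf (X : Mat d) : Continuous (qf X) := by
  unfold qf; fun_prop

lemma abs_qf_le (X : Mat d) (y) : |qf X y| ≤ ‖opM X‖ * ‖y‖ ^ 2 := by
  calc |qf X y| ≤ ‖y‖ * ‖opM X y‖ := abs_real_inner_le_norm _ _
    _ ≤ ‖y‖ * (‖opM X‖ * ‖y‖) := by gcongr; exact (opM X).le_opNorm y
    _ = _ := by ring

/-- The matrix of a self-adjoint operator. -/
lemma exists_mat_of_symm (T : Euc d →L[ℝ] Euc d) (hT : ∀ y z, ⟪T y, z⟫ = ⟪y, T z⟫) :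
    ∃ X : Mat d, X.IsSymm ∧ opM X = T := by
  obtain ⟨X, rfl⟩ : ∃ X : Mat d, opM X = T :=
    ⟨(Matrix.toEuclideanCLM (n := Fin d) (𝕜 := ℝ)).symm T, by simp [opM]⟩
  refine ⟨X, ?_, rfl⟩
  ext i j
  have := hT (EuclideanSpace.single i 1) (EuclideanSpace.single j 1)
  simpa [opM_single, EuclideanSpace.inner_single_left, EuclideanSpace.inner_single_right] using this

/-- The rank-one matrix `v vᵀ`. -/
def vvT (v : Euc d) : Mat d := Matrix.of fun i j => v i * v j

lemma vvT_symm (v : Euc d) : (vvT v).IsSymm := by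
  ext i j; simp [vvT, mul_comm]

lemma qf_vvT (v y : Euc d) : qf (vvT v) y = ⟪v, y⟫ ^ 2 := by
  rw [qf_eq_sum, PiLp.inner_apply, sq, Finset.sum_mul_sum]
  refine Finset.sum_congr rfl fun i _ => Finset.sum_congr rfl fun j _ => ?_
  simp [vvT]; ring

/-- Uniform ellipticity expressed through quadratic forms: if `X ≤ Y` as forms, then passing from
`X` to `Y` raises `F` by at least `lam` times the gain in any unit direction, and adding `κ` times the
identity raises it by at most `Lam κ`. Only values on symmetric matrices are constrained. -/
structure QEll (lam Lam : ℝ) (F : Mat d → ℝ) : Prop where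
  zero : F 0 = 0
  mono : ∀ X Y : Mat d, X.IsSymm → Y.IsSymm → (∀ y, qf X y ≤ qf Y y) →
    ∀ e : Euc d, ‖e‖ = 1 → F X + lam * (qf Y e - qf X e) ≤ F Y
  up : ∀ X : Mat d, X.IsSymm → ∀ κ : ℝ, 0 ≤ κ → F (X + κ • 1) ≤ F X + Lam * κ

lemma isHermitian_iff {X : Mat d} : X.IsHermitian ↔ X.IsSymm := by
  rw [Matrix.IsHermitian, Matrix.conjTranspose_eq_transpose_of_trivial]; rfl

lemma posSemidef_of_qf {X : Mat d} (hX : X.IsSymm) (h : ∀ y, 0 ≤ qf X y) : X.PosSemidef := by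
  refine Matrix.PosSemidef.of_dotProduct_mulVec_nonneg (isHermitian_iff.2 hX) fun x => ?_
  have := h (WithLp.toLp 2 x)
  rw [qf_eq_sum] at this
  simpa [dotProduct, Matrix.mulVec, Finset.mul_sum, mul_assoc, mul_comm, mul_left_comm] using this

lemma UniformlyElliptic.qEll {lam Lam : ℝ} (hlam : 0 < lam) (hLam : lam ≤ Lam) {F : Mat d → ℝ}
    (hF : UniformlyElliptic lam Lam F) : QEll lam Lam F := by
  refine ⟨hF.1, fun X Y hX hY h e he => ?_, fun X hX κ hκ => ?_⟩
  · have hs : (Y - X).IsSymm := hY.sub hX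
    have h1 := (hF.2 X (Y - X) (isHermitian_iff.2 hX)
      (posSemidef_of_qf hs fun y => by rw [qf_sub]; linarith [h y])).1
    have h2 : qf (Y - X) e ≤ matOpNorm (Y - X) := by
      have := (abs_le.1 (abs_qf_le (Y - X) e)).2
      rw [he] at this
      simpa [matOpNorm, opM] using this
    rw [qf_sub] at h2
    rw [add_sub_cancel] at h1
    nlinarith
  · have hs : (κ • (1 : Mat d)).IsSymm := Matrix.isSymm_one.smul κ
    have h1 := (hF.2 X (κ • 1) (isHermitian_iff.2 hX)
      (posSemidef_of_qf hs fun y => by rw [qf_smul, qf_one]; positivity)).2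
    have h2 : matOpNorm (κ • (1 : Mat d)) ≤ κ := by
      change ‖opM (κ • (1 : Mat d))‖ ≤ κ
      rw [opM_smul, opM_one, norm_smul, Real.norm_of_nonneg hκ]
      have : ‖(1 : Euc d →L[ℝ] Euc d)‖ ≤ 1 := ContinuousLinearMap.norm_id_le
      nlinarith
    have : Lam * matOpNorm (κ • (1 : Mat d)) ≤ Lam * κ :=
      mul_le_mul_of_nonneg_left h2 (by linarith)
    linarith

/-- The dual operator `X ↦ -F (-X)`: `u` is a supersolution for `F` exactly when `-u` is a
subsolution for `dualF F`, so supersolutions need no definitions of their own. -/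
def dualF (F : Mat d → ℝ) : Mat d → ℝ := fun X => -F (-X)

lemma dualF_dualF (F : Mat d → ℝ) : dualF (dualF F) = F := by
  funext X; simp [dualF]

lemma QEll.dual {lam Lam : ℝ} {F : Mat d → ℝ} (hF : QEll lam Lam F) : QEll lam Lam (dualF F) := by
  refine ⟨by simp [dualF, hF.zero], fun X Y hX hY h e he => ?_, fun X hX κ hκ => ?_⟩
  · have := hF.mono (-Y) (-X) hY.neg hX.neg (fun y => by simp only [qf_neg]; linarith [h y]) e he
    simp only [qf_neg] at this
    simp only [dualF]; linarith
  · have := hF.up (-(X + κ • 1)) (hX.add (Matrix.isSymm_one.smul κ)).neg κ hκ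
    have h2 : -(X + κ • 1) + κ • 1 = -X := by abel
    rw [h2] at this
    simp only [dualF]; linarith

lemma QEll.mono' {lam Lam : ℝ} {F : Mat d → ℝ} (hd : 1 ≤ d) (hlam : 0 < lam) (hF : QEll lam Lam F)
    {X Y : Mat d} (hX : X.IsSymm) (hY : Y.IsSymm) (h : ∀ y, qf X y ≤ qf Y y) : F X ≤ F Y := by
  have := hF.mono X Y hX hY h (EuclideanSpace.single ⟨0, hd⟩ 1) (by simp)
  nlinarith [h (EuclideanSpace.single ⟨0, hd⟩ 1)]

/-- If `X ≤ Y + κ` as quadratic forms, then `F X ≤ F Y + Λ κ`. -/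
lemma QEll.le_add {lam Lam : ℝ} {F : Mat d → ℝ} (hd : 1 ≤ d) (hlam : 0 < lam) (hF : QEll lam Lam F)
    {X Y : Mat d} (hX : X.IsSymm) (hY : Y.IsSymm) {κ : ℝ} (hκ : 0 ≤ κ)
    (h : ∀ y, qf X y ≤ qf Y y + κ * ‖y‖ ^ 2) : F X ≤ F Y + Lam * κ :=
  (hF.mono' hd hlam hX (hY.add (Matrix.isSymm_one.smul κ))
    (fun y => by rw [qf_add, qf_smul, qf_one]; exact h y)).trans (hF.up Y hY κ hκ)

/-- As `QEll.le_add`, with a gain in one direction. -/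
lemma QEll.le_add' {lam Lam : ℝ} {F : Mat d → ℝ} (hF : QEll lam Lam F)
    {X Y : Mat d} (hX : X.IsSymm) (hY : Y.IsSymm) {κ : ℝ} (hκ : 0 ≤ κ)
    (h : ∀ y, qf X y ≤ qf Y y + κ * ‖y‖ ^ 2) (e : Euc d) (he : ‖e‖ = 1) :
    F X + lam * (qf Y e + κ - qf X e) ≤ F Y + Lam * κ := by
  have := hF.mono X (Y + κ • 1) hX (hY.add (Matrix.isSymm_one.smul κ))
    (fun y => by rw [qf_add, qf_smul, qf_one]; exact h y) e he
  rw [qf_add, qf_smul, qf_one, he] at this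
  linarith [hF.up Y hY κ hκ]

lemma QEll.abs_F_le {lam Lam : ℝ} {F : Mat d → ℝ} (hd : 1 ≤ d) (hlam : 0 < lam) (hF : QEll lam Lam F)
    {X : Mat d} (hX : X.IsSymm) : |F X| ≤ Lam * ‖opM X‖ := by
  have hb := fun y => abs_le.1 (abs_qf_le X y)
  have h1 := hF.le_add hd hlam hX Matrix.isSymm_zero (norm_nonneg (opM X))
    (fun y => by rw [qf_zero]; linarith [(hb y).2])
  have h2 := hF.le_add hd hlam Matrix.isSymm_zero hX (norm_nonneg (opM X))
    (fun y => by rw [qf_zero]; linarith [(hb y).1])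
  rw [hF.zero] at h1 h2
  rw [abs_le]; constructor <;> linarith

end qf

/-! ### Second-order jets -/

section jets
open Topology
variable {d : ℕ}

/-- `(p, X)` is a second-order upper jet of `u` at `x`, without the usual `o(|y|²)` error: the
quadratic polynomial touches `u` from above near `x`. -/
def UpJet (u : Euc d → ℝ) (x p : Euc d) (X : Mat d) : Prop :=
  ∀ᶠ y in 𝓝 (0 : Euc d), u (x + y) ≤ u x + ⟪p, y⟫ + qf X y / 2

/-- Subsolutions, in terms of jets, of all the equations `|q + Du|^θ F(D²u) = f` with `|f| ≤ ε` and
exponents in `(-1, Θ]` simultaneously (`|q + Du|^(-θ)` is at most `|q + Du|^(-Θ) + 1 + |q + Du|`).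
The last summand is `‖p‖` rather than `‖q + p‖`, so the class does not deteriorate for large `q` and
the Lipschitz estimate is uniform in `q`. -/
def SubS (F : Mat d → ℝ) (ε Θ : ℝ) (q : Euc d) (s : Set (Euc d)) (u : Euc d → ℝ) : Prop :=
  ∀ x ∈ s, ∀ p : Euc d, ∀ X : Mat d, X.IsSymm → UpJet u x p X → q + p ≠ 0 →
    -(ε * (‖q + p‖ ^ (-Θ) + 1 + ‖p‖)) ≤ F X

/-- Subsolutions of `F(D²u) = 0`, in terms of jets. -/
def SubP (F : Mat d → ℝ) (s : Set (Euc d)) (u : Euc d → ℝ) : Prop :=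
  ∀ x ∈ s, ∀ p : Euc d, ∀ X : Mat d, X.IsSymm → UpJet u x p X → 0 ≤ F X

lemma UpJet.mono {u : Euc d → ℝ} {x p : Euc d} {X Y : Mat d} (h : UpJet u x p X)
    (hXY : ∀ y, qf X y ≤ qf Y y) : UpJet u x p Y := by
  filter_upwards [h] with y hy
  linarith [hXY y]

/-- The quadratic test polynomial with gradient `p` and Hessian `X` at `x`. -/
def quadT (x p : Euc d) (X : Mat d) (z : Euc d) : ℝ := ⟪p, z - x⟫ + qf X (z - x) / 2

lemma hasFDerivAt_quadT (x p : Euc d) {X : Mat d} (hX : X.IsSymm) (z : Euc d) :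
    HasFDerivAt (quadT x p X) (innerSL ℝ (p + opM X (z - x))) z := by
  have h1 : HasFDerivAt (fun z => z - x) (ContinuousLinearMap.id ℝ (Euc d)) z :=
    (hasFDerivAt_id z).sub_const x
  have h2 : HasFDerivAt (fun z : Euc d => ⟪z - x, opM X (z - x)⟫) _ z :=
    h1.inner ℝ ((opM X).hasFDerivAt.comp z h1)
  have h3 : HasFDerivAt (fun z : Euc d => ⟪p, z - x⟫) _ z :=
    (hasFDerivAt_const p z).inner ℝ h1
  have h4 := h3.add (h2.mul_const (1/2 : ℝ))
  have : quadT x p X = (fun z : Euc d => ⟪p, z - x⟫) + fun z : Euc d => ⟪z - x, opM X (z - x)⟫ * (1/2) := by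
    funext z; simp only [quadT, qf, Pi.add_apply]; ring
  rw [this]
  refine h4.congr_fderiv ?_
  ext w
  simp [fderivInnerCLM_apply, -map_sub]
  rw [inner_opM_symm hX (z - x) w, real_inner_comm (opM X (z - x)) w]; ring

lemma contDiff_quadT (x p : Euc d) (X : Mat d) : ContDiff ℝ 2 (quadT x p X) := by
  have h : ContDiff ℝ 2 (fun z : Euc d => z - x) := by fun_prop
  have h' : ContDiff ℝ 2 (fun z : Euc d => opM X (z - x)) := by fun_prop
  unfold quadT qf
  exact (contDiff_const.inner ℝ h).add ((h.inner ℝ h').div_const 2)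

lemma fderiv_quadT (x p : Euc d) {X : Mat d} (hX : X.IsSymm) :
    fderiv ℝ (quadT x p X) = fun z => innerSL ℝ (p + opM X (z - x)) :=
  funext fun z => (hasFDerivAt_quadT x p hX z).fderiv

lemma gradient_quadT (x p : Euc d) {X : Mat d} (hX : X.IsSymm) :
    gradient (quadT x p X) x = p := by
  apply HasGradientAt.gradient
  rw [hasGradientAt_iff_hasFDerivAt]
  have := hasFDerivAt_quadT x p hX x
  rw [sub_self, map_zero, add_zero] at this
  exact this

lemma hessM_quadT (x p : Euc d) {X : Mat d} (hX : X.IsSymm) :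
    hessM (quadT x p X) x = X := by
  ext i j
  simp only [hessM, Matrix.of_apply, iteratedFDeriv_two_apply]
  rw [fderiv_quadT x p hX]
  have h1 : HasFDerivAt (fun z : Euc d => p + opM X (z - x)) (opM X) x :=
    ((opM X).hasFDerivAt.comp x ((hasFDerivAt_id x).sub_const x)).const_add p
  have h2 : HasFDerivAt (fun z : Euc d => (innerSL ℝ : Euc d →L[ℝ] Euc d →L[ℝ] ℝ) (p + opM X (z - x))) _ x :=
    ((innerSL ℝ : Euc d →L[ℝ] Euc d →L[ℝ] ℝ)).hasFDerivAt.comp x h1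
  have h3 := h2.fderiv
  change (fderiv ℝ (fun z : Euc d => (innerSL ℝ : Euc d →L[ℝ] Euc d →L[ℝ] ℝ) (p + opM X (z - x))) x) _ _ = _
  rw [h3]
  change ⟪opM X (EuclideanSpace.single i 1), EuclideanSpace.single j (1:ℝ)⟫ = X i j
  rw [EuclideanSpace.inner_single_right, opM_single, hX.apply i j]
  simp

lemma UpJet.isLocalMax {u : Euc d → ℝ} {x p : Euc d} {X : Mat d} (h : UpJet u x p X) :
    IsLocalMax (fun z => u z - quadT x p X z) x := by
  have ht : Tendsto (fun z : Euc d => z - x) (𝓝 x) (𝓝 0) := by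
    have : Continuous fun z : Euc d => z - x := by fun_prop
    simpa using this.tendsto x
  filter_upwards [ht.eventually h] with z hz
  simp only [add_sub_cancel] at hz
  simp only [quadT, sub_self, inner_zero_right, qf_zero_vec]
  linarith

/-- Second order Taylor expansion of a test function, as an upper jet. -/
lemma taylor_two {φ : Euc d → ℝ} {x : Euc d} (hφ : ContDiffAt ℝ 2 φ x) :
    (hessM φ x).IsSymm ∧ ∀ κ > 0, ∀ᶠ y in 𝓝 (0 : Euc d),
      |φ (x + y) - φ x - ⟪gradient φ x, y⟫ - qf (hessM φ x) y / 2| ≤ κ * ‖y‖ ^ 2 := by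
  have hsym : (hessM φ x).IsSymm := by
    ext i j
    simp only [hessM, Matrix.transpose_apply, Matrix.of_apply, iteratedFDeriv_two_apply]
    have := hφ.isSymmSndFDerivAt (by simp)
    simpa using this _ _
  refine ⟨hsym, fun κ hκ => ?_⟩
  -- derivative of the gradient
  have hd1 : DifferentiableAt ℝ (fderiv ℝ φ) x :=
    (hφ.fderiv_right (m := 1) (by norm_num)).differentiableAt (by norm_num)
  have hd0 : ∀ᶠ z in 𝓝 x, DifferentiableAt ℝ φ z := by
    filter_upwards [(hφ.eventually (by simp))] with z hz
    exact hz.differentiableAt (by norm_num)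
  have hA : ∀ v w, fderiv ℝ (fderiv ℝ φ) x v w = ⟪opM (hessM φ x) v, w⟫ := by
    set B := fderiv ℝ (fderiv ℝ φ) x
    have hentry : ∀ i j, hessM φ x i j = B (EuclideanSpace.single i 1) (EuclideanSpace.single j 1) := by
      intro i j; simp [hessM, iteratedFDeriv_two_apply, B]
    intro v w
    have hv : v = ∑ i, v i • EuclideanSpace.single i (1:ℝ) := by
      ext k; simp [Finset.sum_apply, Pi.single_apply]
    have hw : w = ∑ i, w i • EuclideanSpace.single i (1:ℝ) := by
      ext k; simp [Finset.sum_apply, Pi.single_apply]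
    conv_lhs => rw [hv, hw]
    simp only [map_sum, map_smul, sum_apply, smul_apply,
      smul_eq_mul]
    rw [PiLp.inner_apply]
    simp only [opM_apply]
    simp only [RCLike.inner_apply, conj_trivial, Finset.mul_sum]
    refine Finset.sum_congr rfl fun i _ => Finset.sum_congr rfl fun j _ => ?_
    rw [← hentry, hsym.apply]; ring
  have hlittle := hd1.hasFDerivAt.isLittleO
  rw [Asymptotics.isLittleO_iff] at hlittle
  have h1 := hlittle hκ
  obtain ⟨r, hr, hball⟩ := Metric.eventually_nhds_iff_ball.1 (h1.and hd0)
  filter_upwards [Metric.ball_mem_nhds (0 : Euc d) hr] with y hy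
  -- mean value inequality for the remainder on the segment
  have hyr : ‖y‖ < r := by simpa using hy
  let G : Euc d → ℝ := fun z => φ z - quadT x (gradient φ x) (hessM φ x) z
  have hG : ∀ z ∈ closedBall x ‖y‖, HasFDerivWithinAt G
      (fderiv ℝ φ z - innerSL ℝ (gradient φ x + opM (hessM φ x) (z - x))) (closedBall x ‖y‖) z := by
    intro z hz
    have hz' : z ∈ ball x r := lt_of_le_of_lt hz hyr
    exact (((hball z hz').2.hasFDerivAt).sub (hasFDerivAt_quadT x _ hsym z)).hasFDerivWithinAt
  have hbd : ∀ z ∈ closedBall x ‖y‖,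
      ‖fderiv ℝ φ z - innerSL ℝ (gradient φ x + opM (hessM φ x) (z - x))‖ ≤ κ * ‖y‖ := by
    intro z hz
    have hz' : z ∈ ball x r := lt_of_le_of_lt hz hyr
    have h2 := (hball z hz').1
    have h3 : fderiv ℝ φ z - innerSL ℝ (gradient φ x + opM (hessM φ x) (z - x)) =
        fderiv ℝ φ z - fderiv ℝ φ x - (fderiv ℝ (fderiv ℝ φ) x) (z - x) := by
      ext w
      simp only [sub_apply, innerSL_apply_apply, inner_add_left, hA]
      have : ⟪gradient φ x, w⟫ = fderiv ℝ φ x w := by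
        simp [gradient]
      rw [this]; ring
    rw [h3]
    refine h2.trans ?_
    have : ‖z - x‖ ≤ ‖y‖ := by simpa [dist_eq_norm] using hz
    gcongr
  have := (convex_closedBall x ‖y‖).norm_image_sub_le_of_norm_hasFDerivWithin_le hG hbd
    (mem_closedBall_self (norm_nonneg y)) (y := x + y) (by simp)
  have h5 : G (x + y) - G x = φ (x + y) - φ x - ⟪gradient φ x, y⟫ - qf (hessM φ x) y / 2 := by
    simp only [G, quadT, add_sub_cancel_left, sub_self, inner_zero_right, qf_zero_vec]; ring
  rw [← h5]
  simpa [sq, mul_assoc] using this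

/-- A test function touching from above gives a jet; the Taylor remainder is absorbed into `κ`. -/
lemma upJet_of_test {u φ : Euc d → ℝ} {x : Euc d} (hφ : ContDiffAt ℝ 2 φ x)
    (hmax : IsLocalMax (fun z => u z - φ z) x) {κ : ℝ} (hκ : 0 < κ) :
    UpJet u x (gradient φ x) (hessM φ x + κ • 1) := by
  have h1 := (taylor_two hφ).2 (κ / 2) (by positivity)
  have ht : Tendsto (fun y : Euc d => x + y) (𝓝 0) (𝓝 x) := by
    have : Continuous fun y : Euc d => x + y := by fun_prop
    simpa using this.tendsto 0
  filter_upwards [h1, ht.eventually hmax] with y hy hm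
  have := (abs_le.1 hy).2
  rw [qf_add, qf_smul, qf_one]
  linarith

end jets

/-! ### Viscosity solutions in terms of jets -/

section visc
open Topology
variable {d : ℕ}

/-- One bound for all exponents `θ ∈ (-1, Θ]`: for `a ≤ 1` the first term dominates, for `1 ≤ a`
the other two do. -/
lemma rpow_neg_le {a θ Θ : ℝ} (ha : 0 < a) (h1 : -1 < θ) (h2 : θ ≤ Θ) :
    a ^ (-θ) ≤ a ^ (-Θ) + 1 + a := by
  have h0 : 0 ≤ a ^ (-Θ) := Real.rpow_nonneg ha.le _
  rcases le_total a 1 with h | h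
  · have := Real.rpow_le_rpow_of_exponent_ge ha h (show -Θ ≤ -θ by linarith)
    linarith
  · have := Real.rpow_le_rpow_of_exponent_le h (show -θ ≤ 1 by linarith)
    rw [Real.rpow_one] at this
    linarith

lemma neg_le_of_rpow_mul {a θ Θ ε c f : ℝ} (ha : 0 < a) (h1 : -1 < θ) (h2 : θ ≤ Θ) (hf : |f| ≤ ε)
    (h : f ≤ a ^ θ * c) : -(ε * (a ^ (-Θ) + 1 + a)) ≤ c := by
  have hε : 0 ≤ ε := (abs_nonneg f).trans hf
  have hpos : 0 < a ^ (-θ) := Real.rpow_pos_of_pos ha _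
  have hmul : a ^ (-θ) * a ^ θ = 1 := by
    rw [← Real.rpow_add ha]; simp
  have h3 : a ^ (-θ) * f ≤ c := by
    calc a ^ (-θ) * f ≤ a ^ (-θ) * (a ^ θ * c) := mul_le_mul_of_nonneg_left h hpos.le
      _ = c := by rw [← mul_assoc, hmul, one_mul]
  have h4 := rpow_neg_le ha h1 h2
  have h5 := (abs_le.1 hf).1
  nlinarith

lemma subS_of_visc {F : Mat d → ℝ} {θ f u : Euc d → ℝ} {ε Θ : ℝ}
    (hθ : ∀ x ∈ closedBall (0 : Euc d) 1, -1 < θ x ∧ θ x ≤ Θ)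
    (hf : ∀ x ∈ ball (0 : Euc d) 1, |f x| ≤ ε) (hu : ViscSubSol F θ f 0 u) :
    SubS F ε Θ 0 (ball 0 1) u := by
  intro x hx p X hX hj hp
  have h := hu x hx (quadT x p X) (contDiff_quadT x p X).contDiffAt hj.isLocalMax
    (by rwa [gradient_quadT x p hX])
  rw [gradient_quadT x p hX, hessM_quadT x p hX] at h
  rw [zero_add] at h hp ⊢
  exact neg_le_of_rpow_mul (norm_pos_iff.2 hp) (hθ x (ball_subset_closedBall hx)).1
    (hθ x (ball_subset_closedBall hx)).2 (hf x hx) h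

lemma subS_of_visc_super {F : Mat d → ℝ} {θ f u : Euc d → ℝ} {ε Θ : ℝ}
    (hθ : ∀ x ∈ closedBall (0 : Euc d) 1, -1 < θ x ∧ θ x ≤ Θ)
    (hf : ∀ x ∈ ball (0 : Euc d) 1, |f x| ≤ ε) (hu : ViscSuperSol F θ f 0 u) :
    SubS (dualF F) ε Θ 0 (ball 0 1) (-u) := by
  intro x hx p X hX hj hp
  have hmin : IsLocalMin (fun z => u z - quadT x (-p) (-X) z) x := by
    have := hj.isLocalMax.neg
    refine this.congr (Eventually.of_forall fun z => ?_)
    simp only [quadT, Pi.neg_apply, inner_neg_left, qf_neg]; ring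
  have h := hu x hx (quadT x (-p) (-X)) (contDiff_quadT x _ _).contDiffAt hmin
    (by rw [gradient_quadT x _ hX.neg]; simpa using hp)
  rw [gradient_quadT x _ hX.neg, hessM_quadT x _ hX.neg] at h
  rw [zero_add, norm_neg] at h
  rw [zero_add] at hp ⊢
  refine neg_le_of_rpow_mul (norm_pos_iff.2 hp) (hθ x (ball_subset_closedBall hx)).1
    (hθ x (ball_subset_closedBall hx)).2 (f := -f x) (by rw [abs_neg]; exact hf x hx) ?_
  simp only [dualF]; linarith

lemma visc_of_subP (hd : 1 ≤ d) {lam Lam : ℝ} (hlam : 0 < lam) {F : Mat d → ℝ}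
    (hF : QEll lam Lam F) {s : Set (Euc d)} {h : Euc d → ℝ} (h1 : SubP F s h)
    (h2 : SubP (dualF F) s (-h)) : ViscSolPure F (fun _ => (0:ℝ)) h s := by
  have key : ∀ F : Mat d → ℝ, QEll lam Lam F → ∀ h, SubP F s h →
      ViscSubSolPure F (fun _ => (0:ℝ)) h s := by
    intro F hF h h1 x hx φ hφ hmax
    have hs := (taylor_two hφ).1
    have h3 : ∀ κ > 0, 0 ≤ F (hessM φ x) + Lam * κ := fun κ hκ =>
      (h1 x hx _ _ (hs.add (Matrix.isSymm_one.smul κ)) (upJet_of_test hφ hmax hκ)).trans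
        (hF.up _ hs κ hκ.le)
    have hL : 0 ≤ Lam := by
      have a := hF.up 0 Matrix.isSymm_zero 1 zero_le_one
      have b := hF.mono' hd hlam Matrix.isSymm_zero (Matrix.isSymm_zero.add (Matrix.isSymm_one.smul (1:ℝ)))
        (fun y => by rw [qf_add, qf_smul, qf_one]; nlinarith [norm_nonneg y])
      linarith
    refine le_of_forall_pos_le_add fun e he => ?_
    have := h3 (e / (Lam + 1)) (by positivity)
    have h4 : Lam * (e / (Lam + 1)) ≤ e := by
      rw [mul_div_assoc', div_le_iff₀ (by positivity)]; nlinarith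
    linarith
  refine ⟨key F hF h h1, fun x hx φ hφ hmin => ?_⟩
  have h3 := key _ hF.dual _ h2 x hx (-φ) hφ.neg (by
    have := hmin.neg
    refine this.congr (Eventually.of_forall fun z => ?_)
    simp only [Pi.neg_apply]; ring)
  have h4 : hessM (-φ) x = - hessM φ x := by
    ext i j
    simp [hessM, iteratedFDeriv_neg_apply]
  rw [h4] at h3
  simpa [dualF] using h3

end visc

/-! ### Lasry–Lions regularization -/

section LL
open Topology
variable {d : ℕ}

lemma half_parallelogram (a b : Euc d) :
    ‖a‖ ^ 2 + ‖b‖ ^ 2 = 2 * ‖(1 / 2 : ℝ) • (a + b)‖ ^ 2 + 1 / 2 * ‖a - b‖ ^ 2 := by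
  rw [norm_smul, mul_pow, norm_add_sq_real, norm_sub_sq_real]
  norm_num; ring

/-- Lasry–Lions regularization. The function `c` is an inf-convolution of a sup-convolution of `u`; it
is of class `C^{1,1}` with gradient `g`, lies above `u` on `K`, and where it is locally below a
paraboloid of opening `k < 1 / σ` its upper jets are upper jets of `u` at a nearby point. -/
lemma lasry_lions {K : Set (Euc d)} (hK : IsCompact K) (hne : K.Nonempty) {u : Euc d → ℝ}
    (hu : ContinuousOn u K) {M : ℝ} (hM : ∀ x ∈ K, |u x| ≤ M) {σ : ℝ} (hσ : 0 < σ) :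
    ∃ (c : Euc d → ℝ) (g : Euc d → Euc d),
      (∀ x ∈ K, u x ≤ c x) ∧
      (∀ x ∈ K, ∃ z ∈ K, c x ≤ u z ∧ ‖x - z‖ ^ 2 ≤ 8 * σ * M) ∧
      (∀ x ξ, |c (x + ξ) - c x - ⟪g x, ξ⟫| ≤ 3 / (2 * σ) * ‖ξ‖ ^ 2) ∧
      (∀ x ∈ K, ∀ k < 1 / σ, (∀ᶠ ξ in 𝓝 (0 : Euc d), c (x + ξ) ≤ c x + ⟪g x, ξ⟫ + k / 2 * ‖ξ‖ ^ 2) →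
        ∃ z ∈ K, ‖x - z‖ ^ 2 ≤ 8 * σ * M ∧ ∀ ζ, z + ζ ∈ K → u (z + ζ) - u z ≤ c (x + ζ) - c x) := by
  obtain ⟨z0, hz0⟩ := hne
  -- the sup-convolution, with parameter `2 σ`
  obtain ⟨m, hmc, hm1, hm2⟩ : ∃ m : Euc d → ℝ, Continuous m ∧
      (∀ y, ∀ z ∈ K, u z - ‖y - z‖ ^ 2 / (4 * σ) ≤ m y) ∧
      (∀ y, ∃ z ∈ K, m y = u z - ‖y - z‖ ^ 2 / (4 * σ)) := by
    have hcK : CompactSpace K := isCompact_iff_compactSpace.1 hK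
    let f : Euc d → K → ℝ := fun y z => u z - ‖y - z‖ ^ 2 / (4 * σ)
    have hf : Continuous (Function.uncurry f) := by
      have h1 : Continuous fun p : Euc d × K => u p.2 :=
        (continuousOn_iff_continuous_domRestrict.1 hu).comp continuous_snd
      have h2 : Continuous fun p : Euc d × K => ‖p.1 - p.2‖ ^ 2 / (4 * σ) := by fun_prop
      exact h1.sub h2
    have hex : ∀ y, ∃ z : K, ∀ z' : K, f y z' ≤ f y z := by
      intro y
      have : Continuous (f y) := hf.comp (by fun_prop : Continuous fun z : K => (y, z))
      obtain ⟨z, -, hz⟩ := isCompact_univ.exists_isMaxOn ⟨(⟨z0, hz0⟩ : K), mem_univ _⟩ this.continuousOn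
      exact ⟨z, fun z' => hz (mem_univ z')⟩
    have hs : ∀ y, ∀ z : K, (∀ z' : K, f y z' ≤ f y z) → sSup (f y '' univ) = f y z := by
      intro y z hz
      refine IsGreatest.csSup_eq ⟨⟨z, mem_univ _, rfl⟩, ?_⟩
      rintro _ ⟨z', -, rfl⟩; exact hz z'
    refine ⟨fun y => sSup (f y '' univ), isCompact_univ.continuous_sSup hf, fun y z hz => ?_, fun y => ?_⟩
    · obtain ⟨z1, h1⟩ := hex y
      simp only []
      rw [hs y z1 h1]; exact h1 ⟨z, hz⟩
    · obtain ⟨z1, h1⟩ := hex y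
      exact ⟨z1, z1.2, hs y z1 h1⟩
  have hmin : ∀ x, ∃ y, ∀ y', m y + ‖x - y‖ ^ 2 / (2 * σ) ≤ m y' + ‖x - y'‖ ^ 2 / (2 * σ) := by
    intro x
    have hcont : Continuous fun y => m y + ‖x - y‖ ^ 2 / (2 * σ) := by fun_prop
    refine hcont.exists_forall_le ?_
    have h1 : Tendsto (fun y : Euc d => ‖x - y‖) (cocompact (Euc d)) atTop := by
      have := tendsto_dist_left_cocompact_atTop x
      refine this.congr fun y => dist_eq_norm _ _
    have h2 : Tendsto (fun y : Euc d => ‖x - y‖ ^ 2 * (1 / (8 * σ))) (cocompact (Euc d)) atTop :=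
      ((tendsto_pow_atTop two_ne_zero).comp h1).atTop_mul_const (by positivity)
    refine tendsto_atTop_mono (fun y => ?_)
      (tendsto_atTop_add_const_right _ (u z0 - 3 * ‖x - z0‖ ^ 2 / (4 * σ)) h2)
    have h3 := hm1 y z0 hz0
    have h4 : ‖y - z0‖ ≤ ‖x - y‖ + ‖x - z0‖ := by
      have : y - z0 = (x - z0) - (x - y) := by abel
      rw [this, add_comm]; exact norm_sub_le _ _
    have h5 : ‖y - z0‖ ^ 2 ≤ 3 / 2 * ‖x - y‖ ^ 2 + 3 * ‖x - z0‖ ^ 2 := by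
      have : ‖y - z0‖ ^ 2 ≤ (‖x - y‖ + ‖x - z0‖) ^ 2 := by gcongr
      nlinarith [sq_nonneg (‖x - y‖ - 2 * ‖x - z0‖)]
    have h6 : ‖y - z0‖ ^ 2 / (4 * σ) ≤ (3 / 2 * ‖x - y‖ ^ 2 + 3 * ‖x - z0‖ ^ 2) / (4 * σ) := by gcongr
    have h7 : (3 / 2 * ‖x - y‖ ^ 2 + 3 * ‖x - z0‖ ^ 2) / (4 * σ) + ‖x - y‖ ^ 2 * (1 / (8 * σ))
      = ‖x - y‖ ^ 2 / (2 * σ) + 3 * ‖x - z0‖ ^ 2 / (4 * σ) := by field_simp; ring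
    linarith
  choose Y hY using hmin
  let c : Euc d → ℝ := fun x => m (Y x) + ‖x - Y x‖ ^ 2 / (2 * σ)
  have hcle : ∀ x y, c x ≤ m y + ‖x - y‖ ^ 2 / (2 * σ) := hY
  have huc : ∀ x ∈ K, u x ≤ c x := by
    intro x hx
    have h1 := hm1 (Y x) x hx
    have h2 : ‖Y x - x‖ ^ 2 / (4 * σ) ≤ ‖x - Y x‖ ^ 2 / (2 * σ) := by
      rw [norm_sub_rev]; gcongr; linarith
    simp only [c]; linarith
  have hup : ∀ x ξ, c (x + ξ) ≤ c x + ⟪(1 / σ) • (x - Y x), ξ⟫ + 1 / (2 * σ) * ‖ξ‖ ^ 2 := by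
    intro x ξ
    refine (hcle (x + ξ) (Y x)).trans (le_of_eq ?_)
    have : x + ξ - Y x = (x - Y x) + ξ := by abel
    rw [this, norm_add_sq_real, real_inner_smul_left]
    simp only [c]; field_simp; ring
  have hmid : ∀ x ξ, 2 * c x ≤ c (x + ξ) + c (x - ξ) + ‖ξ‖ ^ 2 / σ := by
    intro x ξ
    set y1 := Y (x + ξ) with hy1
    set y2 := Y (x - ξ) with hy2
    have h0 := hcle x ((1 / 2 : ℝ) • (y1 + y2))
    obtain ⟨z, hz, hz'⟩ := hm2 ((1 / 2 : ℝ) • (y1 + y2))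
    have h1 := hm1 y1 z hz
    have h2 := hm1 y2 z hz
    have e1 : c (x + ξ) = m y1 + ‖x + ξ - y1‖ ^ 2 / (2 * σ) := rfl
    have e2 : c (x - ξ) = m y2 + ‖x - ξ - y2‖ ^ 2 / (2 * σ) := rfl
    -- parallelogram identities
    have p1 : ‖y1 - z‖ ^ 2 + ‖y2 - z‖ ^ 2 =
        2 * ‖(1 / 2 : ℝ) • (y1 + y2) - z‖ ^ 2 + 1 / 2 * ‖y1 - y2‖ ^ 2 := by
      have a1 : (1 / 2 : ℝ) • (y1 + y2) - z = (1 / 2 : ℝ) • ((y1 - z) + (y2 - z)) := by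
        module
      have a2 : y1 - y2 = (y1 - z) - (y2 - z) := by abel
      rw [a1, a2]; exact half_parallelogram _ _
    have p2 : ‖x + ξ - y1‖ ^ 2 + ‖x - ξ - y2‖ ^ 2 =
        2 * ‖x - (1 / 2 : ℝ) • (y1 + y2)‖ ^ 2 + 1 / 2 * ‖(2 : ℝ) • ξ - (y1 - y2)‖ ^ 2 := by
      have a1 : x - (1 / 2 : ℝ) • (y1 + y2) = (1 / 2 : ℝ) • ((x + ξ - y1) + (x - ξ - y2)) := by
        module
      have a2 : (2 : ℝ) • ξ - (y1 - y2) = (x + ξ - y1) - (x - ξ - y2) := by module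
      rw [a1, a2]; exact half_parallelogram _ _
    have p3 : ‖y1 - y2‖ ^ 2 ≤ 2 * ‖(2 : ℝ) • ξ - (y1 - y2)‖ ^ 2 + 8 * ‖ξ‖ ^ 2 := by
      have a1 : ‖y1 - y2‖ ≤ ‖(2 : ℝ) • ξ - (y1 - y2)‖ + 2 * ‖ξ‖ := by
        have : y1 - y2 = (2 : ℝ) • ξ - ((2 : ℝ) • ξ - (y1 - y2)) := by abel
        calc ‖y1 - y2‖ = ‖(2 : ℝ) • ξ - ((2 : ℝ) • ξ - (y1 - y2))‖ := by rw [← this]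
          _ ≤ ‖(2 : ℝ) • ξ‖ + ‖(2 : ℝ) • ξ - (y1 - y2)‖ := norm_sub_le _ _
          _ = _ := by rw [norm_smul]; norm_num; ring
      have a2 : ‖y1 - y2‖ ^ 2 ≤ (‖(2 : ℝ) • ξ - (y1 - y2)‖ + 2 * ‖ξ‖) ^ 2 := by gcongr
      nlinarith [sq_nonneg (‖(2 : ℝ) • ξ - (y1 - y2)‖ - 2 * ‖ξ‖)]
    rw [e1, e2]
    rw [hz'] at h0
    generalize ‖y1 - z‖ ^ 2 = q1 at *
    generalize ‖y2 - z‖ ^ 2 = q2 at *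
    generalize ‖(1 / 2 : ℝ) • (y1 + y2) - z‖ ^ 2 = q3 at *
    generalize ‖y1 - y2‖ ^ 2 = q4 at *
    generalize ‖x + ξ - y1‖ ^ 2 = q5 at *
    generalize ‖x - ξ - y2‖ ^ 2 = q6 at *
    generalize ‖x - (1 / 2 : ℝ) • (y1 + y2)‖ ^ 2 = q7 at *
    generalize ‖(2 : ℝ) • ξ - (y1 - y2)‖ ^ 2 = q8 at *
    have i1 : q1 / (4 * σ) + q2 / (4 * σ) = q3 / (4 * σ) * 2 + q4 / (8 * σ) := by
      rw [← add_div, p1]; field_simp; ring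
    have i2 : q5 / (2 * σ) + q6 / (2 * σ) = q7 / (2 * σ) * 2 + q8 / (4 * σ) := by
      rw [← add_div, p2]; field_simp; ring
    have i3 : q4 / (8 * σ) ≤ q8 / (4 * σ) + ‖ξ‖ ^ 2 / σ := by
      have : q8 / (4 * σ) + ‖ξ‖ ^ 2 / σ = (2 * q8 + 8 * ‖ξ‖ ^ 2) / (8 * σ) := by field_simp; ring
      rw [this]; gcongr
    linarith
  refine ⟨c, fun x => (1 / σ) • (x - Y x), huc, ?_, ?_, ?_⟩
  · intro x hx
    obtain ⟨z, hz, hz'⟩ := hm2 x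
    have h1 : c x ≤ u z - ‖x - z‖ ^ 2 / (4 * σ) := by
      have := hcle x x
      rw [hz'] at this; simpa using this
    have h2 := huc x hx
    have h3 := abs_le.1 (hM x hx)
    have h4 := abs_le.1 (hM z hz)
    have h5 : ‖x - z‖ ^ 2 / (4 * σ) ≤ 2 * M := by linarith
    rw [div_le_iff₀ (by positivity)] at h5
    refine ⟨z, hz, ?_, by linarith⟩
    have : 0 ≤ ‖x - z‖ ^ 2 / (4 * σ) := by positivity
    linarith
  · intro x ξ
    have h1 := hup x ξ
    have h2 := hup x (-ξ)
    have h3 := hmid x ξ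
    rw [norm_neg, inner_neg_right, ← sub_eq_add_neg] at h2
    have h4 : 3 / (2 * σ) * ‖ξ‖ ^ 2 = 1 / (2 * σ) * ‖ξ‖ ^ 2 + ‖ξ‖ ^ 2 / σ := by field_simp; ring
    have h5 : 0 ≤ ‖ξ‖ ^ 2 / σ := by positivity
    rw [abs_le]; constructor <;> linarith
  · intro x hx k hk hev
    set y := Y x with hy
    obtain ⟨z, hz, hz'⟩ := hm2 y
    -- `c` is an exact paraboloid of opening `1 / σ` on the segment from `x` to `ζ`
    let ζ : Euc d := (1 / 2 : ℝ) • (y + z)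
    have hζ : ∀ y', m y + ‖ζ - y‖ ^ 2 / (2 * σ) ≤ m y' + ‖ζ - y'‖ ^ 2 / (2 * σ) := by
      intro y'
      have h1 := hm1 y' z hz
      rw [hz']
      have e1 : ζ - y = (1 / 2 : ℝ) • (z - y) := by simp only [ζ]; module
      have e2 : ζ - y' = (1 / 2 : ℝ) • (z - y) - (y' - y) := by simp only [ζ]; module
      have e3 : y' - z = (y' - y) - (z - y) := by abel
      have e4 : y - z = - (z - y) := by abel
      rw [e3] at h1
      rw [e1, e2, e4]
      rw [norm_sub_sq_real, real_inner_comm (z - y) (y' - y)] at h1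
      rw [norm_sub_sq_real ((1 / 2 : ℝ) • (z - y)), real_inner_smul_left, norm_smul, norm_neg]
      have : 0 ≤ ‖y' - y‖ ^ 2 / (4 * σ) := by positivity
      have h6 : (‖y' - y‖ ^ 2 - 2 * ⟪z - y, y' - y⟫ + ‖z - y‖ ^ 2) / (4 * σ) + ‖y' - y‖ ^ 2 / (4 * σ)
         + (‖(1 / 2 : ℝ)‖ * ‖z - y‖) ^ 2 / (2 * σ)
         = ((‖(1 / 2 : ℝ)‖ * ‖z - y‖) ^ 2 - 2 * (1 / 2 * ⟪z - y, y' - y⟫) + ‖y' - y‖ ^ 2) / (2 * σ)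
          + ‖z - y‖ ^ 2 / (4 * σ) := by
        field_simp; ring
      linarith
    have hseg : ∀ t ∈ Icc (0:ℝ) 1, m y + ‖x + t • (ζ - x) - y‖ ^ 2 / (2 * σ) ≤ c (x + t • (ζ - x)) := by
      intro t ht
      set y' := Y (x + t • (ζ - x)) with hy'
      have e : c (x + t • (ζ - x)) = m y' + ‖x + t • (ζ - x) - y'‖ ^ 2 / (2 * σ) := rfl
      rw [e]
      have h1 := hζ y'
      have h2 := hY x y'
      have hid : ∀ w : Euc d, ‖x + t • (ζ - x) - w‖ ^ 2 =
          t * ‖ζ - w‖ ^ 2 + (1 - t) * ‖x - w‖ ^ 2 - t * (1 - t) * ‖ζ - x‖ ^ 2 := by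
        intro w
        have a1 : x + t • (ζ - x) - w = (x - w) + t • (ζ - x) := by abel
        have a2 : ζ - w = (x - w) + (ζ - x) := by abel
        rw [a1, a2, norm_add_sq_real, norm_add_sq_real, real_inner_smul_right, norm_smul, mul_pow,
          Real.norm_eq_abs, sq_abs]
        ring
      rw [hid y, hid y']
      have h3 := mul_le_mul_of_nonneg_left h1 ht.1
      have h4 := mul_le_mul_of_nonneg_left h2 (sub_nonneg.2 ht.2)
      have h5 : ∀ a b e : ℝ, (t * a + (1 - t) * b - t * (1 - t) * e) / (2 * σ) =
        t * (a / (2 * σ)) + (1 - t) * (b / (2 * σ)) - t * (1 - t) * e / (2 * σ) := by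
        intro a b e; field_simp
      rw [h5, h5]
      linarith
    have hzx : ζ = x := by
      by_contra hne
      have hv : 0 < ‖ζ - x‖ := norm_pos_iff.2 (sub_ne_zero.2 hne)
      have ht : Tendsto (fun t : ℝ => t • (ζ - x)) (𝓝 0) (𝓝 0) := by
        have : Continuous fun t : ℝ => t • (ζ - x) := by fun_prop
        simpa using this.tendsto 0
      have h1 := ht.eventually hev
      obtain ⟨t, ⟨h2, h3⟩, h4⟩ := (((h1.filter_mono nhdsWithin_le_nhds).and
        (nhdsWithin_le_nhds (s := Ioi 0) (Iic_mem_nhds zero_lt_one))).and self_mem_nhdsWithin).exists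
      have h4 : 0 < t := h4
      have h5 := (hseg t ⟨h4.le, h3⟩).trans h2
      have e1 : x + t • (ζ - x) - y = (x - y) + t • (ζ - x) := by abel
      have e2 : c x = m y + ‖x - y‖ ^ 2 / (2 * σ) := rfl
      rw [e1, norm_add_sq_real, e2, real_inner_smul_left, norm_smul, mul_pow] at h5
      have h6 : (‖x - y‖ ^ 2 + 2 * ⟪x - y, t • (ζ - x)⟫ + ‖t‖ ^ 2 * ‖ζ - x‖ ^ 2) / (2 * σ)
        = ‖x - y‖ ^ 2 / (2 * σ) + 1 / σ * ⟪x - y, t • (ζ - x)⟫ +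
          1 / σ * (‖t‖ ^ 2 * ‖ζ - x‖ ^ 2) / 2 := by field_simp
      rw [h6] at h5
      have h7 : 0 < ‖t‖ ^ 2 * ‖ζ - x‖ ^ 2 := by
        have : 0 < ‖t‖ := norm_pos_iff.2 h4.ne'
        positivity
      nlinarith
    have hcx : c x = u z - ‖x - z‖ ^ 2 / (2 * σ) := by
      have e2 : c x = m y + ‖x - y‖ ^ 2 / (2 * σ) := rfl
      rw [e2, hz', ← hzx]
      have a1 : ζ - y = (1 / 2 : ℝ) • (z - y) := by simp only [ζ]; module
      have a2 : ζ - z = -((1 / 2 : ℝ) • (z - y)) := by simp only [ζ]; module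
      rw [a1, a2, norm_neg, norm_smul, norm_sub_rev y z]
      norm_num
      field_simp; ring
    refine ⟨z, hz, ?_, fun w hw => ?_⟩
    · have h2 := huc x hx
      have h3 := abs_le.1 (hM x hx)
      have h4 := abs_le.1 (hM z hz)
      have h5 : ‖x - z‖ ^ 2 / (2 * σ) ≤ 2 * M := by linarith
      rw [div_le_iff₀ (by positivity)] at h5
      nlinarith [abs_nonneg (u x), hM x hx]
    · have h1 : u (z + w) - ‖x - z‖ ^ 2 / (2 * σ) ≤ c (x + w) := by
        set y' := Y (x + w) with hy'
        have e2 : c (x + w) = m y' + ‖x + w - y'‖ ^ 2 / (2 * σ) := rfl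
        have h1 := hm1 y' (z + w) hw
        rw [e2]
        have a1 : y' - (z + w) = (x - z) - (x + w - y') := by abel
        have a2 : ‖(x - z) - (x + w - y')‖ ^ 2 ≤ 2 * ‖x - z‖ ^ 2 + 2 * ‖x + w - y'‖ ^ 2 := by
          have := parallelogram_law_with_norm ℝ (x - z) (x + w - y')
          nlinarith [norm_nonneg ((x - z) + (x + w - y'))]
        rw [a1] at h1
        have a3 : ‖(x - z) - (x + w - y')‖ ^ 2 / (4 * σ) ≤
          (2 * ‖x - z‖ ^ 2 + 2 * ‖x + w - y'‖ ^ 2) / (4 * σ) := by gcongr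
        have a4 : (2 * ‖x - z‖ ^ 2 + 2 * ‖x + w - y'‖ ^ 2) / (4 * σ) =
          ‖x - z‖ ^ 2 / (2 * σ) + ‖x + w - y'‖ ^ 2 / (2 * σ) := by field_simp; ring
        linarith
      rw [hcx]; linarith

end LL

/-! ### The Jensen lemma on contact points -/

section jensen
open Topology MeasureTheory
variable {d : ℕ}

lemma hasFDerivAt_of_c11 {c : Euc d → ℝ} {g : Euc d → Euc d} {C : ℝ}
    (h : ∀ x ξ, |c (x + ξ) - c x - ⟪g x, ξ⟫| ≤ C * ‖ξ‖ ^ 2) (x : Euc d) :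
    HasFDerivAt c (innerSL ℝ (g x)) x := by
  rw [hasFDerivAt_iff_isLittleO_nhds_zero]
  have h1 : (fun ξ => c (x + ξ) - c x - innerSL ℝ (g x) ξ) =O[𝓝 0] fun ξ : Euc d => ‖ξ‖ ^ 2 := by
    refine Asymptotics.IsBigO.of_bound C (Eventually.of_forall fun ξ => ?_)
    simpa using h x ξ
  refine h1.trans_isLittleO ?_
  have := Asymptotics.isLittleO_norm_pow_id (E' := Euc d) (n := 2) (by norm_num)
  simpa using this

lemma lipschitz_of_c11 {c : Euc d → ℝ} {g : Euc d → Euc d} {C : ℝ} (hC : 0 ≤ C)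
    (h : ∀ x ξ, |c (x + ξ) - c x - ⟪g x, ξ⟫| ≤ C * ‖ξ‖ ^ 2) :
    LipschitzWith (Real.toNNReal (6 * C)) g := by
  refine LipschitzWith.of_dist_le_mul fun y x => ?_
  rw [Real.coe_toNNReal _ (by positivity), dist_eq_norm, dist_eq_norm]
  set w := g y - g x with hw
  by_cases hw0 : w = 0
  · rw [hw0, norm_zero]; positivity
  have hwp : 0 < ‖w‖ := norm_pos_iff.2 hw0
  set t := y - x with ht
  -- test in the direction of `w`, at the scale of `t`
  set ξ := (‖t‖ / ‖w‖) • w with hξ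
  have hξn : ‖ξ‖ = ‖t‖ := by
    rw [hξ, norm_smul, Real.norm_of_nonneg (by positivity)]; field_simp
  have hin : ⟪w, ξ⟫ = ‖t‖ * ‖w‖ := by
    rw [hξ, real_inner_smul_right, real_inner_self_eq_norm_sq]; field_simp
  have h1 := abs_le.1 (h y ξ)
  have h2 := abs_le.1 (h x (t + ξ))
  have h3 := abs_le.1 (h x t)
  have e1 : x + t = y := by rw [ht]; abel
  have e2 : x + (t + ξ) = y + ξ := by rw [ht]; abel
  rw [e2, inner_add_right] at h2
  rw [e1] at h3
  have hn : ‖t + ξ‖ ^ 2 ≤ 4 * ‖t‖ ^ 2 := by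
    have : ‖t + ξ‖ ≤ 2 * ‖t‖ := by have := norm_add_le t ξ; rw [hξn] at this; linarith
    nlinarith [norm_nonneg (t + ξ)]
  have hn2 := mul_le_mul_of_nonneg_left hn hC
  rw [hξn] at h1
  rw [hw, inner_sub_left] at hin
  have h5 : ‖t‖ * ‖w‖ ≤ 6 * C * ‖t‖ ^ 2 := by linarith [h1.1, h1.2, h2.1, h2.2, h3.1, h3.2]
  by_cases ht0 : ‖t‖ = 0
  · have : g y = g x := by rw [sub_eq_zero.1 (norm_eq_zero.1 ht0)]
    exact absurd (sub_eq_zero.2 this) hw0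
  · have : 0 < ‖t‖ := lt_of_le_of_ne (norm_nonneg _) (Ne.symm ht0)
    nlinarith

/-- Second order expansion at a point of differentiability of the gradient. -/
lemma second_order_expansion {c : Euc d → ℝ} {g : Euc d → Euc d}
    (h : ∀ x, HasFDerivAt c (innerSL ℝ (g x)) x) {x : Euc d} (hx : DifferentiableAt ℝ g x) :
    ∃ X : Mat d, X.IsSymm ∧ ∀ κ > 0, ∀ᶠ y in 𝓝 (0 : Euc d),
      |c (x + y) - c x - ⟪g x, y⟫ - qf X y / 2| ≤ κ * ‖y‖ ^ 2 := by
  have hT := hx.hasFDerivAt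
  set T := fderiv ℝ g x
  have hsym : ∀ v w, ⟪T v, w⟫ = ⟪v, T w⟫ := by
    intro v w
    have h2 : HasFDerivAt (fun z => (innerSL ℝ : Euc d →L[ℝ] Euc d →L[ℝ] ℝ) (g z))
        ((innerSL ℝ : Euc d →L[ℝ] Euc d →L[ℝ] ℝ).comp T) x :=
      (innerSL ℝ : Euc d →L[ℝ] Euc d →L[ℝ] ℝ).hasFDerivAt.comp x hT
    have := second_derivative_symmetric h h2 v w
    change ⟪T v, w⟫ = ⟪T w, v⟫ at this
    rw [this, real_inner_comm]
  obtain ⟨X, hX, hXT⟩ := exists_mat_of_symm T hsym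
  refine ⟨X, hX, fun κ hκ => ?_⟩
  have hlittle := hT.isLittleO
  rw [Asymptotics.isLittleO_iff] at hlittle
  obtain ⟨r, hr, hball⟩ := Metric.eventually_nhds_iff_ball.1 (hlittle hκ)
  filter_upwards [Metric.ball_mem_nhds (0 : Euc d) hr] with y hy
  have hyr : ‖y‖ < r := by simpa using hy
  let G : Euc d → ℝ := fun z => c z - quadT x (g x) X z
  have hG : ∀ z ∈ closedBall x ‖y‖, HasFDerivWithinAt G
      (innerSL ℝ (g z) - innerSL ℝ (g x + opM X (z - x))) (closedBall x ‖y‖) z := by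
    intro z hz
    exact ((h z).sub (hasFDerivAt_quadT x _ hX z)).hasFDerivWithinAt
  have hbd : ∀ z ∈ closedBall x ‖y‖,
      ‖innerSL ℝ (g z) - innerSL ℝ (g x + opM X (z - x))‖ ≤ κ * ‖y‖ := by
    intro z hz
    have hz' : z ∈ ball x r := lt_of_le_of_lt hz hyr
    have h2 := hball z hz'
    rw [← map_sub, innerSL_apply_norm]
    have h3 : g z - (g x + opM X (z - x)) = g z - g x - T (z - x) := by rw [hXT]; abel
    rw [h3]
    refine h2.trans ?_
    have : ‖z - x‖ ≤ ‖y‖ := by simpa [dist_eq_norm] using hz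
    gcongr
  have := (convex_closedBall x ‖y‖).norm_image_sub_le_of_norm_hasFDerivWithin_le hG hbd
    (mem_closedBall_self (norm_nonneg y)) (y := x + y) (by simp)
  have h5 : G (x + y) - G x = c (x + y) - c x - ⟪g x, y⟫ - qf X y / 2 := by
    simp only [G, quadT, add_sub_cancel_left, sub_self, inner_zero_right, qf_zero_vec]; ring
  rw [← h5]
  simpa [sq, mul_assoc] using this

/-- The Jensen lemma: a strict interior maximum of a function `W` with Lipschitz gradient `G` yields a
point, in the full-measure set where `g1` and `g2` are differentiable, at which `W` lies locally below
its tangent plane and the gradient is small. -/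
lemma jensen_contact {W : Euc d × Euc d → ℝ} {G : Euc d × Euc d → Euc d × Euc d} {Cl : NNReal}
    (hG : LipschitzWith Cl G)
    (hW : ∀ z, HasFDerivAt W ((innerSL ℝ (G z).1).coprod (innerSL ℝ (G z).2)) z)
    {r m ρ : ℝ} (hr : 0 < r) (hm : 0 < m) (hρ : 0 < ρ)
    (hmax : ∀ z, ‖z‖ = r → W z ≤ W 0 - m)
    {g1 g2 : Euc d → Euc d} {C1 C2 : NNReal} (hg1 : LipschitzWith C1 g1) (hg2 : LipschitzWith C2 g2) :
    ∃ z : Euc d × Euc d, ‖z‖ < r ∧ ‖G z‖ < ρ ∧ DifferentiableAt ℝ g1 z.1 ∧ DifferentiableAt ℝ g2 z.2 ∧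
      ∀ᶠ w in 𝓝 (0 : Euc d × Euc d), W (z + w) ≤ W z + ⟪(G z).1, w.1⟫ + ⟪(G z).2, w.2⟫ := by
  borelize (Euc d × Euc d)
  let μ : Measure (Euc d × Euc d) := μH[Module.finrank ℝ (Euc d × Euc d)]
  have hμ : μ.IsAddHaarMeasure := MeasureTheory.isAddHaarMeasure_hausdorffMeasure
  -- The gradients at the maxima of tilted functions fill a ball, whereas the Lipschitz map `G` sends
  -- the null set of points of non-differentiability (Rademacher) to a null set.
  have hb1 : ∀ᵐ z ∂μ, DifferentiableAt ℝ (fun z : (Euc d × Euc d) => g1 z.1) z :=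
    (hg1.comp LipschitzWith.prod_fst).ae_differentiableAt
  have hb2 : ∀ᵐ z ∂μ, DifferentiableAt ℝ (fun z : (Euc d × Euc d) => g2 z.2) z :=
    (hg2.comp LipschitzWith.prod_snd).ae_differentiableAt
  by_contra hcon
  push Not at hcon
  let N : Set (Euc d × Euc d) := {z | ¬ (DifferentiableAt ℝ (fun z : (Euc d × Euc d) => g1 z.1) z ∧
    DifferentiableAt ℝ (fun z : (Euc d × Euc d) => g2 z.2) z)}
  have hN : μ N = 0 := hb1.and hb2
  have hGN : μ (G '' N) = 0 := by
    have h1 := hG.hausdorffMeasure_image_le (d := Module.finrank ℝ (Euc d × Euc d)) (by positivity) N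
    have h2 : μH[Module.finrank ℝ (Euc d × Euc d)] N = 0 := hN
    rw [h2, mul_zero] at h1
    exact le_antisymm h1 bot_le
  have hWc : Continuous W := continuous_iff_continuousAt.2 fun z => (hW z).continuousAt
  set ρ' := min ρ (m / (4 * r)) with hρ'
  have hρ'0 : 0 < ρ' := lt_min hρ (by positivity)
  have hsub : ball (0 : (Euc d × Euc d)) ρ' ⊆ G '' N := by
    intro p hp
    have hpn : ‖p‖ < ρ' := by simpa using hp
    have hp1 : ‖p.1‖ < ρ' := (norm_fst_le p).trans_lt hpn
    have hp2 : ‖p.2‖ < ρ' := (norm_snd_le p).trans_lt hpn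
    let V : (Euc d × Euc d) → ℝ := fun z => W z - ⟪p.1, z.1⟫ - ⟪p.2, z.2⟫
    have hVc : Continuous V := by simp only [V]; fun_prop
    obtain ⟨z, hz, hzmax⟩ := (isCompact_closedBall (0 : (Euc d × Euc d)) r).exists_isMaxOn
      ⟨0, mem_closedBall_self hr.le⟩ hVc.continuousOn
    have hzr : ‖z‖ ≤ r := by simpa using hz
    have hz1 : ‖z.1‖ ≤ r := (norm_fst_le z).trans hzr
    have hz2 : ‖z.2‖ ≤ r := (norm_snd_le z).trans hzr
    have hlt : ‖z‖ < r := by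
      refine lt_of_le_of_ne hzr fun he => ?_
      have h1 : V 0 ≤ V z := hzmax (mem_closedBall_self hr.le)
      have h2 := hmax z he
      have h3 : |⟪p.1, z.1⟫| ≤ m / (4 * r) * r :=
        (abs_real_inner_le_norm _ _).trans (by
          gcongr; exact hp1.le.trans (min_le_right _ _))
      have h4 : |⟪p.2, z.2⟫| ≤ m / (4 * r) * r :=
        (abs_real_inner_le_norm _ _).trans (by
          gcongr; exact hp2.le.trans (min_le_right _ _))
      have h5 : m / (4 * r) * r = m / 4 := by field_simp
      rw [h5] at h3 h4
      have := (abs_le.1 h3).1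
      have := (abs_le.1 h4).1
      simp only [V, Prod.fst_zero, Prod.snd_zero, inner_zero_right] at h1
      linarith
    have hloc : IsLocalMax V z := by
      have : ball (0 : (Euc d × Euc d)) r ∈ 𝓝 z := isOpen_ball.mem_nhds (by simpa using hlt)
      filter_upwards [this] with w hw
      exact hzmax (ball_subset_closedBall hw)
    have hVd : HasFDerivAt V ((innerSL ℝ (G z).1).coprod (innerSL ℝ (G z).2) -
        (innerSL ℝ p.1).comp (ContinuousLinearMap.fst ℝ (Euc d) (Euc d)) -
        (innerSL ℝ p.2).comp (ContinuousLinearMap.snd ℝ (Euc d) (Euc d))) z :=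
      ((hW z).sub ((innerSL ℝ p.1).comp (ContinuousLinearMap.fst ℝ (Euc d) (Euc d))).hasFDerivAt).sub
        ((innerSL ℝ p.2).comp (ContinuousLinearMap.snd ℝ (Euc d) (Euc d))).hasFDerivAt
    have h0 := hloc.hasFDerivAt_eq_zero hVd
    have e1 : (G z).1 = p.1 := by
      refine ext_inner_right ℝ fun v => ?_
      have h9 : ⟪(G z).1, v⟫ + ⟪(G z).2, (0 : Euc d)⟫ - ⟪p.1, v⟫ - ⟪p.2, (0 : Euc d)⟫ = 0 :=
        DFunLike.congr_fun h0 ((v, 0) : Euc d × Euc d)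
      simp only [inner_zero_right] at h9; linarith
    have e2 : (G z).2 = p.2 := by
      refine ext_inner_right ℝ fun v => ?_
      have h9 : ⟪(G z).1, (0 : Euc d)⟫ + ⟪(G z).2, v⟫ - ⟪p.1, (0 : Euc d)⟫ - ⟪p.2, v⟫ = 0 :=
        DFunLike.congr_fun h0 ((0, v) : Euc d × Euc d)
      simp only [inner_zero_right] at h9; linarith
    have hGz : G z = p := Prod.ext e1 e2
    refine ⟨z, fun hgood => ?_, hGz⟩
    have hd1 : DifferentiableAt ℝ g1 z.1 := by
      have : DifferentiableAt ℝ (fun x : Euc d => ((x, z.2) : (Euc d × Euc d))) z.1 := by fun_prop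
      exact DifferentiableAt.comp (g := fun z : (Euc d × Euc d) => g1 z.1) z.1 hgood.1 this
    have hd2 : DifferentiableAt ℝ g2 z.2 := by
      have : DifferentiableAt ℝ (fun x : Euc d => ((z.1, x) : (Euc d × Euc d))) z.2 := by fun_prop
      exact DifferentiableAt.comp (g := fun z : (Euc d × Euc d) => g2 z.2) z.2 hgood.2 this
    have hfin := hcon z hlt (by rw [hGz]; exact hpn.trans_le (min_le_left _ _)) hd1 hd2
    refine hfin ?_
    have ht : Tendsto (fun w : (Euc d × Euc d) => z + w) (𝓝 0) (𝓝 z) := by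
      have : Continuous fun y : (Euc d × Euc d) => z + y := by fun_prop
      simpa using this.tendsto 0
    filter_upwards [ht.eventually hloc] with w hw
    rw [hGz]
    simp only [V, Prod.fst_add, Prod.snd_add, inner_add_right] at hw
    linarith
  have hpos : 0 < μ (ball (0 : (Euc d × Euc d)) ρ') := isOpen_ball.measure_pos μ ⟨0, mem_ball_self hρ'0⟩
  exact absurd (measure_mono_null hsub hGN) hpos.ne'

end jensen

/-! ### The Jensen–Ishii lemma -/

section ishii
open Topology MeasureTheory
variable {d : ℕ}

/-- Two functions that are homogeneous of degree two and ordered up to `o(t²)` are ordered. -/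
lemma le_of_scaling {f g : ℝ → ℝ} {a b n : ℝ} (hf : ∀ t, f t = t ^ 2 * a) (hg : ∀ t, g t = t ^ 2 * b)
    (h : ∀ κ > 0, ∀ᶠ t in 𝓝 (0:ℝ), f t ≤ g t + κ * (t ^ 2 * n)) (hn : 0 ≤ n) : a ≤ b := by
  refine le_of_forall_pos_le_add fun e he => ?_
  have h1 := h (e / (n + 1)) (by positivity)
  obtain ⟨t, h2, h3⟩ := ((h1.filter_mono nhdsWithin_le_nhds).and
    (self_mem_nhdsWithin (s := Ioi (0:ℝ)))).exists
  have h3 : 0 < t := h3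
  rw [hf, hg] at h2
  have h4 : e / (n + 1) * n ≤ e := by
    rw [div_mul_eq_mul_div, div_le_iff₀ (by positivity)]; nlinarith
  have h5 : 0 < t ^ 2 := by positivity
  have h6 : t ^ 2 * a ≤ t ^ 2 * (b + e / (n + 1) * n) := by linarith
  have := le_of_mul_le_mul_left h6 h5
  linarith

/-- The second-order expansion of a regularization `c` at `x` becomes an upper jet of `u` at the
corresponding contact point `z`. -/
lemma upJet_of_contact {u c : Euc d → ℝ} {K : Set (Euc d)} {x z g : Euc d} {X : Mat d} (hK : K ∈ 𝓝 z)
    (hz : ∀ ζ, z + ζ ∈ K → u (z + ζ) - u z ≤ c (x + ζ) - c x)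
    (hX : ∀ κ > 0, ∀ᶠ y in 𝓝 (0 : Euc d), |c (x + y) - c x - ⟪g, y⟫ - qf X y / 2| ≤ κ * ‖y‖ ^ 2)
    {ρ : ℝ} (hρ : 0 < ρ) : UpJet u z g (X + ρ • (1 : Mat d)) := by
  have h1 : ∀ᶠ y in 𝓝 (0 : Euc d), z + y ∈ K := by
    have : Tendsto (fun y : Euc d => z + y) (𝓝 0) (𝓝 z) := by
      have : Continuous (fun y : Euc d => z + y) := by fun_prop
      simpa using this.tendsto 0
    exact this hK
  filter_upwards [h1, hX (ρ / 2) (by positivity)] with y hy1 hy2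
  have := hz y hy1
  have := (abs_le.1 hy2).2
  rw [qf_add, qf_smul, qf_one]
  linarith

set_option maxHeartbeats 3200000 in
/-- The Jensen–Ishii lemma (theorem on sums), for a quadratic penalization with form `A` in the
difference of the variables and `κ` in the first variable. Jets are found at points near the
maximum, with approximate gradients and an error `ρ` in the matrix inequality, so no closure of jets
is needed. -/
lemma jensen_ishii {u1 u2 : Euc d → ℝ} {xh yh p p' : Euc d} {A : Mat d} (hA : A.IsSymm) {κ r : ℝ}
    (hr : 0 < r) (hu1 : ContinuousOn u1 (closedBall xh r)) (hu2 : ContinuousOn u2 (closedBall yh r))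
    (hmax : ∀ ξ η : Euc d, ‖ξ‖ ≤ r → ‖η‖ ≤ r → u1 (xh + ξ) + u2 (yh + η) ≤
      u1 xh + u2 yh + (⟪p, ξ⟫ + ⟪p', η⟫ + (qf A (ξ - η) + κ * ‖ξ‖ ^ 2) / 2))
    {ρ : ℝ} (hρ : 0 < ρ) :
    ∃ (x y a a' : Euc d) (X Y : Mat d), ‖x - xh‖ ≤ ρ ∧ ‖y - yh‖ ≤ ρ ∧ ‖a - p‖ ≤ ρ ∧ ‖a' - p'‖ ≤ ρ ∧
      X.IsSymm ∧ Y.IsSymm ∧ UpJet u1 x a X ∧ UpJet u2 y a' Y ∧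
      ∀ ξ η, qf X ξ + qf Y η ≤ qf A (ξ - η) + κ * ‖ξ‖ ^ 2 + ρ * (‖ξ‖ ^ 2 + ‖η‖ ^ 2) := by
  set ρ1 := ρ / 2 with hρ1
  have hρ1p : 0 < ρ1 := by positivity
  set k := ‖opM A‖ + |κ| + ρ1 with hk
  have hk0 : 0 < k := by positivity
  set r' := min (min (r / 2) (ρ / 2)) (ρ / (2 * (2 * ‖opM A‖ + |κ| + ρ1 + 1))) with hr'
  have hr'0 : 0 < r' := lt_min (lt_min (by positivity) (by positivity)) (by positivity)
  have hr'1 : r' ≤ r / 2 := (min_le_left _ _).trans (min_le_left _ _)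
  have hr'2 : r' ≤ ρ / 2 := (min_le_left _ _).trans (min_le_right _ _)
  have hr'3 : (2 * ‖opM A‖ + |κ| + ρ1) * r' ≤ ρ / 2 := by
    have h1 : r' ≤ ρ / (2 * (2 * ‖opM A‖ + |κ| + ρ1 + 1)) := min_le_right _ _
    rw [le_div_iff₀ (by positivity)] at h1
    nlinarith
  obtain ⟨M1, hM1⟩ := (isCompact_closedBall xh r).exists_bound_of_continuousOn hu1
  obtain ⟨M2, hM2⟩ := (isCompact_closedBall yh r).exists_bound_of_continuousOn hu2
  set M := max (max M1 M2) 0 with hM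
  have hM0 : 0 ≤ M := le_max_right _ _
  have hMu1 : ∀ x ∈ closedBall xh r, |u1 x| ≤ M := fun x hx =>
    (hM1 x hx).trans ((le_max_left _ _).trans (le_max_left _ _))
  have hMu2 : ∀ x ∈ closedBall yh r, |u2 x| ≤ M := fun x hx =>
    (hM2 x hx).trans ((le_max_right _ _).trans (le_max_left _ _))
  let Q : Euc d × Euc d → ℝ := fun z => ⟪p, z.1⟫ + ⟪p', z.2⟫ + (qf A (z.1 - z.2) + κ * ‖z.1‖ ^ 2) / 2
  have hQc : Continuous Q := by
    have := continuous_qf A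
    simp only [Q]; fun_prop
  have hunif := (isCompact_closedBall (0 : Euc d × Euc d) r).uniformContinuousOn_of_continuous
    hQc.continuousOn
  rw [Metric.uniformContinuousOn_iff] at hunif
  obtain ⟨s0, hs0, hQs⟩ := hunif (ρ1 * r' ^ 2 / 4) (by positivity)
  set s := min (min (r / 3) (ρ / 2)) (s0 / 2) with hs
  have hsp : 0 < s := lt_min (lt_min (by positivity) (by positivity)) (by positivity)
  have hs1 : s ≤ r / 3 := (min_le_left _ _).trans (min_le_left _ _)
  have hs2 : s ≤ ρ / 2 := (min_le_left _ _).trans (min_le_right _ _)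
  have hs3 : s ≤ s0 / 2 := min_le_right _ _
  set σ := min (s ^ 2 / (8 * (M + 1))) (1 / (k + 1)) with hσ
  have hσp : 0 < σ := lt_min (by positivity) (by positivity)
  have hσ1 : 8 * σ * M ≤ s ^ 2 := by
    have : σ ≤ s ^ 2 / (8 * (M + 1)) := min_le_left _ _
    rw [le_div_iff₀ (by positivity)] at this
    nlinarith
  have hσ2 : k < 1 / σ := by
    have : σ ≤ 1 / (k + 1) := min_le_right _ _
    rw [le_div_iff₀ (by positivity)] at this
    rw [lt_div_iff₀ hσp]; nlinarith
  have hsq : ∀ v : Euc d, ‖v‖ ^ 2 ≤ 8 * σ * M → ‖v‖ ≤ s := fun v hv =>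
    abs_le_of_sq_le_sq' (by linarith) hsp.le |>.2
  have hne1 : (closedBall xh r).Nonempty := ⟨xh, mem_closedBall_self hr.le⟩
  have hne2 : (closedBall yh r).Nonempty := ⟨yh, mem_closedBall_self hr.le⟩
  obtain ⟨c1, g1, h1a, h1b, h1c, h1d⟩ :=
    lasry_lions (isCompact_closedBall xh r) hne1 hu1 hMu1 hσp
  obtain ⟨c2, g2, h2a, h2b, h2c, h2d⟩ :=
    lasry_lions (isCompact_closedBall yh r) hne2 hu2 hMu2 hσp
  let W : Euc d × Euc d → ℝ := fun z =>
    c1 (xh + z.1) + c2 (yh + z.2) - Q z - ρ1 / 2 * (‖z.1‖ ^ 2 + ‖z.2‖ ^ 2)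
  let D : Euc d × Euc d →L[ℝ] Euc d := (opM A).comp
    (ContinuousLinearMap.fst ℝ (Euc d) (Euc d) - ContinuousLinearMap.snd ℝ (Euc d) (Euc d))
  let L1 : Euc d × Euc d →L[ℝ] Euc d := D + (κ + ρ1) • ContinuousLinearMap.fst ℝ (Euc d) (Euc d)
  let L2 : Euc d × Euc d →L[ℝ] Euc d := -D + ρ1 • ContinuousLinearMap.snd ℝ (Euc d) (Euc d)
  have hL1 : ∀ z, L1 z = opM A (z.1 - z.2) + (κ + ρ1) • z.1 := fun z => rfl
  have hL2 : ∀ z, L2 z = -opM A (z.1 - z.2) + ρ1 • z.2 := fun z => rfl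
  let G : Euc d × Euc d → Euc d × Euc d := fun z =>
    (g1 (xh + z.1) - p - L1 z, g2 (yh + z.2) - p' - L2 z)
  let R : Euc d × Euc d → ℝ := fun w =>
    (qf A (w.1 - w.2) + κ * ‖w.1‖ ^ 2) / 2 + ρ1 / 2 * (‖w.1‖ ^ 2 + ‖w.2‖ ^ 2)
  have hid : ∀ z w, W (z + w) - W z - ⟪(G z).1, w.1⟫ - ⟪(G z).2, w.2⟫ =
      (c1 (xh + z.1 + w.1) - c1 (xh + z.1) - ⟪g1 (xh + z.1), w.1⟫) +
      (c2 (yh + z.2 + w.2) - c2 (yh + z.2) - ⟪g2 (yh + z.2), w.2⟫) - R w := by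
    intro z w
    have e1 : (z + w).1 - (z + w).2 = (z.1 - z.2) + (w.1 - w.2) := by
      simp only [Prod.fst_add, Prod.snd_add]; abel
    simp only [W, G, R, Q, hL1, hL2]
    rw [e1, qf_add_vec hA]
    simp only [Prod.fst_add, Prod.snd_add, inner_sub_left, inner_sub_right, inner_add_left,
      inner_add_right, inner_neg_left, real_inner_smul_left, norm_add_sq_real, ← add_assoc]
    ring
  have hRb : ∀ w : Euc d × Euc d, |R w| ≤ (2 * ‖opM A‖ + |κ| + ρ1) * ‖w‖ ^ 2 := by
    intro w
    have a1 := abs_qf_le A (w.1 - w.2)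
    have n1 := norm_fst_le w
    have n2 := norm_snd_le w
    have n3 : ‖w.1 - w.2‖ ≤ 2 * ‖w‖ := (norm_sub_le _ _).trans (by linarith)
    have a2 : ‖opM A‖ * ‖w.1 - w.2‖ ^ 2 ≤ ‖opM A‖ * (2 * ‖w‖) ^ 2 := by gcongr
    have a3 : ‖w.1‖ ^ 2 ≤ ‖w‖ ^ 2 := by gcongr
    have a4 : ‖w.2‖ ^ 2 ≤ ‖w‖ ^ 2 := by gcongr
    have a5 : |κ * ‖w.1‖ ^ 2| ≤ |κ| * ‖w‖ ^ 2 := by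
      rw [abs_mul, abs_of_nonneg (sq_nonneg ‖w.1‖)]; gcongr
    have a6 : 0 ≤ |κ| * ‖w‖ ^ 2 := by positivity
    have a7 : ρ1 / 2 * (‖w.1‖ ^ 2 + ‖w.2‖ ^ 2) ≤ ρ1 * ‖w‖ ^ 2 := by nlinarith
    have a8 : 0 ≤ ρ1 / 2 * (‖w.1‖ ^ 2 + ‖w.2‖ ^ 2) := by positivity
    have b1 := abs_le.1 a1
    have b5 := abs_le.1 a5
    simp only [R]
    rw [abs_le]
    constructor <;> linarith [b1.1, b1.2, b5.1, b5.2]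
  have hWd : ∀ z, HasFDerivAt W ((innerSL ℝ (G z).1).coprod (innerSL ℝ (G z).2)) z := by
    intro z
    rw [hasFDerivAt_iff_isLittleO_nhds_zero]
    have h1 : (fun w : Euc d × Euc d => W (z + w) - W z -
        ((innerSL ℝ (G z).1).coprod (innerSL ℝ (G z).2)) w) =O[𝓝 0]
        fun w : Euc d × Euc d => ‖w‖ ^ 2 := by
      refine Asymptotics.IsBigO.of_bound (3 / (2 * σ) + 3 / (2 * σ) + (2 * ‖opM A‖ + |κ| + ρ1))
        (Eventually.of_forall fun w => ?_)
      have e : W (z + w) - W z - ((innerSL ℝ (G z).1).coprod (innerSL ℝ (G z).2)) w =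
        W (z + w) - W z - ⟪(G z).1, w.1⟫ - ⟪(G z).2, w.2⟫ := by
        have : ((innerSL ℝ (G z).1).coprod (innerSL ℝ (G z).2)) w =
          ⟪(G z).1, w.1⟫ + ⟪(G z).2, w.2⟫ := rfl
        rw [this]; ring
      rw [e, hid, Real.norm_eq_abs, Real.norm_eq_abs, abs_of_nonneg (sq_nonneg ‖w‖)]
      have b1 := h1c (xh + z.1) w.1
      have b2 := h2c (yh + z.2) w.2
      have b3 := hRb w
      have n1 : 3 / (2 * σ) * ‖w.1‖ ^ 2 ≤ 3 / (2 * σ) * ‖w‖ ^ 2 := by gcongr; exact norm_fst_le w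
      have n2 : 3 / (2 * σ) * ‖w.2‖ ^ 2 ≤ 3 / (2 * σ) * ‖w‖ ^ 2 := by gcongr; exact norm_snd_le w
      rw [abs_le] at b1 b2 b3 ⊢
      constructor <;> linarith [b1.1, b1.2, b2.1, b2.2, b3.1, b3.2]
    refine h1.trans_isLittleO ?_
    have := Asymptotics.isLittleO_norm_pow_id (E' := Euc d × Euc d) (n := 2) (by norm_num)
    simpa using this
  have hσ3 : 0 ≤ 3 / (2 * σ) := by positivity
  have hg1 := lipschitz_of_c11 hσ3 h1c
  have hg2 := lipschitz_of_c11 hσ3 h2c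
  have hGl : ∃ C, LipschitzWith C G := by
    have a1 : LipschitzWith _ fun z : Euc d × Euc d => g1 (xh + z.1) :=
      hg1.comp ((LipschitzWith.const xh).add LipschitzWith.prod_fst)
    have a2 : LipschitzWith _ fun z : Euc d × Euc d => g2 (yh + z.2) :=
      hg2.comp ((LipschitzWith.const yh).add LipschitzWith.prod_snd)
    exact ⟨_, ((a1.sub (LipschitzWith.const p)).sub L1.lipschitz).prodMk
      ((a2.sub (LipschitzWith.const p')).sub L2.lipschitz)⟩
  obtain ⟨Cl, hGl⟩ := hGl
  have hW0 : u1 xh + u2 yh ≤ W 0 := by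
    have a1 := h1a xh (mem_closedBall_self hr.le)
    have a2 := h2a yh (mem_closedBall_self hr.le)
    simp only [W, Q, Prod.fst_zero, Prod.snd_zero, add_zero, inner_zero_right, sub_zero, norm_zero,
      qf_zero_vec]
    norm_num; linarith
  have hbdry : ∀ z : Euc d × Euc d, ‖z‖ = r' → W z ≤ W 0 - ρ1 * r' ^ 2 / 4 := by
    intro z hz
    have n1 : ‖z.1‖ ≤ r' := (norm_fst_le z).trans hz.le
    have n2 : ‖z.2‖ ≤ r' := (norm_snd_le z).trans hz.le
    have n3 : r' ^ 2 ≤ ‖z.1‖ ^ 2 + ‖z.2‖ ^ 2 := by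
      rw [← hz, Prod.norm_def]
      rcases max_cases ‖z.1‖ ‖z.2‖ with h | h <;> rw [h.1] <;> nlinarith [norm_nonneg z.1, norm_nonneg z.2]
    obtain ⟨z1, hz1, hc1, hd1⟩ := h1b (xh + z.1) (by simp; linarith)
    obtain ⟨z2, hz2, hc2, hd2⟩ := h2b (yh + z.2) (by simp; linarith)
    have hd1 := hsq _ hd1
    have hd2 := hsq _ hd2
    have hz1' : ‖z1 - xh‖ ≤ r := by simpa [dist_eq_norm] using hz1
    have hz2' : ‖z2 - yh‖ ≤ r := by simpa [dist_eq_norm] using hz2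
    have hmx := hmax (z1 - xh) (z2 - yh) hz1' hz2'
    rw [add_sub_cancel, add_sub_cancel] at hmx
    have hq := hQs z (by simp [hz]; linarith) (z1 - xh, z2 - yh)
      (by simp only [mem_closedBall, dist_zero_right, Prod.norm_def]; exact max_le hz1' hz2') (by
        have e1 : z.1 - (z1 - xh) = xh + z.1 - z1 := by abel
        have e2 : z.2 - (z2 - yh) = yh + z.2 - z2 := by abel
        rw [dist_eq_norm, Prod.norm_def]
        simp only [Prod.fst_sub, Prod.snd_sub]
        rw [e1, e2]
        exact max_lt (by linarith) (by linarith))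
    rw [Real.dist_eq] at hq
    have hq := (abs_lt.1 hq).1
    have e3 : Q (z1 - xh, z2 - yh) = ⟪p, z1 - xh⟫ + ⟪p', z2 - yh⟫ +
      (qf A (z1 - xh - (z2 - yh)) + κ * ‖z1 - xh‖ ^ 2) / 2 := rfl
    rw [← e3] at hmx
    have e4 : W z = c1 (xh + z.1) + c2 (yh + z.2) - Q z - ρ1 / 2 * (‖z.1‖ ^ 2 + ‖z.2‖ ^ 2) := rfl
    rw [e4]
    nlinarith
  have hg1' : LipschitzWith _ fun x => g1 (xh + x) :=
    hg1.comp ((LipschitzWith.const xh).add LipschitzWith.id)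
  have hg2' : LipschitzWith _ fun x => g2 (yh + x) :=
    hg2.comp ((LipschitzWith.const yh).add LipschitzWith.id)
  obtain ⟨z, hzr, hGz, hdz1, hdz2, hcontact⟩ := jensen_contact hGl hWd hr'0
    (m := ρ1 * r' ^ 2 / 4) (by positivity) (ρ := ρ / 2) (by positivity) hbdry
    (g1 := fun x => g1 (xh + x)) (g2 := fun x => g2 (yh + x)) hg1' hg2'
  have hz1n : ‖z.1‖ < r' := (norm_fst_le z).trans_lt hzr
  have hz2n : ‖z.2‖ < r' := (norm_snd_le z).trans_lt hzr
  have hrem : ∀ᶠ w in 𝓝 (0 : Euc d × Euc d),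
      (c1 (xh + z.1 + w.1) - c1 (xh + z.1) - ⟪g1 (xh + z.1), w.1⟫) +
      (c2 (yh + z.2 + w.2) - c2 (yh + z.2) - ⟪g2 (yh + z.2), w.2⟫) ≤ R w := by
    filter_upwards [hcontact] with w hw
    have := hid z w
    linarith
  have hcl : Tendsto (fun ξ : Euc d => ((ξ, 0) : Euc d × Euc d)) (𝓝 0) (𝓝 0) :=
    (by fun_prop : Continuous fun ξ : Euc d => ((ξ, 0) : Euc d × Euc d)).tendsto 0
  have hcr : Tendsto (fun ξ : Euc d => ((0, ξ) : Euc d × Euc d)) (𝓝 0) (𝓝 0) :=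
    (by fun_prop : Continuous fun ξ : Euc d => ((0, ξ) : Euc d × Euc d)).tendsto 0
  obtain ⟨z1, hz1K, hz1s, hz1c⟩ := h1d (xh + z.1) (by simp; linarith) k hσ2 (by
    filter_upwards [hcl.eventually hrem] with ξ hξ
    have a1 := (abs_le.1 (abs_qf_le A ξ)).2
    have a2 : κ * ‖ξ‖ ^ 2 ≤ |κ| * ‖ξ‖ ^ 2 := by gcongr; exact le_abs_self κ
    simp only [R, add_zero, sub_self, inner_zero_right, sub_zero, norm_zero] at hξ
    rw [hk]; norm_num at hξ; linarith)
  obtain ⟨z2, hz2K, hz2s, hz2c⟩ := h2d (yh + z.2) (by simp; linarith) k hσ2 (by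
    filter_upwards [hcr.eventually hrem] with ξ hξ
    have a1 := (abs_le.1 (abs_qf_le A ξ)).2
    have a2 : 0 ≤ |κ| * ‖ξ‖ ^ 2 := by positivity
    simp only [R, add_zero, sub_self, inner_zero_right, sub_zero, norm_zero, zero_sub, qf_neg_vec] at hξ
    rw [hk]; norm_num at hξ; linarith)
  have hz1s := hsq _ hz1s
  have hz2s := hsq _ hz2s
  have t1 : ‖z1 - xh‖ ≤ s + ‖z.1‖ := by
    have e : z1 - xh = z.1 - (xh + z.1 - z1) := by abel
    rw [e]; exact (norm_sub_le _ _).trans (by linarith)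
  have t2 : ‖z2 - yh‖ ≤ s + ‖z.2‖ := by
    have e : z2 - yh = z.2 - (yh + z.2 - z2) := by abel
    rw [e]; exact (norm_sub_le _ _).trans (by linarith)
  have hd1 : DifferentiableAt ℝ g1 (xh + z.1) := by
    have e : z.1 = xh + z.1 - xh := by abel
    rw [e] at hdz1
    have := DifferentiableAt.comp (xh + z.1) hdz1 (differentiableAt_id.sub_const xh)
    refine this.congr_of_eventuallyEq (Eventually.of_forall fun x => ?_)
    simp
  have hd2 : DifferentiableAt ℝ g2 (yh + z.2) := by
    have e : z.2 = yh + z.2 - yh := by abel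
    rw [e] at hdz2
    have := DifferentiableAt.comp (yh + z.2) hdz2 (differentiableAt_id.sub_const yh)
    refine this.congr_of_eventuallyEq (Eventually.of_forall fun x => ?_)
    simp
  obtain ⟨X1, hX1s, hX1⟩ := second_order_expansion (hasFDerivAt_of_c11 h1c) hd1
  obtain ⟨X2, hX2s, hX2⟩ := second_order_expansion (hasFDerivAt_of_c11 h2c) hd2
  have hfin : ∀ ξ η, qf X1 ξ + qf X2 η ≤ 2 * R (ξ, η) := by
    intro ξ η
    have hline : Tendsto (fun t : ℝ => ((t • ξ, t • η) : Euc d × Euc d)) (𝓝 0) (𝓝 0) := by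
      have := (by fun_prop : Continuous fun t : ℝ => ((t • ξ, t • η) : Euc d × Euc d)).tendsto 0
      simpa [← Prod.zero_eq_mk] using this
    have hl1 : Tendsto (fun t : ℝ => t • ξ) (𝓝 0) (𝓝 0) := by
      have := (by fun_prop : Continuous fun t : ℝ => t • ξ).tendsto 0
      simpa using this
    have hl2 : Tendsto (fun t : ℝ => t • η) (𝓝 0) (𝓝 0) := by
      have := (by fun_prop : Continuous fun t : ℝ => t • η).tendsto 0
      simpa using this
    refine le_of_scaling (f := fun t => qf X1 (t • ξ) + qf X2 (t • η)) (g := fun t => 2 * R (t • ξ, t • η))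
      (n := ‖ξ‖ ^ 2 + ‖η‖ ^ 2) ?_ ?_ ?_ (by positivity)
    · intro t; simp only [qf_smul_vec]; ring
    · intro t; simp only [R, ← smul_sub, qf_smul_vec, norm_smul, mul_pow, Real.norm_eq_abs, sq_abs]; ring
    · intro e he
      filter_upwards [hline.eventually hrem, hl1.eventually (hX1 (e / 2) (by positivity)),
        hl2.eventually (hX2 (e / 2) (by positivity))] with t b1 b2 b3
      have b2 := (abs_le.1 b2).1
      have b3 := (abs_le.1 b3).1
      simp only [norm_smul, mul_pow, Real.norm_eq_abs, sq_abs] at b1 b2 b3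
      linarith
  have hL1n : ‖L1 z‖ ≤ ρ / 2 := by
    rw [hL1]
    have b1 := (opM A).le_opNorm (z.1 - z.2)
    have b2 : ‖z.1 - z.2‖ ≤ 2 * r' := (norm_sub_le _ _).trans (by linarith)
    have b3 : ‖opM A‖ * ‖z.1 - z.2‖ ≤ ‖opM A‖ * (2 * r') := by gcongr
    have b4 : |κ + ρ1| ≤ |κ| + ρ1 := (abs_add_le _ _).trans (by rw [abs_of_pos hρ1p])
    have b5 : ‖(κ + ρ1) • z.1‖ ≤ (|κ| + ρ1) * r' := by
      rw [norm_smul, Real.norm_eq_abs]; gcongr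
    exact (norm_add_le _ _).trans (by linarith)
  have hL2n : ‖L2 z‖ ≤ ρ / 2 := by
    rw [hL2]
    have b1 := (opM A).le_opNorm (z.1 - z.2)
    have b2 : ‖z.1 - z.2‖ ≤ 2 * r' := (norm_sub_le _ _).trans (by linarith)
    have b3 : ‖opM A‖ * ‖z.1 - z.2‖ ≤ ‖opM A‖ * (2 * r') := by gcongr
    have b5 : ‖ρ1 • z.2‖ ≤ ρ1 * r' := by
      rw [norm_smul, Real.norm_eq_abs, abs_of_pos hρ1p]; gcongr
    have b6 : 0 ≤ |κ| * r' := by positivity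
    exact (norm_add_le _ _).trans (by rw [norm_neg]; linarith)
  have hG1 : ‖(G z).1‖ ≤ ρ / 2 := (norm_fst_le _).trans hGz.le
  have hG2 : ‖(G z).2‖ ≤ ρ / 2 := (norm_snd_le _).trans hGz.le
  refine ⟨z1, z2, g1 (xh + z.1), g2 (yh + z.2), X1 + ρ1 • (1 : Mat d), X2 + ρ1 • (1 : Mat d),
    by linarith, by linarith, ?_, ?_, hX1s.add (Matrix.isSymm_one.smul _),
    hX2s.add (Matrix.isSymm_one.smul _), ?_, ?_, ?_⟩
  · have e : g1 (xh + z.1) - p = (G z).1 + L1 z := by simp only [G]; abel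
    rw [e]; exact (norm_add_le _ _).trans (by linarith)
  · have e : g2 (yh + z.2) - p' = (G z).2 + L2 z := by simp only [G]; abel
    rw [e]; exact (norm_add_le _ _).trans (by linarith)
  · refine upJet_of_contact (closedBall_mem_nhds_of_mem ?_) hz1c hX1 hρ1p
    rw [mem_ball, dist_eq_norm]; linarith
  · refine upJet_of_contact (closedBall_mem_nhds_of_mem ?_) hz2c hX2 hρ1p
    rw [mem_ball, dist_eq_norm]; linarith
  · intro ξ η
    have := hfin ξ η
    simp only [R] at this
    simp only [qf_add, qf_smul, qf_one]
    rw [hρ1] at this ⊢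
    linarith
end ishii

/-! ### Comparison principle -/

section comparison
open Topology
variable {d : ℕ}

/-- Comparison principle for `F(D²u) = 0` on a ball, by doubling of variables; the perturbation
`κ |x|²` makes the subsolution strict. -/
lemma comparison {lam Lam : ℝ} {F : Mat d → ℝ} (hd : 1 ≤ d) (hlam : 0 < lam) (hF : QEll lam Lam F)
    {r : ℝ} {u v : Euc d → ℝ} (hu : ContinuousOn u (closedBall 0 r)) (hv : ContinuousOn v (closedBall 0 r))
    (hus : SubP F (ball 0 r) u) (hvs : SubP (dualF F) (ball 0 r) (-v))
    (hb : ∀ x ∈ sphere (0 : Euc d) r, u x ≤ v x) : ∀ x ∈ closedBall (0 : Euc d) r, u x ≤ v x := by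
  intro x0 hx0
  by_contra hcon
  push Not at hcon
  set m := u x0 - v x0 with hm
  have hm0 : 0 < m := by linarith
  have hr0 : 0 ≤ r := (dist_nonneg).trans hx0
  set κ := m / (4 * (r ^ 2 + 1)) with hκ
  have hκ0 : 0 < κ := by positivity
  have hκr : κ * r ^ 2 ≤ m / 4 := by
    rw [hκ, div_mul_eq_mul_div, div_le_div_iff₀ (by positivity) (by norm_num)]; nlinarith
  have hK := isCompact_closedBall (0 : Euc d) r
  obtain ⟨M1, hM1⟩ := hK.exists_bound_of_continuousOn hu
  obtain ⟨M2, hM2⟩ := hK.exists_bound_of_continuousOn hv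
  have hu' := hK.uniformContinuousOn_of_continuous hu
  have hv' := hK.uniformContinuousOn_of_continuous hv
  rw [Metric.uniformContinuousOn_iff] at hu' hv'
  obtain ⟨s1, hs1, hu'⟩ := hu' (m / 4) (by positivity)
  obtain ⟨s2, hs2, hv'⟩ := hv' (m / 4) (by positivity)
  set s := min s1 s2 with hs
  have hs0 : 0 < s := lt_min hs1 hs2
  have hM1' : 0 ≤ M1 := (norm_nonneg _).trans (hM1 x0 hx0)
  have hM2' : 0 ≤ M2 := (norm_nonneg _).trans (hM2 x0 hx0)
  set N := (M1 + M2 + m + 1) / s ^ 2 with hN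
  have hN0 : 0 < N := by positivity
  have hNs : N * s ^ 2 = M1 + M2 + m + 1 := by rw [hN]; field_simp
  -- `N` is large enough to keep the maximum point of `Φ` within the distance `s` of the diagonal.
  let Φ : Euc d × Euc d → ℝ := fun z => u z.1 - v z.2 + κ * ‖z.1‖ ^ 2 - N * ‖z.1 - z.2‖ ^ 2
  have hΦc : ContinuousOn Φ (closedBall 0 r ×ˢ closedBall 0 r) := by
    have a1 : ContinuousOn (fun z : Euc d × Euc d => u z.1) (closedBall 0 r ×ˢ closedBall 0 r) :=
      hu.comp continuousOn_fst (fun z hz => hz.1)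
    have a2 : ContinuousOn (fun z : Euc d × Euc d => v z.2) (closedBall 0 r ×ˢ closedBall 0 r) :=
      hv.comp continuousOn_snd (fun z hz => hz.2)
    exact ((a1.sub a2).add (by fun_prop)).sub (by fun_prop)
  obtain ⟨⟨xh, yh⟩, ⟨hxh, hyh⟩, hmaxΦ⟩ := (hK.prod hK).exists_isMaxOn ⟨(x0, x0), hx0, hx0⟩ hΦc
  have hxh : xh ∈ closedBall (0 : Euc d) r := hxh
  have hyh : yh ∈ closedBall (0 : Euc d) r := hyh
  have h0 : Φ (x0, x0) ≤ Φ (xh, yh) := hmaxΦ (⟨hx0, hx0⟩ : (x0, x0) ∈ closedBall (0 : Euc d) r ×ˢ closedBall (0 : Euc d) r)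
  have hxn : ‖xh‖ ≤ r := by simpa using hxh
  have h1 : m ≤ u xh - v yh + κ * ‖xh‖ ^ 2 - N * ‖xh - yh‖ ^ 2 := by
    have : 0 ≤ κ * ‖x0‖ ^ 2 := by positivity
    simp only [Φ, sub_self, norm_zero] at h0
    norm_num at h0; linarith
  have h2 : κ * ‖xh‖ ^ 2 ≤ m / 4 := le_trans (by gcongr) hκr
  have h3 : u xh ≤ M1 := (le_abs_self _).trans (hM1 xh hxh)
  have h4 : -v yh ≤ M2 := (neg_le_abs _).trans (hM2 yh hyh)
  have hclose : ‖xh - yh‖ < s := by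
    by_contra hc
    push Not at hc
    have : N * s ^ 2 ≤ N * ‖xh - yh‖ ^ 2 := by gcongr
    linarith
  have hNn : 0 ≤ N * ‖xh - yh‖ ^ 2 := by positivity
  have hxb : xh ∈ ball (0 : Euc d) r := by
    by_contra hc
    have hxs : xh ∈ sphere (0 : Euc d) r := by
      rw [mem_sphere]; rw [mem_ball] at hc; rw [mem_closedBall] at hxh
      exact le_antisymm hxh (not_lt.1 hc)
    have b1 := hb xh hxs
    have b2 := hv' xh hxh yh hyh (by rw [dist_eq_norm]; exact hclose.trans_le (min_le_right _ _))
    rw [Real.dist_eq] at b2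
    linarith [(abs_lt.1 b2).2]
  have hyb : yh ∈ ball (0 : Euc d) r := by
    by_contra hc
    have hxs : yh ∈ sphere (0 : Euc d) r := by
      rw [mem_sphere]; rw [mem_ball] at hc; rw [mem_closedBall] at hyh
      exact le_antisymm hyh (not_lt.1 hc)
    have b1 := hb yh hxs
    have b2 := hu' xh hxh yh hyh (by rw [dist_eq_norm]; exact hclose.trans_le (min_le_left _ _))
    rw [Real.dist_eq] at b2
    linarith [(abs_lt.1 b2).2]
  rw [mem_ball_zero_iff] at hxb hyb
  set rr := min (r - ‖xh‖) (r - ‖yh‖) / 2 with hrr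
  have hrr0 : 0 < rr := by
    have : 0 < min (r - ‖xh‖) (r - ‖yh‖) := lt_min (by linarith) (by linarith)
    positivity
  have hrrx : ‖xh‖ + rr < r := by
    have := min_le_left (r - ‖xh‖) (r - ‖yh‖); linarith
  have hrry : ‖yh‖ + rr < r := by
    have := min_le_right (r - ‖xh‖) (r - ‖yh‖); linarith
  have hsubx : closedBall xh rr ⊆ closedBall 0 r := by
    apply closedBall_subset_closedBall'; rw [dist_zero_right]; linarith
  have hsuby : closedBall yh rr ⊆ closedBall 0 r := by
    apply closedBall_subset_closedBall'; rw [dist_zero_right]; linarith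
  obtain ⟨x, y, a, a', X, Y, hx, hy, -, -, hX, hY, hjX, hjY, hXY⟩ := jensen_ishii (u1 := u) (u2 := -v)
    (xh := xh) (yh := yh) (p := (2 * N) • (xh - yh) - (2 * κ) • xh) (p' := -((2 * N) • (xh - yh)))
    (A := (2 * N) • 1) (κ := -(2 * κ)) (r := rr) (Matrix.isSymm_one.smul _) hrr0
    (hu.mono hsubx) (hv.mono hsuby).neg (by
      intro ξ η hξ hη
      have hξ' : xh + ξ ∈ closedBall (0 : Euc d) r := hsubx (by simpa using hξ)
      have hη' : yh + η ∈ closedBall (0 : Euc d) r := hsuby (by simpa using hη)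
      have := hmaxΦ (⟨hξ', hη'⟩ : (xh + ξ, yh + η) ∈ closedBall (0 : Euc d) r ×ˢ closedBall (0 : Euc d) r)
      simp only [Φ, mem_ofPred_eq] at this
      have e : xh + ξ - (yh + η) = (xh - yh) + (ξ - η) := by abel
      rw [e, norm_add_sq_real, norm_add_sq_real] at this
      simp only [Pi.neg_apply, qf_smul, qf_one, inner_sub_left, inner_neg_left, real_inner_smul_left,
        inner_sub_right] at this ⊢
      linarith) (ρ := min (rr) (κ / 2)) (lt_min hrr0 (by positivity))
  have hρ1 : min rr (κ / 2) ≤ rr := min_le_left _ _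
  have hρ2 : min rr (κ / 2) ≤ κ / 2 := min_le_right _ _
  have hxm : x ∈ ball (0 : Euc d) r := by
    rw [mem_ball_zero_iff]
    have := norm_add_le (x - xh) xh
    rw [sub_add_cancel] at this; linarith
  have hym : y ∈ ball (0 : Euc d) r := by
    rw [mem_ball_zero_iff]
    have := norm_add_le (y - yh) yh
    rw [sub_add_cancel] at this; linarith
  have c1 := hus x hxm a X hX hjX
  have c2 := hvs y hym a' Y hY hjY
  have hq : ∀ ξ, qf X ξ ≤ qf (-Y) ξ - κ * ‖ξ‖ ^ 2 := by
    intro ξ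
    have := hXY ξ ξ
    rw [sub_self, qf_zero_vec] at this
    rw [qf_neg]
    have : min rr (κ / 2) * (‖ξ‖ ^ 2 + ‖ξ‖ ^ 2) ≤ κ / 2 * (‖ξ‖ ^ 2 + ‖ξ‖ ^ 2) := by gcongr
    linarith
  have he : ‖(EuclideanSpace.single ⟨0, hd⟩ 1 : Euc d)‖ = 1 := by simp
  have := hF.mono X (-Y) hX hY.neg (fun y => by have := hq y; have : 0 ≤ κ * ‖y‖ ^ 2 := by positivity
                                                linarith) _ he
  have h5 := hq (EuclideanSpace.single ⟨0, hd⟩ 1)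
  rw [he] at h5
  simp only [dualF] at c2
  have : lam * κ ≤ lam * (qf (-Y) (EuclideanSpace.single ⟨0, hd⟩ 1) - qf X (EuclideanSpace.single ⟨0, hd⟩ 1)) := by
    gcongr; linarith
  have : 0 < lam * κ := by positivity
  linarith
end comparison

/-! ### Interior Lipschitz estimate -/

section lipschitz
open Topology
variable {d : ℕ}

/-- Upper quadratic bound for the norm near `w ≠ 0`. -/
lemma norm_add_le_quad {w ζ e : Euc d} {n : ℝ} (hn : 0 < n) (hwn : ‖w‖ = n) (he : w = n • e)
    (hζ : ‖ζ‖ ≤ n / 2) : ‖w + ζ‖ ≤ n + ⟪e, ζ⟫ + (‖ζ‖ ^ 2 - ⟪e, ζ⟫ ^ 2) / n := by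
  have he1 : ‖e‖ = 1 := by
    rw [he, norm_smul, Real.norm_eq_abs, abs_of_pos hn] at hwn
    exact mul_left_cancel₀ hn.ne' (by linarith)
  have hs := abs_le.1 (abs_real_inner_le_norm e ζ)
  rw [he1, one_mul] at hs
  set s := ⟪e, ζ⟫ with hsd
  have hsq : s ^ 2 ≤ ‖ζ‖ ^ 2 := sq_le_sq' (by linarith [hs.1]) hs.2
  have hT : 0 ≤ (‖ζ‖ ^ 2 - s ^ 2) / n := div_nonneg (by linarith) hn.le
  have hns : n / 2 ≤ n + s := by linarith [hs.1]
  set T := (‖ζ‖ ^ 2 - s ^ 2) / n with hTd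
  have hTn : T * n = ‖ζ‖ ^ 2 - s ^ 2 := by rw [hTd]; field_simp
  apply le_of_sq_le_sq _ (by linarith)
  rw [norm_add_sq_real, hwn, he, real_inner_smul_left, ← hsd]
  nlinarith [sq_nonneg T]

/-- Where the total gradient `q + p` has size at least one, the singular equation has a bounded
right-hand side. -/
lemma subS_lower {F : Mat d → ℝ} {Θ ε B : ℝ} (hΘ : 0 < Θ) (hε : 0 ≤ ε) {q : Euc d} {s : Set (Euc d)}
    {u : Euc d → ℝ} (h : SubS F ε Θ q s u) {x p : Euc d} {X : Mat d} (hx : x ∈ s) (hX : X.IsSymm)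
    (hj : UpJet u x p X) (hq : 1 ≤ ‖q + p‖) (hB : ‖p‖ ≤ B) : -(ε * (2 + B)) ≤ F X := by
  have h1 := h x hx p X hX hj (by intro h0; rw [h0, norm_zero] at hq; linarith)
  have h2 : ‖q + p‖ ^ (-Θ) ≤ 1 := Real.rpow_le_one_of_one_le_of_nonpos hq (by linarith)
  have h3 : ε * (‖q + p‖ ^ (-Θ) + 1 + ‖p‖) ≤ ε * (2 + B) := by gcongr; linarith
  linarith

set_option maxHeartbeats 1600000 in
/-- The Ishii–Lions argument with the concave modulus `L (s - s² / 2)` and the localization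
`200 |x - x0|²`. The slope `L` is separated from `‖q‖`, which keeps the total gradient at the contact
points of size at least one. -/
lemma lipschitz_core {lam Lam Θ : ℝ} (hlam : 0 < lam) (hlL : lam ≤ Lam) (hΘ : 0 < Θ) {F : Mat d → ℝ}
    (hF : QEll lam Lam F) {q : Euc d} {u : Euc d → ℝ} (hu : ContinuousOn u (ball 0 1))
    (hub : ∀ x ∈ ball (0 : Euc d) 1, |u x| ≤ 1)
    (h1 : SubS F (lam / 2) Θ q (ball 0 1) u) (h2 : SubS (dualF F) (lam / 2) Θ (-q) (ball 0 1) (-u))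
    {L : ℝ} (hL : 300 * Lam / lam ≤ L) (hqL : ‖q‖ ≤ L / 2 ∨ 2 * L ≤ ‖q‖)
    {x0 : Euc d} (hx0 : ‖x0‖ ≤ 3 / 4) {y0 : Euc d} (hy0 : ‖y0 - x0‖ ≤ 1 / 5) :
    u x0 - u y0 ≤ L * ‖x0 - y0‖ := by
  have hL300 : 300 ≤ L := by
    refine le_trans ?_ hL
    rw [le_div_iff₀ hlam]; nlinarith
  have hLl : 300 * Lam ≤ L * lam := by rwa [div_le_iff₀ hlam] at hL
  have hK := isCompact_closedBall x0 (1 / 5)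
  have hsub : closedBall x0 (1 / 5) ⊆ ball (0 : Euc d) 1 := by
    intro z hz
    rw [mem_closedBall, dist_eq_norm] at hz
    rw [mem_ball_zero_iff]
    have := norm_add_le (z - x0) x0
    rw [sub_add_cancel] at this; linarith
  have huc := hu.mono hsub
  let Φ : Euc d × Euc d → ℝ := fun z => u z.1 - u z.2 - L * (‖z.1 - z.2‖ - ‖z.1 - z.2‖ ^ 2 / 2)
    - 200 * ‖z.1 - x0‖ ^ 2
  have hΦc : ContinuousOn Φ (closedBall x0 (1 / 5) ×ˢ closedBall x0 (1 / 5)) := by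
    have a1 : ContinuousOn (fun z : Euc d × Euc d => u z.1) (closedBall x0 (1/5) ×ˢ closedBall x0 (1/5)) :=
      huc.comp continuousOn_fst (fun z hz => hz.1)
    have a2 : ContinuousOn (fun z : Euc d × Euc d => u z.2) (closedBall x0 (1/5) ×ˢ closedBall x0 (1/5)) :=
      huc.comp continuousOn_snd (fun z hz => hz.2)
    exact ((a1.sub a2).sub (by fun_prop)).sub (by fun_prop)
  have hx0m : x0 ∈ closedBall x0 (1 / 5) := mem_closedBall_self (by norm_num)
  have hy0m : y0 ∈ closedBall x0 (1 / 5) := by rwa [mem_closedBall, dist_eq_norm]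
  obtain ⟨⟨xh, yh⟩, ⟨hxh, hyh⟩, hmaxΦ⟩ := (hK.prod hK).exists_isMaxOn ⟨(x0, x0), hx0m, hx0m⟩ hΦc
  have hxh : xh ∈ closedBall x0 (1 / 5) := hxh
  have hyh : yh ∈ closedBall x0 (1 / 5) := hyh
  have h0 : Φ (x0, y0) ≤ Φ (xh, yh) :=
    hmaxΦ (⟨hx0m, hy0m⟩ : (x0, y0) ∈ closedBall x0 (1 / 5) ×ˢ closedBall x0 (1 / 5))
  by_contra hcon
  push Not at hcon
  have hpos : 0 < u xh - u yh - L * (‖xh - yh‖ - ‖xh - yh‖ ^ 2 / 2) - 200 * ‖xh - x0‖ ^ 2 := by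
    have b1 : 0 ≤ L * (‖x0 - y0‖ ^ 2 / 2) := by positivity
    simp only [Φ, sub_self, norm_zero] at h0
    norm_num at h0
    linarith
  set n := ‖xh - yh‖ with hn
  have hn0 : 0 ≤ n := norm_nonneg _
  have hxh1 : ‖xh - x0‖ ≤ 1 / 5 := by rwa [mem_closedBall, dist_eq_norm] at hxh
  have hyh1 : ‖yh - x0‖ ≤ 1 / 5 := by rwa [mem_closedBall, dist_eq_norm] at hyh
  have hn25 : n ≤ 2 / 5 := by
    have e : xh - yh = (xh - x0) - (yh - x0) := by abel
    rw [hn, e]; exact (norm_sub_le _ _).trans (by linarith)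
  have hu2 : u xh - u yh ≤ 2 := by
    have := abs_le.1 (hub xh (hsub hxh)); have := abs_le.1 (hub yh (hsub hyh)); linarith
  have hsqx : 0 ≤ 200 * ‖xh - x0‖ ^ 2 := by positivity
  have hLn : L * n ≤ 5 / 2 := by nlinarith
  have hn120 : n ≤ 1 / 100 := by nlinarith
  have hx10 : ‖xh - x0‖ ≤ 1 / 10 := by
    have : 0 ≤ L * (n - n ^ 2 / 2) := mul_nonneg (by linarith) (by nlinarith)
    nlinarith [norm_nonneg (xh - x0)]
  have hy10 : ‖yh - x0‖ ≤ 11 / 100 := by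
    have e : yh - x0 = (xh - x0) - (xh - yh) := by abel
    rw [e]; exact (norm_sub_le _ _).trans (by linarith)
  have hnp : 0 < n := by
    rcases hn0.lt_or_eq with h | h
    · exact h
    · have hxy : xh = yh := sub_eq_zero.1 (norm_eq_zero.1 h.symm)
      rw [← h, hxy, sub_self] at hpos
      rw [hxy] at hsqx
      norm_num at hpos; linarith
  set e := n⁻¹ • (xh - yh) with he
  have hwe : xh - yh = n • e := by rw [he, smul_smul, mul_inv_cancel₀ hnp.ne', one_smul]
  have he1 : ‖e‖ = 1 := by rw [he, norm_smul, norm_inv, Real.norm_eq_abs, abs_of_pos hnp, ← hn, inv_mul_cancel₀ hnp.ne']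
  set rr := min (1 / 20) (n / 4) with hrr
  have hrr0 : 0 < rr := lt_min (by norm_num) (by positivity)
  have hrr1 : rr ≤ 1 / 20 := min_le_left _ _
  have hrr2 : rr ≤ n / 4 := min_le_right _ _
  have hsubx : closedBall xh rr ⊆ closedBall x0 (1 / 5) := by
    apply closedBall_subset_closedBall'; rw [dist_eq_norm]; linarith
  have hsuby : closedBall yh rr ⊆ closedBall x0 (1 / 5) := by
    apply closedBall_subset_closedBall'; rw [dist_eq_norm]; linarith
  have hA : ((2 * L / n - L) • (1 : Mat d) - (2 * L / n) • vvT e).IsSymm :=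
    (Matrix.isSymm_one.smul _).sub ((vvT_symm e).smul _)
  have hqA : ∀ ζ, qf ((2 * L / n - L) • (1 : Mat d) - (2 * L / n) • vvT e) ζ =
      2 * L * ((‖ζ‖ ^ 2 - ⟪e, ζ⟫ ^ 2) / n) - L * ‖ζ‖ ^ 2 := by
    intro ζ
    rw [qf_sub, qf_smul, qf_smul, qf_one, qf_vvT]; field_simp
    try ring
  obtain ⟨x, y, a, a', X, Y, hx, hy, ha, ha', hX, hY, hjX, hjY, hXY⟩ := jensen_ishii (u1 := u) (u2 := -u)
    (xh := xh) (yh := yh) (p := (L * (1 - n)) • e + (400 : ℝ) • (xh - x0)) (p' := -((L * (1 - n)) • e))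
    (κ := 400) (r := rr) hA hrr0
    (huc.mono hsubx) (huc.mono hsuby).neg (by
      intro ξ η hξ hη
      have hξ' : xh + ξ ∈ closedBall x0 (1 / 5) := hsubx (by simpa using hξ)
      have hη' : yh + η ∈ closedBall x0 (1 / 5) := hsuby (by simpa using hη)
      have hm := hmaxΦ (⟨hξ', hη'⟩ : (xh + ξ, yh + η) ∈ closedBall x0 (1 / 5) ×ˢ closedBall x0 (1 / 5))
      simp only [Φ, mem_ofPred_eq] at hm
      have e1 : xh + ξ - (yh + η) = (xh - yh) + (ξ - η) := by abel
      have e2 : xh + ξ - x0 = (xh - x0) + ξ := by abel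
      have hq := norm_add_le_quad hnp rfl hwe (ζ := ξ - η) ((norm_sub_le _ _).trans (by linarith))
      have e3 : ‖xh - yh + (ξ - η)‖ ^ 2 = n ^ 2 + 2 * (n * ⟪e, ξ - η⟫) + ‖ξ - η‖ ^ 2 := by
        rw [norm_add_sq_real, ← hn, hwe, real_inner_smul_left]
      have e4 := norm_add_sq_real (xh - x0) ξ
      rw [e1, e2, e3, e4, ← hn] at hm
      rw [hqA]
      simp only [Pi.neg_apply, inner_add_left, inner_neg_left, real_inner_smul_left]
      have e5 : ⟪e, ξ⟫ = ⟪e, ξ - η⟫ + ⟪e, η⟫ := by rw [inner_sub_right]; ring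
      rw [e5]
      have hq' := mul_le_mul_of_nonneg_left hq (by linarith : 0 ≤ L)
      linarith) (ρ := 1 / 100) (by norm_num)
  have hxm : x ∈ ball (0 : Euc d) 1 := by
    rw [mem_ball_zero_iff]
    have e1 : x = (x - xh) + (xh - x0) + x0 := by abel
    rw [e1]
    have := norm_add₃_le (a := x - xh) (b := xh - x0) (c := x0)
    linarith
  have hym : y ∈ ball (0 : Euc d) 1 := by
    rw [mem_ball_zero_iff]
    have e1 : y = (y - yh) + (yh - x0) + x0 := by abel
    rw [e1]
    have := norm_add₃_le (a := y - yh) (b := yh - x0) (c := x0)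
    linarith
  -- The gradients at the contact points differ from `± L (1 - n) e` by at most `41`, where `40` comes
  -- from the localization; hence the total gradients `q + a` and `-q + a'` have size at least one.
  have hpe : ‖(L * (1 - n)) • e‖ = L - L * n := by
    rw [norm_smul, he1, Real.norm_eq_abs, abs_of_nonneg (mul_nonneg (by linarith) (by linarith))]; ring
  have hLn0 : 0 ≤ L * n := by positivity
  have hda : ‖a - (L * (1 - n)) • e‖ ≤ 41 := by
    have e1 : a - (L * (1 - n)) • e = (a - ((L * (1 - n)) • e + (400 : ℝ) • (xh - x0))) + (400 : ℝ) • (xh - x0) := by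
      abel
    rw [e1]
    refine (norm_add_le _ _).trans ?_
    rw [norm_smul (400 : ℝ)]; norm_num; linarith
  have hda' : ‖a' - -((L * (1 - n)) • e)‖ ≤ 41 := by linarith
  have hpe' : ‖-((L * (1 - n)) • e)‖ = L - L * n := by rw [norm_neg, hpe]
  have key : ∀ (b v q' : Euc d), ‖v‖ = L - L * n → ‖b - v‖ ≤ 41 → ‖q'‖ = ‖q‖ → ‖b‖ ≤ L + 41 ∧ 1 ≤ ‖q' + b‖ := by
    intro b v q' hv hbv hq'
    have t1 := norm_add_le (b - v) v
    have t2 := norm_sub_norm_le v (v - b)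
    have t3 := norm_sub_norm_le q' (-b)
    have t4 := norm_sub_norm_le b (-q')
    rw [sub_add_cancel] at t1
    rw [sub_sub_cancel, norm_sub_rev v b] at t2
    rw [sub_neg_eq_add, norm_neg] at t3 t4
    rw [add_comm b q'] at t4
    refine ⟨by linarith, ?_⟩
    rcases hqL with h | h <;> linarith
  obtain ⟨ka1, ka2⟩ := key a _ q hpe hda rfl
  obtain ⟨kb1, kb2⟩ := key a' _ (-q) hpe' hda' (norm_neg q)
  have c1 := subS_lower hΘ (by positivity) h1 hxm hX hjX ka2 ka1
  have c2 := subS_lower hΘ (by positivity) h2 hym hY hjY kb2 kb1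
  simp only [dualF] at c2
  have hq : ∀ ξ, qf X ξ ≤ qf (-Y) ξ + 401 * ‖ξ‖ ^ 2 := by
    intro ξ
    have := hXY ξ ξ
    rw [sub_self, qf_zero_vec] at this
    rw [qf_neg]
    nlinarith [sq_nonneg ‖ξ‖]
  -- The concavity of the modulus shows in the direction `(e, -e)`, giving the gain `4 L`.
  have hE := hXY e (-e)
  have ee : e - -e = (2 : ℝ) • e := by rw [two_smul]; abel
  rw [ee, qf_neg_vec, hqA, norm_neg, norm_smul, he1, real_inner_smul_right, real_inner_self_eq_norm_sq,
    he1] at hE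
  have hfin := hF.le_add' hX hY.neg (by norm_num : (0:ℝ) ≤ 401) hq e he1
  rw [qf_neg] at hfin
  have : lam * (4 * L) ≤ lam * (-qf Y e + 401 - qf X e) := by
    gcongr; norm_num at hE; linarith
  nlinarith

/-- Interior Lipschitz estimate, with a constant independent of the shift `q`: one of the two slopes
`300 Lam / lam` and four times that is separated from `‖q‖`. -/
lemma lipschitz_est {lam Lam Θ : ℝ} (hlam : 0 < lam) (hlL : lam ≤ Lam) (hΘ : 0 < Θ) {F : Mat d → ℝ}
    (hF : QEll lam Lam F) {q : Euc d} {u : Euc d → ℝ} (hu : ContinuousOn u (ball 0 1))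
    (hub : ∀ x ∈ ball (0 : Euc d) 1, |u x| ≤ 1)
    (h1 : SubS F (lam / 2) Θ q (ball 0 1) u) (h2 : SubS (dualF F) (lam / 2) Θ (-q) (ball 0 1) (-u))
    {x0 : Euc d} (hx0 : ‖x0‖ ≤ 3 / 4) {y0 : Euc d} (hy0 : ‖y0 - x0‖ ≤ 1 / 5) :
    |u x0 - u y0| ≤ 1200 * Lam / lam * ‖x0 - y0‖ := by
  have hL0 : 0 < 300 * Lam / lam := by have : 0 < Lam := by linarith
                                       positivity
  have key : ∃ L, 300 * Lam / lam ≤ L ∧ L ≤ 4 * (300 * Lam / lam) ∧ (‖q‖ ≤ L / 2 ∨ 2 * L ≤ ‖q‖) := by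
    rcases le_total ‖q‖ (2 * (300 * Lam / lam)) with h | h
    · exact ⟨4 * (300 * Lam / lam), by linarith, le_rfl, Or.inl (by linarith)⟩
    · exact ⟨300 * Lam / lam, le_rfl, by linarith, Or.inr h⟩
  obtain ⟨L, hL1, hL2, hqL⟩ := key
  have e : 1200 * Lam / lam = 4 * (300 * Lam / lam) := by ring
  have hfin : L * ‖x0 - y0‖ ≤ 1200 * Lam / lam * ‖x0 - y0‖ := by rw [e]; gcongr
  rw [abs_le]
  constructor
  · have := lipschitz_core hlam hlL hΘ hF.dual (u := -u) (q := -q) hu.neg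
      (fun x hx => by rw [Pi.neg_apply, abs_neg]; exact hub x hx) h2 (by rwa [dualF_dualF, neg_neg, neg_neg])
      hL1 (by rwa [norm_neg]) hx0 hy0
    simp only [Pi.neg_apply] at this
    linarith
  · exact (lipschitz_core hlam hlL hΘ hF hu hub h1 h2 hL1 hqL hx0 hy0).trans hfin
end lipschitz

/-! ### Subgradients of a convex operator -/

section subgradient
open Topology

/-- Existence of a subgradient, by separating `(x0, f x0)` from the strict epigraph. -/
lemma exists_subgrad {E : Type*} [NormedAddCommGroup E] [NormedSpace ℝ E] [FiniteDimensional ℝ E]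
    {f : E → ℝ} (hf : ConvexOn ℝ univ f) (x0 : E) :
    ∃ l : E →ₗ[ℝ] ℝ, ∀ x, f x0 + l (x - x0) ≤ f x := by
  have hc : Continuous f := continuousOn_univ.1 (hf.continuousOn isOpen_univ)
  have hconv : Convex ℝ {p : E × ℝ | f p.1 < p.2} := by
    simpa using hf.convex_strict_epigraph
  have hopen : IsOpen {p : E × ℝ | f p.1 < p.2} :=
    isOpen_lt (hc.comp continuous_fst) continuous_snd
  obtain ⟨L, hL⟩ := geometric_hahn_banach_point_open (x := (x0, f x0)) hconv hopen (by simp)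
  have hβ : 0 < L (0, 1) := by
    have := hL (x0, f x0 + 1) (by simp)
    have e : ((x0, f x0 + 1) : E × ℝ) = (x0, f x0) + (0, 1) := by simp
    rw [e, map_add] at this; linarith
  refine ⟨(-(L (0, 1))⁻¹) • (L.comp (ContinuousLinearMap.inl ℝ E ℝ)).toLinearMap, fun x => ?_⟩
  have key : L (x0 - x, 0) + L (0, 1) * (f x0 - f x) ≤ 0 := by
    refine le_of_forall_pos_le_add fun e he => ?_
    have h1 := hL (x, f x + e / L (0, 1)) (by simp; positivity)
    have e1 : ((x0, f x0) : E × ℝ) = (x, f x + e / L (0, 1)) + ((x0 - x, 0) +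
      (f x0 - f x - e / L (0, 1)) • (0, 1)) := by ext <;> simp
    rw [e1, map_add, map_add, map_smul, smul_eq_mul] at h1
    have e2 : (f x0 - f x - e / L (0, 1)) * L (0, 1) = L (0, 1) * (f x0 - f x) - e := by field_simp
    rw [e2] at h1; linarith
  have e3 : ((x - x0, 0) : E × ℝ) = - (x0 - x, 0) := by ext <;> simp
  simp only [LinearMap.smul_apply, ContinuousLinearMap.coe_coe, ContinuousLinearMap.comp_apply,
    ContinuousLinearMap.inl_apply, e3, map_neg, smul_eq_mul]
  have : L (0, 1) * ((L (0, 1))⁻¹ * L (x0 - x, 0)) = L (x0 - x, 0) := by field_simp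
  have : (L (0, 1))⁻¹ * L (x0 - x, 0) ≤ f x - f x0 := by
    apply le_of_mul_le_mul_left _ hβ; linarith
  linarith

variable {d : ℕ}

lemma exists_subgrad_mat {F : Mat d → ℝ} (hF : ConvexOn ℝ univ F) (M0 : Mat d) :
    ∃ l : Mat d →ₗ[ℝ] ℝ, ∀ M, F M0 + l (M - M0) ≤ F M :=
  exists_subgrad (E := Fin d → Fin d → ℝ) hF M0

/-- Spectral decomposition of a linear functional on symmetric matrices. -/
lemma spectral_decomp (l : Mat d →ₗ[ℝ] ℝ) {α β : ℝ} (h1 : ∀ v, α * ‖v‖ ^ 2 ≤ l (vvT v))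
    (h2 : ∀ v, l (vvT v) ≤ β * ‖v‖ ^ 2) : ∃ (μ : Fin d → ℝ) (v : Fin d → Euc d),
      (∀ k, ‖v k‖ = 1) ∧ (∀ k, α ≤ μ k ∧ μ k ≤ β) ∧
      ∀ M : Mat d, M.IsSymm → l M = ∑ k, μ k * qf M (v k) := by
  classical
  let B : Mat d := Matrix.of fun i j => (l (Matrix.single i j 1) + l (Matrix.single j i 1)) / 2
  have hB : B.IsSymm := by
    ext i j; simp [B, Matrix.transpose_apply, add_comm]
  have hl : ∀ M : Mat d, M.IsSymm → l M = ∑ i, ∑ j, M i j * B i j := by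
    intro M hM
    have e1 : l M = ∑ i, ∑ j, M i j * l (Matrix.single i j 1) := by
      conv_lhs => rw [Matrix.matrix_eq_sum_single M]
      simp only [map_sum]
      refine Finset.sum_congr rfl fun i _ => Finset.sum_congr rfl fun j _ => ?_
      have : Matrix.single i j (M i j) = M i j • Matrix.single i j (1:ℝ) := by simp
      rw [this, map_smul, smul_eq_mul]
    have e2 : l M = ∑ i, ∑ j, M i j * l (Matrix.single j i 1) := by
      rw [e1, Finset.sum_comm]
      refine Finset.sum_congr rfl fun i _ => Finset.sum_congr rfl fun j _ => ?_
      rw [hM.apply]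
    have : l M = (l M + l M) / 2 := by ring
    rw [this]
    nth_rewrite 1 [e1]
    rw [e2, ← Finset.sum_add_distrib, Finset.sum_div]
    refine Finset.sum_congr rfl fun i _ => ?_
    rw [← Finset.sum_add_distrib, Finset.sum_div]
    refine Finset.sum_congr rfl fun j _ => ?_
    simp only [B, Matrix.of_apply]; ring
  have hT : ((opM B).toLinearMap).IsSymmetric := fun x y => by
    exact (inner_opM_symm hB x y).symm
  have hfr : Module.finrank ℝ (Euc d) = d := by simp
  let b := hT.eigenvectorBasis hfr
  let μ := hT.eigenvalues hfr
  have hb : ∀ k, opM B (b k) = μ k • b k := fun k => by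
    have := hT.apply_eigenvectorBasis hfr k
    exact this
  have hB2 : ∀ i j, B i j = ∑ k, μ k * (b k i * b k j) := by
    intro i j
    have e1 : (EuclideanSpace.single j 1 : Euc d) = ∑ k, ⟪b k, EuclideanSpace.single j 1⟫ • b k :=
      (b.sum_repr' _).symm
    have e2 : opM B (EuclideanSpace.single j 1) = ∑ k, ⟪b k, EuclideanSpace.single j 1⟫ • (μ k • b k) := by
      conv_lhs => rw [e1]
      rw [map_sum]
      exact Finset.sum_congr rfl fun k _ => by rw [map_smul, hb]
    have e3 : B i j = (opM B (EuclideanSpace.single j 1)) i := by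
      rw [opM_single]
    rw [e3, e2]
    simp only [WithLp.ofLp_sum, Finset.sum_apply, PiLp.smul_apply, smul_eq_mul]
    refine Finset.sum_congr rfl fun k _ => ?_
    rw [EuclideanSpace.inner_single_right]; simp; ring
  have hfinal : ∀ M : Mat d, M.IsSymm → l M = ∑ k, μ k * qf M (b k) := by
    intro M hM
    rw [hl M hM]
    simp only [hB2, qf_eq_sum, Finset.mul_sum]
    have e : ∀ i, ∑ j, ∑ k, M i j * (μ k * (b k i * b k j)) =
        ∑ k, ∑ j, μ k * (M i j * b k i * b k j) := fun i => by
      rw [Finset.sum_comm]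
      exact Finset.sum_congr rfl fun k _ => Finset.sum_congr rfl fun j _ => by ring
    rw [Finset.sum_congr rfl fun i _ => e i, Finset.sum_comm]
  refine ⟨μ, b, fun k => b.norm_eq_one k, fun k => ?_, hfinal⟩
  have e : l (vvT (b k)) = μ k := by
    rw [hfinal _ (vvT_symm _)]
    simp only [qf_vvT]
    rw [Finset.sum_eq_single k]
    · rw [real_inner_self_eq_norm_sq, b.norm_eq_one]; norm_num
    · intro j _ hj; rw [b.inner_eq_zero hj.symm]; norm_num
    · simp
  have a1 := h1 (b k); have a2 := h2 (b k)
  rw [e, b.norm_eq_one] at a1 a2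
  constructor <;> linarith
end subgradient

/-! ### Bellman representation of a convex operator -/

section control
open Topology

/-- A control: directions `ξ k` with weights `a k`, and a constant `c`; it stands for the affine
function `M ↦ ∑ k, a k * qf M (ξ k) + c` of a symmetric matrix. -/
structure Ctrl (d : ℕ) (ι : Type) where
  /-- directions -/
  ξ : ι → Euc d
  /-- weights -/
  a : ι → ℝ
  /-- constant term -/
  c : ℝ

/-- `𝒞` is a family of controls whose supremum is `F`, with directions in the unit ball, total
weight at most `S1`, and weight at least `a0` on each direction of the common set `V`. One of the
controls has no constant term and only directions of `V`, and `V` contains the vectors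
`(e_i ± e_j) / 2`, which give access to all mixed second differences. -/
structure Adm {d : ℕ} {ι : Type} [Fintype ι] (F : Mat d → ℝ) (a0 S1 : ℝ) (V : Set (Euc d))
    (𝒞 : Set (Ctrl d ι)) : Prop where
  norm_le : ∀ κ ∈ 𝒞, ∀ k, ‖κ.ξ k‖ ≤ 1
  nonneg : ∀ κ ∈ 𝒞, ∀ k, 0 ≤ κ.a k
  sum_le : ∀ κ ∈ 𝒞, ∑ k, κ.a k ≤ S1
  c_le : ∀ κ ∈ 𝒞, κ.c ≤ 0
  dir : ∀ κ ∈ 𝒞, ∀ v ∈ V, ∃ k, κ.ξ k = v ∧ a0 ≤ κ.a k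
  le : ∀ κ ∈ 𝒞, ∀ M : Mat d, M.IsSymm → ∑ k, κ.a k * qf M (κ.ξ k) + κ.c ≤ F M
  ex_eq : ∀ M : Mat d, M.IsSymm → ∃ κ ∈ 𝒞, ∑ k, κ.a k * qf M (κ.ξ k) + κ.c = F M
  ex_zero : ∃ κ ∈ 𝒞, κ.c = 0 ∧ ∀ k, κ.a k = 0 ∨ κ.ξ k ∈ V
  V_le : ∀ v ∈ V, ‖v‖ ≤ 1
  V_add : ∀ i j, (1 / 2 : ℝ) • (EuclideanSpace.single i 1 + EuclideanSpace.single j 1 : Euc d) ∈ V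
  V_sub : ∀ i j, (1 / 2 : ℝ) • (EuclideanSpace.single i 1 - EuclideanSpace.single j 1 : Euc d) ∈ V

variable {d : ℕ}

/-- A linear functional with ellipticity constants `lam, Lam` retains half its ellipticity when
weight `a0` is reserved for each of the prescribed directions `ξ j`; the rest is diagonalized. -/
lemma decomp_with {J : Type} [Fintype J] {ξ : J → Euc d} (hξ : ∀ j, ‖ξ j‖ ≤ 1)
    {lam Lam a0 : ℝ} (l : Mat d →ₗ[ℝ] ℝ)
    (h1 : ∀ v, lam * ‖v‖ ^ 2 ≤ l (vvT v)) (h2 : ∀ v, l (vvT v) ≤ Lam * ‖v‖ ^ 2)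
    (ha0 : 0 ≤ a0) (hcard : a0 * Fintype.card J ≤ lam / 2) :
    ∃ (μ : Fin d → ℝ) (v : Fin d → Euc d),
      (∀ k, ‖v k‖ = 1) ∧ (∀ k, lam / 2 ≤ μ k ∧ μ k ≤ Lam) ∧
      ∀ M : Mat d, M.IsSymm → l M = ∑ j, a0 * qf M (ξ j) + ∑ k, μ k * qf M (v k) := by
  let m : Mat d →ₗ[ℝ] ℝ :=
    { toFun := fun M => ∑ j, a0 * qf M (ξ j)
      map_add' := fun X Y => by
        simp only [qf_add, mul_add, Finset.sum_add_distrib]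
      map_smul' := fun c X => by
        simp only [qf_smul, Finset.mul_sum, smul_eq_mul, RingHom.id_apply]
        exact Finset.sum_congr rfl fun j _ => by ring }
  have hm : ∀ M, m M = ∑ j, a0 * qf M (ξ j) := fun _ => rfl
  have hm0 : ∀ v, 0 ≤ m (vvT v) := fun v => by
    rw [hm]; refine Finset.sum_nonneg fun j _ => ?_
    rw [qf_vvT]; positivity
  have hm1 : ∀ v, m (vvT v) ≤ lam / 2 * ‖v‖ ^ 2 := fun v => by
    rw [hm]
    have : ∀ j ∈ Finset.univ, a0 * qf (vvT v) (ξ j) ≤ a0 * ‖v‖ ^ 2 := fun j _ => by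
      rw [qf_vvT]
      refine mul_le_mul_of_nonneg_left ?_ ha0
      rw [← sq_abs]
      have : |⟪v, ξ j⟫| ≤ ‖v‖ := (abs_real_inner_le_norm _ _).trans
        (mul_le_of_le_one_right (norm_nonneg _) (hξ j))
      gcongr
    refine (Finset.sum_le_sum this).trans ?_
    rw [Finset.sum_const, nsmul_eq_mul, Finset.card_univ]
    nlinarith [sq_nonneg ‖v‖]
  obtain ⟨μ, v, hv, hμ, H⟩ := spectral_decomp (l - m) (α := lam / 2) (β := Lam)
    (fun v => by simp only [LinearMap.sub_apply]; nlinarith [h1 v, hm1 v])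
    (fun v => by simp only [LinearMap.sub_apply]; nlinarith [h2 v, hm0 v])
  refine ⟨μ, v, hv, hμ, fun M hM => ?_⟩
  have := H M hM
  simp only [LinearMap.sub_apply, hm] at this
  linarith

/-- Subgradients of a convex elliptic operator are elliptic with the same constants. -/
lemma subgrad_bounds {lam Lam : ℝ} {F : Mat d → ℝ} (hd : 1 ≤ d) (hlam : 0 < lam) (hF : QEll lam Lam F)
    {M0 : Mat d} (hM0 : M0.IsSymm) {l : Mat d →ₗ[ℝ] ℝ} (hl : ∀ M, F M0 + l (M - M0) ≤ F M) (v : Euc d) :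
    lam * ‖v‖ ^ 2 ≤ l (vvT v) ∧ l (vvT v) ≤ Lam * ‖v‖ ^ 2 := by
  constructor
  · by_cases hv : v = 0
    · subst hv
      have : vvT (0 : Euc d) = 0 := by ext i j; simp [vvT]
      simp [this]
    · have h1 := hl (M0 - vvT v)
      have h2 := hF.mono (X := M0 - vvT v) (Y := M0) (hM0.sub (vvT_symm v)) hM0
        (fun y => by rw [qf_sub, qf_vvT]; nlinarith [sq_nonneg ⟪v, y⟫]) (e := ‖v‖⁻¹ • v)
        (norm_smul_inv_norm hv)
      rw [sub_sub_cancel_left, map_neg] at h1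
      have e : qf (vvT v) (‖v‖⁻¹ • v) = ‖v‖ ^ 2 := by
        rw [qf_vvT, inner_smul_right, real_inner_self_eq_norm_sq]
        have := norm_ne_zero_iff.2 hv
        field_simp
      rw [qf_sub, e] at h2
      linarith
  · have h1 := hl (M0 + vvT v)
    have h2 := hF.le_add hd hlam (hM0.add (vvT_symm v)) hM0 (κ := ‖v‖ ^ 2) (by positivity)
      (fun y => by
        rw [qf_add, qf_vvT, ← sq_abs ⟪v, y⟫]
        have := abs_real_inner_le_norm v y
        have : |⟪v, y⟫| ^ 2 ≤ (‖v‖ * ‖y‖) ^ 2 := by gcongr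
        linarith [mul_pow ‖v‖ ‖y‖ 2])
    rw [add_sub_cancel_left] at h1
    linarith

/-- Index set of the vectors `(e_i ± e_j) / 2`. -/
abbrev J1 (d : ℕ) := Fin d × Fin d × Bool
/-- Index set of the directions of a control: the vectors `(e_i ± e_j) / 2`, the eigendirections of a
subgradient at `0`, and the eigendirections of the subgradient that defines the control. -/
abbrev J3 (d : ℕ) := (J1 d ⊕ Fin d) ⊕ Fin d

/-- The vectors `(e_i ± e_j) / 2`; for `i = j` these include the `e_i`. -/
def baseDir (d : ℕ) : J1 d → Euc d := fun p =>
  if p.2.2 then (1 / 2 : ℝ) • (EuclideanSpace.single p.1 1 + EuclideanSpace.single p.2.1 1)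
  else (1 / 2 : ℝ) • (EuclideanSpace.single p.1 1 - EuclideanSpace.single p.2.1 1)

lemma baseDir_norm (j : J1 d) : ‖baseDir d j‖ ≤ 1 := by
  obtain ⟨i, k, b⟩ := j
  have h1 : ‖(EuclideanSpace.single i 1 : Euc d)‖ = 1 := by simp
  have h2 : ‖(EuclideanSpace.single k 1 : Euc d)‖ = 1 := by simp
  have h3 := norm_add_le (EuclideanSpace.single i 1 : Euc d) (EuclideanSpace.single k 1)
  have h4 := norm_sub_le (EuclideanSpace.single i 1 : Euc d) (EuclideanSpace.single k 1)
  rw [h1, h2] at h3 h4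
  have hh : ‖(1 / 2 : ℝ)‖ = 1 / 2 := by norm_num
  cases b
  · show ‖(1 / 2 : ℝ) • (EuclideanSpace.single i 1 - EuclideanSpace.single k 1 : Euc d)‖ ≤ 1
    rw [norm_smul, hh]; linarith
  · show ‖(1 / 2 : ℝ) • (EuclideanSpace.single i 1 + EuclideanSpace.single k 1 : Euc d)‖ ≤ 1
    rw [norm_smul, hh]; linarith

/-- The weight reserved for each of the `2 d² + d` common directions; in total they use up half of the
ellipticity `lam`. -/
def wt0 (lam : ℝ) (d : ℕ) : ℝ := lam / (2 * (2 * d ^ 2 + d))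

lemma wt0_pos {lam : ℝ} (hlam : 0 < lam) (hd : 1 ≤ d) : 0 < wt0 lam d := by
  have : (1 : ℝ) ≤ d := by exact_mod_cast hd
  unfold wt0; positivity

lemma wt0_mul {lam : ℝ} (hd : 1 ≤ d) : wt0 lam d * (2 * d ^ 2 + d) = lam / 2 := by
  have : (1 : ℝ) ≤ d := by exact_mod_cast hd
  unfold wt0; field_simp

set_option maxHeartbeats 1600000 in
/-- Bellman representation of a convex elliptic operator. The common directions `V` include the
eigendirections of a subgradient at `0`, so that this subgradient is a control supported on `V`; its
constant term vanishes because `F 0 = 0`. -/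
lemma exists_adm (hd : 1 ≤ d) {lam Lam : ℝ} {F : Mat d → ℝ} (hlam : 0 < lam) (hlL : lam ≤ Lam)
    (hF : QEll lam Lam F) (hconv : ConvexOn ℝ univ F) :
    ∃ (V : Set (Euc d)) (𝒞 : Set (Ctrl d (J3 d))), Adm F (wt0 lam d) ((d + 1) * Lam) V 𝒞 := by
  have hd' : (1 : ℝ) ≤ d := by exact_mod_cast hd
  have hp := wt0_pos hlam hd
  have hm := wt0_mul (lam := lam) hd
  set a0 := wt0 lam d with ha0
  have ha0l : a0 ≤ lam / 2 := by nlinarith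
  obtain ⟨l0, hl0⟩ := exists_subgrad_mat hconv 0
  have hs0 : (0 : Mat d).IsSymm := Matrix.isSymm_zero
  obtain ⟨μ0, v0, hv0, hμ0, H0⟩ := decomp_with (a0 := a0) baseDir_norm l0
    (fun v => (subgrad_bounds hd hlam hF hs0 hl0 v).1)
    (fun v => (subgrad_bounds hd hlam hF hs0 hl0 v).2) hp.le (by
      have : (Fintype.card (J1 d) : ℝ) = 2 * d ^ 2 := by simp; ring
      rw [this]; nlinarith)
  let ζ : J1 d ⊕ Fin d → Euc d := Sum.elim (baseDir d) v0
  have hζ : ∀ j, ‖ζ j‖ ≤ 1 := by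
    rintro (j | k)
    · exact baseDir_norm j
    · exact (hv0 k).le
  have hcard : a0 * (Fintype.card (J1 d ⊕ Fin d) : ℝ) = lam / 2 := by
    have : (Fintype.card (J1 d ⊕ Fin d) : ℝ) = 2 * d ^ 2 + d := by simp; ring
    rw [this, hm]
  let V : Set (Euc d) := range ζ
  let 𝒞 : Set (Ctrl d (J3 d)) := {κ | (∀ k, ‖κ.ξ k‖ ≤ 1) ∧ (∀ k, 0 ≤ κ.a k) ∧
    (∑ k, κ.a k ≤ (d + 1) * Lam) ∧ (∀ v ∈ V, ∃ k, κ.ξ k = v ∧ a0 ≤ κ.a k) ∧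
    ∀ M : Mat d, M.IsSymm → ∑ k, κ.a k * qf M (κ.ξ k) + κ.c ≤ F M}
  refine ⟨V, 𝒞, ⟨fun κ h => h.1, fun κ h => h.2.1, fun κ h => h.2.2.1, fun κ h => ?_,
    fun κ h => h.2.2.2.1, fun κ h => h.2.2.2.2, fun M hM => ?_, ?_, ?_, ?_, ?_⟩⟩
  · have := h.2.2.2.2 0 hs0
    simpa [qf_zero, hF.zero] using this
  · obtain ⟨l, hl⟩ := exists_subgrad_mat hconv M
    obtain ⟨μ, v, hv, hμ, H⟩ := decomp_with (a0 := a0) hζ l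
      (fun v => (subgrad_bounds hd hlam hF hM hl v).1)
      (fun v => (subgrad_bounds hd hlam hF hM hl v).2) hp.le hcard.le
    have hS : ∀ N : Mat d, N.IsSymm → ∑ k, (Sum.elim (fun _ => a0) μ : J3 d → ℝ) k *
        qf N ((Sum.elim ζ v : J3 d → Euc d) k) = l N := fun N hN => by
      rw [H N hN, Fintype.sum_sum_type]; rfl
    refine ⟨⟨Sum.elim ζ v, Sum.elim (fun _ => a0) μ, F M - l M⟩, ⟨?_, ?_, ?_, ?_, ?_⟩, ?_⟩
    · rintro (j | k)
      · exact hζ j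
      · exact (hv k).le
    · rintro (j | k)
      · exact hp.le
      · show 0 ≤ μ k
        linarith [(hμ k).1]
    · show ∑ k, (Sum.elim (fun _ => a0) μ : J3 d → ℝ) k ≤ _
      rw [Fintype.sum_sum_type]
      simp only [Sum.elim_inl, Sum.elim_inr, Finset.sum_const, nsmul_eq_mul, Finset.card_univ]
      have := Finset.sum_le_sum fun (k : Fin d) (_ : k ∈ Finset.univ) => (hμ k).2
      simp only [Finset.sum_const, nsmul_eq_mul, Finset.card_univ, Fintype.card_fin] at this
      linarith
    · rintro _ ⟨j, rfl⟩
      exact ⟨Sum.inl j, rfl, le_rfl⟩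
    · intro N hN
      show ∑ k, (Sum.elim (fun _ => a0) μ : J3 d → ℝ) k *
        qf N ((Sum.elim ζ v : J3 d → Euc d) k) + (F M - l M) ≤ F N
      rw [hS N hN]
      have := hl N
      rw [map_sub] at this; linarith
    · show ∑ k, (Sum.elim (fun _ => a0) μ : J3 d → ℝ) k *
        qf M ((Sum.elim ζ v : J3 d → Euc d) k) + (F M - l M) = F M
      rw [hS M hM]; ring
  · have hS : ∀ N : Mat d, N.IsSymm →
        ∑ k, (Sum.elim (Sum.elim (fun _ => a0) μ0) (fun _ => 0) : J3 d → ℝ) k *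
        qf N ((Sum.elim ζ (fun _ => 0) : J3 d → Euc d) k) = l0 N := fun N hN => by
      rw [H0 N hN, Fintype.sum_sum_type, Fintype.sum_sum_type]
      simp [ζ]
    refine ⟨⟨Sum.elim ζ (fun _ => 0), Sum.elim (Sum.elim (fun _ => a0) μ0) (fun _ => 0), 0⟩,
      ⟨?_, ?_, ?_, ?_, ?_⟩, rfl, ?_⟩
    · rintro (j | k)
      · exact hζ j
      · simp
    · rintro ((j | k) | k)
      · exact hp.le
      · show 0 ≤ μ0 k
        linarith [(hμ0 k).1]
      · exact le_rfl
    · show ∑ k, (Sum.elim (Sum.elim (fun _ => a0) μ0) (fun _ => 0) : J3 d → ℝ) k ≤ _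
      rw [Fintype.sum_sum_type, Fintype.sum_sum_type]
      simp only [Sum.elim_inl, Sum.elim_inr, Finset.sum_const, nsmul_eq_mul, Finset.card_univ]
      have := Finset.sum_le_sum fun (k : Fin d) (_ : k ∈ Finset.univ) => (hμ0 k).2
      simp only [Finset.sum_const, nsmul_eq_mul, Finset.card_univ, Fintype.card_fin] at this
      have e : (Fintype.card (J1 d) : ℝ) = 2 * d ^ 2 := by simp; ring
      rw [e]
      nlinarith
    · rintro _ ⟨j | k, rfl⟩
      · exact ⟨Sum.inl (Sum.inl j), rfl, le_rfl⟩
      · refine ⟨Sum.inl (Sum.inr k), rfl, ?_⟩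
        show a0 ≤ μ0 k
        linarith [(hμ0 k).1]
    · intro N hN
      show ∑ k, (Sum.elim (Sum.elim (fun _ => a0) μ0) (fun _ => 0) : J3 d → ℝ) k *
        qf N ((Sum.elim ζ (fun _ => 0) : J3 d → Euc d) k) + 0 ≤ F N
      rw [hS N hN]
      have := hl0 N
      rw [hF.zero, sub_zero] at this; linarith
    · rintro (j | k)
      · exact Or.inr ⟨j, rfl⟩
      · exact Or.inl rfl
  · rintro _ ⟨j, rfl⟩; exact hζ j
  · exact fun i j => ⟨Sum.inl (i, j, true), by simp [ζ, baseDir]⟩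
  · exact fun i j => ⟨Sum.inl (i, j, false), by simp [ζ, baseDir]⟩

end control

/-! ### Monotone finite-difference schemes -/

section scheme
open Topology

variable {d : ℕ} {ι : Type} [Fintype ι]

/-- Centred second difference of `h` at `x` along `t • v`. -/
def dd (t : ℝ) (v : Euc d) (h : Euc d → ℝ) (x : Euc d) : ℝ :=
  h (x + t • v) + h (x - t • v) - 2 * h x

/-- The finite-difference operator of a control. -/
def Lk (t : ℝ) (κ : Ctrl d ι) (h : Euc d → ℝ) (x : Euc d) : ℝ :=
  ∑ k, κ.a k * dd t (κ.ξ k) h x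

lemma Lk_add (t : ℝ) (κ : Ctrl d ι) (f g : Euc d → ℝ) (x) :
    Lk t κ (fun y => f y + g y) x = Lk t κ f x + Lk t κ g x := by
  simp only [Lk, dd, ← Finset.sum_add_distrib]
  exact Finset.sum_congr rfl fun k _ => by ring

lemma Lk_sub (t : ℝ) (κ : Ctrl d ι) (f g : Euc d → ℝ) (x) :
    Lk t κ (fun y => f y - g y) x = Lk t κ f x - Lk t κ g x := by
  simp only [Lk, dd, ← Finset.sum_sub_distrib]
  exact Finset.sum_congr rfl fun k _ => by ring

lemma Lk_smul (t : ℝ) (κ : Ctrl d ι) (c : ℝ) (f : Euc d → ℝ) (x) :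
    Lk t κ (fun y => c * f y) x = c * Lk t κ f x := by
  simp only [Lk, dd, Finset.mul_sum]
  exact Finset.sum_congr rfl fun k _ => by ring

lemma Lk_mono {t : ℝ} {κ : Ctrl d ι} (ha : ∀ k, 0 ≤ κ.a k) {f g : Euc d → ℝ} {x : Euc d}
    (h : ∀ k, dd t (κ.ξ k) f x ≤ dd t (κ.ξ k) g x) : Lk t κ f x ≤ Lk t κ g x :=
  Finset.sum_le_sum fun k _ => mul_le_mul_of_nonneg_left (h k) (ha k)

lemma Lk_le {t S1 : ℝ} {κ : Ctrl d ι} (ha : ∀ k, 0 ≤ κ.a k) (hS : ∑ k, κ.a k ≤ S1)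
    {f : Euc d → ℝ} {x : Euc d} {B : ℝ} (hB : 0 ≤ B)
    (h : ∀ k, dd t (κ.ξ k) f x ≤ B) : Lk t κ f x ≤ S1 * B :=
  (Finset.sum_le_sum fun k _ => mul_le_mul_of_nonneg_left (h k) (ha k)).trans <| by
    rw [← Finset.sum_mul]; gcongr

lemma dd_normsq (t : ℝ) (v x : Euc d) : dd t v (fun y => ‖y‖ ^ 2) x = 2 * t ^ 2 * ‖v‖ ^ 2 := by
  have h1 := norm_add_sq_real x (t • v)
  have h2 := norm_sub_sq_real x (t • v)
  have h3 : ‖t • v‖ ^ 2 = t ^ 2 * ‖v‖ ^ 2 := by rw [norm_smul, mul_pow, Real.norm_eq_abs, sq_abs]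
  simp only [dd]; linarith

lemma dd_affine (t : ℝ) (v b x : Euc d) (c : ℝ) : dd t v (fun y => ⟪b, y⟫ + c) x = 0 := by
  simp only [dd, inner_add_right, inner_sub_right]; ring

variable {F : Mat d → ℝ} {a0 S1 : ℝ} {V : Set (Euc d)} {𝒞 : Set (Ctrl d ι)}

lemma Adm.S1_nonneg (hA : Adm F a0 S1 V 𝒞) : 0 ≤ S1 := by
  obtain ⟨κ, hκ, -⟩ := hA.ex_zero
  exact (Finset.sum_nonneg fun k _ => hA.nonneg κ hκ k).trans (hA.sum_le κ hκ)

lemma Adm.single_mem (hA : Adm F a0 S1 V 𝒞) (i : Fin d) : (EuclideanSpace.single i 1 : Euc d) ∈ V := by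
  have := hA.V_add i i
  rwa [← two_smul ℝ, smul_smul, one_div, inv_mul_cancel₀ two_ne_zero, one_smul] at this

/-- Lower bound of an operator with nonnegative second differences by one direction of `V`. -/
lemma Adm.Lk_ge (hA : Adm F a0 S1 V 𝒞) {κ : Ctrl d ι} (hκ : κ ∈ 𝒞) {t : ℝ} {f : Euc d → ℝ} {x : Euc d}
    {v : Euc d} (hv : v ∈ V) (h : ∀ k, 0 ≤ dd t (κ.ξ k) f x) : a0 * dd t v f x ≤ Lk t κ f x := by
  obtain ⟨k, rfl, hk⟩ := hA.dir κ hκ v hv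
  calc a0 * dd t (κ.ξ k) f x ≤ κ.a k * dd t (κ.ξ k) f x := mul_le_mul_of_nonneg_right hk (h k)
    _ ≤ _ := Finset.single_le_sum (f := fun k => κ.a k * dd t (κ.ξ k) f x)
      (fun j _ => mul_nonneg (hA.nonneg κ hκ j) (h j)) (Finset.mem_univ k)

lemma Adm.Lk_normsq (hA : Adm F a0 S1 V 𝒞) (hd : 1 ≤ d) {κ : Ctrl d ι} (hκ : κ ∈ 𝒞) (t : ℝ) (x : Euc d) :
    2 * t ^ 2 * a0 ≤ Lk t κ (fun y => ‖y‖ ^ 2) x := by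
  have := hA.Lk_ge hκ (t := t) (f := fun y => ‖y‖ ^ 2) (x := x) (hA.single_mem ⟨0, hd⟩)
    (fun k => by rw [dd_normsq]; positivity)
  rw [dd_normsq] at this
  simp at this
  linarith

/-- Discrete maximum principle. Functions on the continuum need not attain their supremum, so
the argument is carried out at a near-maximum of the perturbation by `κ' |x|²`. -/
lemma maxprin (hA : Adm F a0 S1 V 𝒞) (hd : 1 ≤ d) (ha0 : 0 < a0) {t : ℝ} (ht : 0 < t)
    {D Ω : Set (Euc d)} {R B C : ℝ} {w : Euc d → ℝ} (hR : ∀ x ∈ D, ‖x‖ ≤ R) (hΩ : Ω ⊆ D)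
    (hnb : ∀ x ∈ Ω, ∀ v : Euc d, ‖v‖ ≤ 1 → x + t • v ∈ D) (hB : ∀ x ∈ D, w x ≤ B)
    (hoff : ∀ x ∈ D, x ∉ Ω → w x ≤ C)
    (hsub : ∀ x ∈ Ω, ∀ ε > 0, ∃ κ ∈ 𝒞, -ε ≤ Lk t κ w x) : ∀ x ∈ D, w x ≤ C := by
  intro z hz
  have key : ∀ κ' > 0, w z ≤ C + κ' * R ^ 2 := by
    intro κ' hκ'
    by_contra! hcon
    set W : Euc d → ℝ := fun x => w x + κ' * ‖x‖ ^ 2 with hW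
    have hbd : BddAbove (W '' D) := by
      refine ⟨B + κ' * R ^ 2, ?_⟩
      rintro _ ⟨x, hx, rfl⟩
      have h1 := hB x hx; have h2 := hR x hx
      show w x + κ' * ‖x‖ ^ 2 ≤ _
      gcongr
    have hle : ∀ x ∈ D, W x ≤ sSup (W '' D) := fun x hx => le_csSup hbd ⟨x, hx, rfl⟩
    have hS : C + κ' * R ^ 2 < sSup (W '' D) := lt_of_lt_of_le
      (lt_of_lt_of_le hcon (le_add_of_nonneg_right (by positivity))) (hle z hz)
    have hS1 := hA.S1_nonneg
    set e := κ' * t ^ 2 * a0 / (4 * (S1 + 1)) with he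
    have he0 : 0 < e := by positivity
    obtain ⟨_, ⟨x, hx, rfl⟩, hxS⟩ := exists_lt_of_lt_csSup (s := W '' D) ⟨_, z, hz, rfl⟩
      (show max (C + κ' * R ^ 2) (sSup (W '' D) - e) < sSup (W '' D) by
        rw [max_lt_iff]; exact ⟨hS, by linarith⟩)
    rw [max_lt_iff] at hxS
    have hxΩ : x ∈ Ω := by
      by_contra hn
      have h1 := hoff x hx hn
      have h2 := hR x hx
      have : W x ≤ C + κ' * R ^ 2 := by show w x + κ' * ‖x‖ ^ 2 ≤ _; gcongr
      linarith [hxS.1]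
    obtain ⟨κ, hκ, hk⟩ := hsub x hxΩ (κ' * t ^ 2 * a0 / 2) (by positivity)
    have h1 : Lk t κ W x ≤ S1 * (2 * e) := by
      refine Lk_le (hA.nonneg κ hκ) (hA.sum_le κ hκ) (by positivity) fun k => ?_
      have e1 := hle _ (hnb x hxΩ _ (hA.norm_le κ hκ k))
      have e2 := hle _ (hnb x hxΩ (-(κ.ξ k)) (by rw [norm_neg]; exact hA.norm_le κ hκ k))
      rw [smul_neg, ← sub_eq_add_neg] at e2
      simp only [dd]; linarith [hxS.2]
    rw [hW, Lk_add, Lk_smul] at h1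
    have h2 := hA.Lk_normsq hd hκ t x
    have h3 : S1 * (2 * e) ≤ κ' * t ^ 2 * a0 / 2 := by
      have : S1 * (2 * e) ≤ (S1 + 1) * (2 * e) := by gcongr; linarith
      refine this.trans_eq ?_
      rw [he]; field_simp; norm_num
    have h4 : κ' * (2 * t ^ 2 * a0) ≤ κ' * Lk t κ (fun y => ‖y‖ ^ 2) x := by gcongr
    have h5 : 0 < κ' * t ^ 2 * a0 := by positivity
    linarith
  refine le_of_forall_pos_le_add fun ε hε => ?_
  have h := key (ε / (R ^ 2 + 1)) (by positivity)
  have : ε / (R ^ 2 + 1) * R ^ 2 ≤ ε := by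
    rw [div_mul_eq_mul_div, div_le_iff₀ (by positivity)]; nlinarith
  linarith

/-- `h` solves the finite-difference Bellman equation of `𝒞` with step `t` in the ball of radius
`r`, with exterior values `g`. -/
structure Scheme (𝒞 : Set (Ctrl d ι)) (t r : ℝ) (g h : Euc d → ℝ) : Prop where
  sup : ∀ x, ‖x‖ < r → ∀ κ ∈ 𝒞, Lk t κ h x + κ.c * t ^ 2 ≤ 0
  near : ∀ x, ‖x‖ < r → ∀ ε > 0, ∃ κ ∈ 𝒞, -ε ≤ Lk t κ h x + κ.c * t ^ 2
  bd : ∀ x, r ≤ ‖x‖ → h x = g x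
  le_one : ∀ x, |h x| ≤ 1

/-- Perron method for the scheme: the supremum of all discrete subsolutions is a solution. -/
lemma exists_scheme (hA : Adm F a0 S1 V 𝒞) {t : ℝ} (ht : 0 < t) (r : ℝ) {g : Euc d → ℝ}
    (hg : ∀ x, |g x| ≤ 1) : ∃ h, Scheme 𝒞 t r g h := by
  classical
  have hS1 := hA.S1_nonneg
  let 𝓦 : Set (Euc d → ℝ) := {w | (∀ x, |w x| ≤ 1) ∧ (∀ x, r ≤ ‖x‖ → w x = g x) ∧
    ∀ x, ‖x‖ < r → ∀ ε > 0, ∃ κ ∈ 𝒞, -ε ≤ Lk t κ w x + κ.c * t ^ 2}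
  let w0 : Euc d → ℝ := fun x => if ‖x‖ < r then -1 else g x
  have hw0 : w0 ∈ 𝓦 := by
    have hb : ∀ x, |w0 x| ≤ 1 := fun x => by
      simp only [w0]; split_ifs <;> simp [hg]
    refine ⟨hb, fun x hx => if_neg (not_lt.2 hx), fun x hx ε hε => ?_⟩
    obtain ⟨κ, hκ, hc, -⟩ := hA.ex_zero
    refine ⟨κ, hκ, ?_⟩
    rw [hc]
    have : 0 ≤ Lk t κ w0 x := Finset.sum_nonneg fun k _ => mul_nonneg (hA.nonneg κ hκ k) (by
      have h1 := (abs_le.1 (hb (x + t • κ.ξ k))).1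
      have h2 := (abs_le.1 (hb (x - t • κ.ξ k))).1
      have h3 : w0 x = -1 := if_pos hx
      simp only [dd, h3]; linarith)
    linarith
  let h : Euc d → ℝ := fun x => sSup ((fun w : Euc d → ℝ => w x) '' 𝓦)
  have hbdd : ∀ x, BddAbove ((fun w : Euc d → ℝ => w x) '' 𝓦) := fun x => by
    refine ⟨1, ?_⟩
    rintro _ ⟨w, hw, rfl⟩
    exact (abs_le.1 (hw.1 x)).2
  have hle : ∀ w ∈ 𝓦, ∀ x, w x ≤ h x := fun w hw x => le_csSup (hbdd x) ⟨w, hw, rfl⟩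
  have hne : ∀ x, ((fun w : Euc d → ℝ => w x) '' 𝓦).Nonempty := fun x => ⟨_, w0, hw0, rfl⟩
  have hh : h ∈ 𝓦 := by
    refine ⟨fun x => abs_le.2 ⟨?_, ?_⟩, fun x hx => ?_, fun x hx ε hε => ?_⟩
    · exact ((abs_le.1 (hw0.1 x)).1).trans (hle w0 hw0 x)
    · refine csSup_le (hne x) ?_
      rintro _ ⟨w, hw, rfl⟩
      exact (abs_le.1 (hw.1 x)).2
    · refine le_antisymm (csSup_le (hne x) ?_) ?_
      · rintro _ ⟨w, hw, rfl⟩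
        exact (hw.2.1 x hx).le
      · rw [← hw0.2.1 x hx]; exact hle w0 hw0 x
    · set e := ε / (2 * S1 + 1) with he
      have he0 : 0 < e := by positivity
      obtain ⟨_, ⟨w, hw, rfl⟩, hwx⟩ := exists_lt_of_lt_csSup (hne x) (sub_lt_self (h x) he0)
      obtain ⟨κ, hκ, hk⟩ := hw.2.2 x hx e he0
      refine ⟨κ, hκ, ?_⟩
      have h1 : Lk t κ (fun y => w y - h y) x ≤ S1 * (2 * e) :=
        Lk_le (hA.nonneg κ hκ) (hA.sum_le κ hκ) (by positivity) fun k => by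
          have e1 := hle w hw (x + t • κ.ξ k)
          have e2 := hle w hw (x - t • κ.ξ k)
          simp only [dd]; simp only at hwx; linarith
      rw [Lk_sub] at h1
      have : (2 * S1 + 1) * e = ε := by rw [he]; field_simp
      linarith
  refine ⟨h, ⟨fun x hx κ hκ => ?_, hh.2.2, hh.2.1, hh.1⟩⟩
  by_contra! hm
  have hc := hA.c_le κ hκ
  have hx1 : h x < 1 := by
    by_contra! h1
    have : Lk t κ h x ≤ S1 * 0 := Lk_le (hA.nonneg κ hκ) (hA.sum_le κ hκ) le_rfl fun k => by
      have e1 := (abs_le.1 (hh.1 (x + t • κ.ξ k))).2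
      have e2 := (abs_le.1 (hh.1 (x - t • κ.ξ k))).2
      simp only [dd]; linarith
    nlinarith [sq_nonneg t]
  set m := Lk t κ h x + κ.c * t ^ 2 with hmdef
  set s := min (m / (2 * S1 + 1)) (1 - h x) with hs
  have hs0 : 0 < s := lt_min (by positivity) (by linarith)
  have hs1 : s * (2 * S1 + 1) ≤ m := by
    rw [← le_div_iff₀ (by positivity)]; exact min_le_left _ _
  have hs2 : s ≤ 1 - h x := min_le_right _ _
  let h' : Euc d → ℝ := fun y => h y + if y = x then s else 0
  have hxx : h' x = h x + s := by simp [h']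
  have hxy : ∀ y, y ≠ x → h' y = h y := fun y hy => by simp [h', hy]
  have hge : ∀ y, h y ≤ h' y := fun y => by
    simp only [h']; split_ifs <;> linarith
  have hh' : h' ∈ 𝓦 := by
    refine ⟨fun y => ?_, fun y hy => ?_, fun y hy ε hε => ?_⟩
    · by_cases hyx : y = x
      · subst hyx
        rw [hxx]
        exact abs_le.2 ⟨by linarith [(abs_le.1 (hh.1 y)).1], by linarith⟩
      · rw [hxy y hyx]; exact hh.1 y
    · rw [hxy y (by rintro rfl; linarith)]; exact hh.2.1 y hy
    · by_cases hyx : y = x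
      · subst hyx
        refine ⟨κ, hκ, ?_⟩
        have h1 : Lk t κ (fun z => h z - h' z) y ≤ S1 * (2 * s) :=
          Lk_le (hA.nonneg κ hκ) (hA.sum_le κ hκ) (by positivity) fun k => by
            have e1 := hge (y + t • κ.ξ k)
            have e2 := hge (y - t • κ.ξ k)
            simp only [dd, hxx]; linarith
        rw [Lk_sub] at h1
        nlinarith
      · obtain ⟨κ', hκ', hk'⟩ := hh.2.2 y hy ε hε
        refine ⟨κ', hκ', hk'.trans ?_⟩
        have : Lk t κ' h y ≤ Lk t κ' h' y := Lk_mono (hA.nonneg κ' hκ') fun k => by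
          have e1 := hge (y + t • κ'.ξ k)
          have e2 := hge (y - t • κ'.ξ k)
          simp only [dd, hxy y hyx]; linarith
        linarith
  have := hle h' hh' x
  linarith

end scheme

/-! ### Modulus of continuity of discrete solutions -/

section modulus
open Topology

variable {d : ℕ} {ι : Type} [Fintype ι]
variable {F : Mat d → ℝ} {a0 S1 : ℝ} {V : Set (Euc d)} {𝒞 : Set (Ctrl d ι)}

lemma Scheme.sub_near (hA : Adm F a0 S1 V 𝒞) {t r : ℝ} {g h : Euc d → ℝ} (hs : Scheme 𝒞 t r g h)
    {x : Euc d} (hx : ‖x‖ < r) {ε : ℝ} (hε : 0 < ε) : ∃ κ ∈ 𝒞, -ε ≤ Lk t κ h x := by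
  obtain ⟨κ, hκ, h1⟩ := hs.near x hx ε hε
  exact ⟨κ, hκ, by nlinarith [hA.c_le κ hκ, sq_nonneg t]⟩

lemma Scheme.super_near (hA : Adm F a0 S1 V 𝒞) {t r : ℝ} {g h : Euc d → ℝ} (hs : Scheme 𝒞 t r g h)
    {x : Euc d} (hx : ‖x‖ < r) {ε : ℝ} (hε : 0 < ε) : ∃ κ ∈ 𝒞, -ε ≤ Lk t κ (fun y => - h y) x := by
  obtain ⟨κ, hκ, hc, -⟩ := hA.ex_zero
  refine ⟨κ, hκ, ?_⟩
  have h1 := hs.sup x hx κ hκ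
  have h2 := Lk_smul t κ (-1) h x
  simp only [neg_mul, one_mul] at h2
  rw [h2]; rw [hc] at h1; linarith

lemma Lk_sub_affine (t : ℝ) (κ : Ctrl d ι) (w : Euc d → ℝ) (b : Euc d) (c : ℝ) (x : Euc d) :
    Lk t κ (fun y => w y - (⟪b, y⟫ + c)) x = Lk t κ w x := by
  rw [Lk_sub]
  have : Lk t κ (fun y => ⟪b, y⟫ + c) x = 0 := by simp [Lk, dd_affine]
  rw [this, sub_zero]

/-- Upper barrier at a boundary point: an affine function which on the ball lies above the parabola
`κ' + Lg² / (4 κ') |y - z|²`, hence above the Lipschitz data. -/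
lemma barrier_aux (hA : Adm F a0 S1 V 𝒞) (hd : 1 ≤ d) (ha0 : 0 < a0) {t r Lg : ℝ} (ht : 0 < t)
    {g w : Euc d → ℝ} (hg : ∀ x y, |g x - g y| ≤ Lg * ‖x - y‖)
    (hsub : ∀ x, ‖x‖ < r → ∀ ε > 0, ∃ κ ∈ 𝒞, -ε ≤ Lk t κ w x)
    (hbd : ∀ x, r ≤ ‖x‖ → w x = g x) (hw1 : ∀ x, |w x| ≤ 1)
    {z x : Euc d} (hz : ‖z‖ = r) (hx : ‖x‖ ≤ r + t) {κ' : ℝ} (hκ' : 0 < κ') :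
    w x - g z ≤ κ' + Lg ^ 2 / (4 * κ') * (2 * (r ^ 2 - ⟪x, z⟫) + 2 * r * t + t ^ 2) := by
  set A := Lg ^ 2 / (4 * κ') with hAdef
  have hA0 : 0 ≤ A := by positivity
  have hQ : ∀ y : Euc d, ‖y‖ ≤ r + t →
      ‖y - z‖ ^ 2 ≤ 2 * (r ^ 2 - ⟪y, z⟫) + 2 * r * t + t ^ 2 := fun y hy => by
    rw [norm_sub_sq_real, hz]
    nlinarith [norm_nonneg y]
  let b : Euc d := (-(2 * A)) • z
  let c : ℝ := κ' + A * (2 * r ^ 2 + 2 * r * t + t ^ 2)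
  have hbc : ∀ y : Euc d, ⟪b, y⟫ + c =
      κ' + A * (2 * (r ^ 2 - ⟪y, z⟫) + 2 * r * t + t ^ 2) := fun y => by
    simp only [b, c, inner_smul_left, real_inner_comm y z]; simp; ring
  have := maxprin hA hd ha0 ht (D := closedBall 0 (r + t)) (Ω := ball 0 r) (R := r + t)
    (B := 1) (C := g z) (w := fun y => w y - (⟪b, y⟫ + c)) (fun x hx => by simpa using hx)
    (fun y hy => by
      simp only [mem_ball_zero_iff, mem_closedBall_zero_iff] at *; linarith)
    (fun y hy v hv => by
      simp only [mem_ball_zero_iff, mem_closedBall_zero_iff] at *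
      refine (norm_add_le _ _).trans ?_
      rw [norm_smul, Real.norm_of_nonneg ht.le]
      nlinarith)
    (fun y hy => by
      simp only [mem_closedBall_zero_iff] at hy
      rw [hbc]
      have h1 := hQ y hy
      have h2 := (abs_le.1 (hw1 y)).2
      have h3 : 0 ≤ A * (2 * (r ^ 2 - ⟪y, z⟫) + 2 * r * t + t ^ 2) :=
        mul_nonneg hA0 ((sq_nonneg _).trans h1)
      linarith)
    (fun y hy hyn => by
      simp only [mem_closedBall_zero_iff, mem_ball_zero_iff, not_lt] at hy hyn
      rw [hbc, hbd y hyn]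
      have h1 := mul_le_mul_of_nonneg_left (hQ y hy) hA0
      have h2 := (le_abs_self _).trans (hg y z)
      have h3 : Lg * ‖y - z‖ ≤ κ' + A * ‖y - z‖ ^ 2 := by
        have e : κ' + A * ‖y - z‖ ^ 2 - Lg * ‖y - z‖ = (2 * κ' - Lg * ‖y - z‖) ^ 2 / (4 * κ') := by
          rw [hAdef]; field_simp; ring
        have : 0 ≤ (2 * κ' - Lg * ‖y - z‖) ^ 2 / (4 * κ') := by positivity
        linarith
      linarith)
    (fun y hy ε hε => by
      obtain ⟨κ, hκ, hk⟩ := hsub y (by simpa using hy) ε hε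
      exact ⟨κ, hκ, by rw [Lk_sub_affine]; exact hk⟩) x (by simpa using hx)
  rw [hbc] at this
  linarith

lemma barrier (hA : Adm F a0 S1 V 𝒞) (hd : 1 ≤ d) (ha0 : 0 < a0) {t r Lg : ℝ} (ht : 0 < t)
    {g h : Euc d → ℝ} (hg : ∀ x y, |g x - g y| ≤ Lg * ‖x - y‖) (hs : Scheme 𝒞 t r g h)
    {z x : Euc d} (hz : ‖z‖ = r) (hx : ‖x‖ ≤ r + t) {κ' : ℝ} (hκ' : 0 < κ') :
    |h x - g z| ≤ κ' + Lg ^ 2 / (4 * κ') * (2 * (r ^ 2 - ⟪x, z⟫) + 2 * r * t + t ^ 2) := by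
  have h1 := barrier_aux hA hd ha0 ht hg (fun x hx ε hε => hs.sub_near hA hx hε) hs.bd hs.le_one
    hz hx hκ'
  have h2 := barrier_aux hA hd ha0 ht (g := fun x => - g x) (w := fun x => - h x) (Lg := Lg)
    (fun x y => by rw [neg_sub_neg, abs_sub_comm]; exact hg x y)
    (fun x hx ε hε => hs.super_near hA hx hε) (fun x hx => by rw [hs.bd x hx])
    (fun x => by rw [abs_neg]; exact hs.le_one x)
    hz hx hκ'
  exact abs_le.2 ⟨by linarith, h1⟩

lemma Lk_shift (t : ℝ) (κ : Ctrl d ι) (h : Euc d → ℝ) (y x : Euc d) :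
    Lk t κ (fun z => h (z + y)) x = Lk t κ h (x + y) := by
  simp only [Lk, dd]
  refine Finset.sum_congr rfl fun k _ => ?_
  rw [add_right_comm, sub_add_eq_add_sub]

/-- Modulus of continuity when one of the points lies in the boundary layer. -/
lemma modulus_bd (hA : Adm F a0 S1 V 𝒞) (hd : 1 ≤ d) (ha0 : 0 < a0) {t r Lg : ℝ} (ht : 0 < t)
    (hr : 0 < r) (hLg : 0 ≤ Lg)
    {g h : Euc d → ℝ} (hg : ∀ x y, |g x - g y| ≤ Lg * ‖x - y‖) (hs : Scheme 𝒞 t r g h)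
    {x x' : Euc d} (hx0 : r ≤ ‖x‖) (hx : ‖x‖ ≤ r + t) (hx' : ‖x'‖ ≤ r + t) {κ' : ℝ} (hκ' : 0 < κ') :
    |h x - h x'| ≤ Lg * t + κ' + Lg ^ 2 / (4 * κ') * (2 * r * ‖x - x'‖ + 2 * r * t + t ^ 2) := by
  have hxp : 0 < ‖x‖ := by linarith
  set z : Euc d := (r / ‖x‖) • x with hz
  have hzr : ‖z‖ = r := by
    rw [hz, norm_smul, Real.norm_of_nonneg (by positivity)]; field_simp
  have h1 := barrier hA hd ha0 ht hg hs hzr hx' hκ'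
  have hxz : ‖x - z‖ ≤ t := by
    have : x - z = (1 - r / ‖x‖) • x := by rw [hz, sub_smul, one_smul]
    have h0 : 0 ≤ 1 - r / ‖x‖ := by
      rw [sub_nonneg, div_le_one hxp]; exact hx0
    rw [this, norm_smul, Real.norm_of_nonneg h0, sub_mul, div_mul_cancel₀ _ hxp.ne']
    linarith
  have h2 : |h x - g z| ≤ Lg * t := by
    rw [hs.bd x hx0]
    exact (hg x z).trans (by gcongr)
  have h3 : r ^ 2 - ⟪x', z⟫ ≤ r * ‖x - x'‖ := by
    have e1 : ⟪x, z⟫ = r * ‖x‖ := by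
      rw [hz, inner_smul_right, real_inner_self_eq_norm_sq]; field_simp
    have e2 : ⟪x - x', z⟫ ≤ ‖x - x'‖ * r := by
      rw [← hzr]; exact real_inner_le_norm _ _
    rw [inner_sub_left, e1] at e2
    nlinarith
  have h4 : Lg ^ 2 / (4 * κ') * (2 * (r ^ 2 - ⟪x', z⟫) + 2 * r * t + t ^ 2) ≤
      Lg ^ 2 / (4 * κ') * (2 * r * ‖x - x'‖ + 2 * r * t + t ^ 2) := by
    refine mul_le_mul_of_nonneg_left ?_ (by positivity)
    linarith
  have h5 := abs_sub_le (h x) (g z) (h x')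
  rw [abs_sub_comm (g z)] at h5
  linarith

/-- The modulus of continuity at the boundary propagates inside by the maximum principle applied to
`h - h (· + y)`, a subsolution of the difference of two Bellman equations. -/
lemma modulus_est (hA : Adm F a0 S1 V 𝒞) (hd : 1 ≤ d) (ha0 : 0 < a0) {t r Lg : ℝ} (ht : 0 < t)
    (hr : 0 < r) (hLg : 0 ≤ Lg)
    {g h : Euc d → ℝ} (hg : ∀ x y, |g x - g y| ≤ Lg * ‖x - y‖) (hs : Scheme 𝒞 t r g h)
    {x x' : Euc d} (hx : ‖x‖ ≤ r + t) (hx' : ‖x'‖ ≤ r + t) {κ' : ℝ} (hκ' : 0 < κ') :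
    h x - h x' ≤ Lg * t + κ' + Lg ^ 2 / (4 * κ') * (2 * r * ‖x - x'‖ + 2 * r * t + t ^ 2) := by
  set y := x' - x with hy
  have := maxprin hA hd ha0 ht (D := {z | ‖z‖ ≤ r + t ∧ ‖z + y‖ ≤ r + t})
    (Ω := {z | ‖z‖ < r ∧ ‖z + y‖ < r}) (R := r + t) (w := fun z => h z - h (z + y)) (B := 2)
    (C := Lg * t + κ' + Lg ^ 2 / (4 * κ') * (2 * r * ‖x - x'‖ + 2 * r * t + t ^ 2))
    (fun z hz => hz.1) (fun z hz => ⟨by linarith [hz.1], by linarith [hz.2]⟩)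
    (fun z hz v hv => by
      have e : ‖t • v‖ ≤ t := by
        rw [norm_smul, Real.norm_of_nonneg ht.le]; nlinarith
      refine ⟨(norm_add_le _ _).trans (by linarith [hz.1]), ?_⟩
      rw [add_right_comm]
      exact (norm_add_le _ _).trans (by linarith [hz.2]))
    (fun z _ => by
      have h1 := abs_le.1 (hs.le_one z); have h2 := abs_le.1 (hs.le_one (z + y))
      linarith [h1.2, h2.1])
    (fun z hz hzn => by
      have e1 : ‖z - (z + y)‖ = ‖x - x'‖ := by
        rw [sub_add_cancel_left, hy, neg_sub]
      by_cases h1 : r ≤ ‖z‖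
      · have := modulus_bd hA hd ha0 ht hr hLg hg hs h1 hz.1 hz.2 hκ'
        rw [e1] at this
        exact (le_abs_self _).trans this
      · have h2 : r ≤ ‖z + y‖ := by
          by_contra h2; exact hzn ⟨not_le.1 h1, not_le.1 h2⟩
        have := modulus_bd hA hd ha0 ht hr hLg hg hs h2 hz.2 hz.1 hκ'
        rw [norm_sub_rev, e1, abs_sub_comm] at this
        exact (le_abs_self _).trans this)
    (fun z hz ε hε => by
      obtain ⟨κ, hκ, hk⟩ := hs.near z hz.1 ε hε
      refine ⟨κ, hκ, ?_⟩
      have h2 := hs.sup _ hz.2 κ hκ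
      rw [Lk_sub, Lk_shift]
      linarith) x ⟨hx, by rw [hy, add_sub_cancel]; exact hx'⟩
  simpa [hy] using this

end modulus

/-! ### Discrete Bernstein estimate -/

section bernstein
open Topology

variable {d : ℕ} {ι : Type} [Fintype ι]
variable {F : Mat d → ℝ} {a0 S1 : ℝ} {V : Set (Euc d)} {𝒞 : Set (Ctrl d ι)}

/-- One-sided algebraic inequality behind the cut-off computation. -/
lemma cutoff_one {η η' v v' : ℝ} (hη : 0 < η) (h : |η' - η| ≤ η / 2) :
    2 * η ^ 2 * v * (v' - v) + v ^ 2 * (2 * η * (η' - η) - 12 * (η' - η) ^ 2) ≤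
      (η' * v') ^ 2 - (η * v) ^ 2 := by
  obtain ⟨h1, h2⟩ := abs_le.1 h
  have hη' : 0 < η' := by linarith
  set e := η' - η with he
  have hη'e : η' = η + e := by rw [he]; ring
  -- Completing the square in the second variable.
  have k1 : -(η ^ 4 * v ^ 2 / η' ^ 2) ≤ (η' * v') ^ 2 - 2 * η ^ 2 * v * v' := by
    have : (η' * v') ^ 2 - 2 * η ^ 2 * v * v' + η ^ 4 * v ^ 2 / η' ^ 2 =
        (η' * v' - η ^ 2 * v / η') ^ 2 := by field_simp; ring
    nlinarith [sq_nonneg (η' * v' - η ^ 2 * v / η')]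
  have k2 : η ^ 4 / η' ^ 2 ≤ η ^ 2 - (2 * η * e - 12 * e ^ 2) := by
    rw [div_le_iff₀ (by positivity), hη'e]
    have : (η ^ 2 - (2 * η * e - 12 * e ^ 2)) * (η + e) ^ 2 - η ^ 4 =
        e ^ 2 * (9 * η ^ 2 + 22 * η * e + 12 * e ^ 2) := by ring
    have : 0 ≤ 9 * η ^ 2 + 22 * η * e + 12 * e ^ 2 := by nlinarith
    nlinarith [sq_nonneg e]
  have k3 : η ^ 4 * v ^ 2 / η' ^ 2 ≤ (η ^ 2 - (2 * η * e - 12 * e ^ 2)) * v ^ 2 := by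
    have : η ^ 4 * v ^ 2 / η' ^ 2 = η ^ 4 / η' ^ 2 * v ^ 2 := by ring
    rw [this]; gcongr
  nlinarith

/-- The cut-off `(ρ² - |x|²)⁺`. -/
def cut (ρ : ℝ) (x : Euc d) : ℝ := max 0 (ρ ^ 2 - ‖x‖ ^ 2)

set_option maxHeartbeats 1600000 in
/-- Up to `97 t² v²`, the second difference of `(cut v)²` is at least that of the product
rule; the cut-off is at least `4 t` here, so neighbouring values of it are comparable. -/
lemma cut_dd {ρ t : ℝ} (hρ0 : 0 ≤ ρ) (hρ : ρ ≤ 1 / 2) (ht : 0 < t) (ht1 : t ≤ 1) {v : Euc d → ℝ}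
    {x ξ : Euc d} (hξ : ‖ξ‖ ≤ 1) (hx : 4 * t ≤ ρ ^ 2 - ‖x‖ ^ 2) :
    2 * (cut ρ x) ^ 2 * v x * dd t ξ v x - 97 * t ^ 2 * v x ^ 2 ≤
      dd t ξ (fun y => (cut ρ y * v y) ^ 2) x := by
  set η := ρ ^ 2 - ‖x‖ ^ 2 with hη
  have hη0 : 0 < η := by linarith
  have hη1 : η ≤ 1 / 4 := by nlinarith [sq_nonneg ‖x‖]
  have hcx : cut ρ x = η := max_eq_right hη0.le
  have hxρ : ‖x‖ ≤ 1 / 2 := by nlinarith [norm_nonneg x]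
  have hin : |⟪x, ξ⟫| ≤ 1 / 2 := (abs_real_inner_le_norm _ _).trans (by nlinarith [norm_nonneg ξ, norm_nonneg x])
  set s := ⟪x, ξ⟫ with hs
  have hξ2 : ‖ξ‖ ^ 2 ≤ 1 := by nlinarith [norm_nonneg ξ]
  have hts : ‖t • ξ‖ ^ 2 = t ^ 2 * ‖ξ‖ ^ 2 := by rw [norm_smul, mul_pow, Real.norm_eq_abs, sq_abs]
  have e1 : ρ ^ 2 - ‖x + t • ξ‖ ^ 2 - η = -(2 * t * s) - t ^ 2 * ‖ξ‖ ^ 2 := by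
    rw [norm_add_sq_real, inner_smul_right, hts]; ring
  have e2 : ρ ^ 2 - ‖x - t • ξ‖ ^ 2 - η = (2 * t * s) - t ^ 2 * ‖ξ‖ ^ 2 := by
    rw [norm_sub_sq_real, inner_smul_right, hts]; ring
  have hb : |2 * t * s| ≤ t := by
    rw [abs_mul, abs_of_pos (by positivity : 0 < 2 * t)]; nlinarith
  have hb2 : t ^ 2 * ‖ξ‖ ^ 2 ≤ t := by nlinarith [sq_nonneg ‖ξ‖]
  have hb3 : 0 ≤ t ^ 2 * ‖ξ‖ ^ 2 := by positivity
  obtain ⟨hb4, hb5⟩ := abs_le.1 hb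
  have c1 : cut ρ (x + t • ξ) = ρ ^ 2 - ‖x + t • ξ‖ ^ 2 := max_eq_right (by linarith)
  have c2 : cut ρ (x - t • ξ) = ρ ^ 2 - ‖x - t • ξ‖ ^ 2 := max_eq_right (by linarith)
  have k1 := cutoff_one (η := η) (η' := cut ρ (x + t • ξ)) (v := v x) (v' := v (x + t • ξ)) hη0
    (by rw [c1, e1, abs_le]; constructor <;> linarith)
  have k2 := cutoff_one (η := η) (η' := cut ρ (x - t • ξ)) (v := v x) (v' := v (x - t • ξ)) hη0
    (by rw [c2, e2, abs_le]; constructor <;> linarith)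
  have f1 : cut ρ (x + t • ξ) - η = -(2 * t * s) - t ^ 2 * ‖ξ‖ ^ 2 := by rw [c1, e1]
  have f2 : cut ρ (x - t • ξ) - η = (2 * t * s) - t ^ 2 * ‖ξ‖ ^ 2 := by rw [c2, e2]
  rw [f1] at k1; rw [f2] at k2
  have q1 : (-(2 * t * s) - t ^ 2 * ‖ξ‖ ^ 2) ^ 2 ≤ 4 * t ^ 2 := by
    have : (2 * t) ^ 2 = 4 * t ^ 2 := by ring
    rw [← this]; apply sq_le_sq'<;> linarith
  have q2 : ((2 * t * s) - t ^ 2 * ‖ξ‖ ^ 2) ^ 2 ≤ 4 * t ^ 2 := by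
    have : (2 * t) ^ 2 = 4 * t ^ 2 := by ring
    rw [← this]; apply sq_le_sq'<;> linarith
  have q3 : η * (t ^ 2 * ‖ξ‖ ^ 2) ≤ t ^ 2 / 4 := by
    have h1 : t ^ 2 * ‖ξ‖ ^ 2 ≤ t ^ 2 := mul_le_of_le_one_right (sq_nonneg t) hξ2
    have h2 := mul_le_mul hη1 h1 hb3 (by norm_num)
    linarith
  have q4 : v x ^ 2 * (-(97 * t ^ 2)) ≤ v x ^ 2 *
      ((2 * η * (-(2 * t * s) - t ^ 2 * ‖ξ‖ ^ 2) - 12 * (-(2 * t * s) - t ^ 2 * ‖ξ‖ ^ 2) ^ 2) +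
      (2 * η * ((2 * t * s) - t ^ 2 * ‖ξ‖ ^ 2) - 12 * ((2 * t * s) - t ^ 2 * ‖ξ‖ ^ 2) ^ 2)) := by
    refine mul_le_mul_of_nonneg_left ?_ (sq_nonneg _)
    linarith
  simp only [dd, hcx]
  linarith

set_option maxHeartbeats 1600000 in
/-- Discrete Bernstein estimate: the maximum principle for `(cut v)² + B G`, where `B` is chosen so
that `L G ≥ a0 t² v²` compensates the error produced by the cut-off. -/
lemma bernstein_est (hA : Adm F a0 S1 V 𝒞) (hd : 1 ≤ d) (ha0 : 0 < a0) {t ρ K Gm : ℝ} (ht : 0 < t)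
    (ht1 : t ≤ 1) (hρ0 : 0 ≤ ρ) (hρ : ρ ≤ 1 / 2) {v G : Euc d → ℝ} (hv0 : ∀ x, 0 ≤ v x)
    (hvK : ∀ x, ‖x‖ ≤ ρ + t → t * v x ≤ K) (hG0 : ∀ x, 0 ≤ G x)
    (hG1 : ∀ x, ‖x‖ ≤ ρ + t → G x ≤ Gm)
    (H : ∀ x, ‖x‖ < ρ → ∀ ε > 0, ∃ κ ∈ 𝒞, (0 < v x → -ε ≤ Lk t κ v x) ∧
      a0 * t ^ 2 * v x ^ 2 - ε ≤ Lk t κ G x) {x : Euc d} (hx : ‖x‖ ≤ ρ) :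
    ((ρ ^ 2 - ‖x‖ ^ 2) * v x) ^ 2 ≤ 16 * K ^ 2 + 97 * S1 / a0 * Gm := by
  have hS1 := hA.S1_nonneg
  set B := 97 * S1 / a0 with hB
  have hB0 : 0 ≤ B := by positivity
  have hK0 : 0 ≤ K := le_trans (mul_nonneg ht.le (hv0 0)) (hvK 0 (by simp; positivity))
  have hcut0 : ∀ y : Euc d, 0 ≤ cut ρ y := fun y => le_max_left _ _
  have hcut1 : ∀ y : Euc d, cut ρ y ≤ 1 := fun y => max_le zero_le_one (by nlinarith [sq_nonneg ‖y‖])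
  have hv1 : ∀ y : Euc d, ‖y‖ ≤ ρ + t → v y ≤ K / t := fun y hy => by
    rw [le_div_iff₀ ht]; linarith [hvK y hy]
  have := maxprin hA hd ha0 ht (D := closedBall 0 (ρ + t)) (Ω := {y | 4 * t ≤ ρ ^ 2 - ‖y‖ ^ 2})
    (R := ρ + t) (B := (K / t) ^ 2 + B * Gm) (C := 16 * K ^ 2 + B * Gm)
    (w := fun y => (cut ρ y * v y) ^ 2 + B * G y)
    (fun y hy => by simpa using hy)
    (fun y hy => by
      simp only [mem_closedBall_zero_iff]
      simp only [mem_ofPred_eq] at hy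
      have : ‖y‖ ^ 2 ≤ ρ ^ 2 := by linarith
      linarith [abs_le_of_sq_le_sq' this hρ0 |>.2])
    (fun y hy w hw => by
      simp only [mem_closedBall_zero_iff]
      simp only [mem_ofPred_eq] at hy
      have : ‖y‖ ^ 2 ≤ ρ ^ 2 := by linarith
      have h1 := abs_le_of_sq_le_sq' this hρ0 |>.2
      refine (norm_add_le _ _).trans ?_
      rw [norm_smul, Real.norm_of_nonneg ht.le]; nlinarith)
    (fun y hy => by
      simp only [mem_closedBall_zero_iff] at hy
      have h1 : cut ρ y * v y ≤ 1 * (K / t) :=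
        mul_le_mul (hcut1 y) (hv1 y hy) (hv0 y) zero_le_one
      rw [one_mul] at h1
      have h2 := hG1 y hy
      have h3 := mul_nonneg (hcut0 y) (hv0 y)
      show (cut ρ y * v y) ^ 2 + B * G y ≤ _
      gcongr)
    (fun y hy hn => by
      simp only [mem_closedBall_zero_iff] at hy
      simp only [mem_ofPred_eq, not_le] at hn
      have h1 : cut ρ y * v y ≤ 4 * t * (K / t) :=
        mul_le_mul (max_le (by positivity) hn.le) (hv1 y hy) (hv0 y) (by positivity)
      have h4 : 4 * t * (K / t) = 4 * K := by field_simp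
      rw [h4] at h1
      have h2 := hG1 y hy
      have h3 := mul_nonneg (hcut0 y) (hv0 y)
      have h5 : 16 * K ^ 2 = (4 * K) ^ 2 := by ring
      show (cut ρ y * v y) ^ 2 + B * G y ≤ _
      rw [h5]
      gcongr)
    (fun y hy ε hε => by
      simp only [mem_ofPred_eq] at hy
      have hy2 : ‖y‖ ^ 2 < ρ ^ 2 := by linarith
      have hyρ := abs_lt_of_sq_lt_sq' hy2 hρ0 |>.2
      have hKt : 0 ≤ K / t := by positivity
      set ε' := ε / (2 * (K / t) + B + 1) with hε'
      have hε'0 : 0 < ε' := by positivity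
      have hε'e : ε' * (2 * (K / t) + B + 1) = ε := by rw [hε']; field_simp
      obtain ⟨κ, hκ, h1, h2⟩ := H y hyρ ε' hε'0
      refine ⟨κ, hκ, ?_⟩
      rw [Lk_add, Lk_smul]
      have h3 : 2 * (cut ρ y) ^ 2 * v y * Lk t κ v y - 97 * t ^ 2 * v y ^ 2 * S1 ≤
          Lk t κ (fun y => (cut ρ y * v y) ^ 2) y := by
        have e1 : ∑ k, κ.a k * (2 * (cut ρ y) ^ 2 * v y * dd t (κ.ξ k) v y - 97 * t ^ 2 * v y ^ 2) =
            2 * (cut ρ y) ^ 2 * v y * Lk t κ v y - 97 * t ^ 2 * v y ^ 2 * ∑ k, κ.a k := by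
          simp only [Lk, Finset.mul_sum, ← Finset.sum_sub_distrib]
          exact Finset.sum_congr rfl fun k _ => by ring
        have e2 : 97 * t ^ 2 * v y ^ 2 * ∑ k, κ.a k ≤ 97 * t ^ 2 * v y ^ 2 * S1 := by
          gcongr; exact hA.sum_le κ hκ
        have e3 : ∑ k, κ.a k * (2 * (cut ρ y) ^ 2 * v y * dd t (κ.ξ k) v y - 97 * t ^ 2 * v y ^ 2) ≤
            Lk t κ (fun y => (cut ρ y * v y) ^ 2) y :=
          Finset.sum_le_sum fun k _ => mul_le_mul_of_nonneg_left
            (cut_dd hρ0 hρ ht ht1 (hA.norm_le κ hκ k) hy) (hA.nonneg κ hκ k)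
        linarith
      have h4 : -(2 * (K / t) * ε') ≤ 2 * (cut ρ y) ^ 2 * v y * Lk t κ v y := by
        rcases (hv0 y).eq_or_lt with h0 | h0
        · rw [← h0]; simp; positivity
        · have e1 := h1 h0
          have e2 : 2 * (cut ρ y) ^ 2 * v y ≤ 2 * (K / t) := by
            have a1 : (cut ρ y) ^ 2 ≤ 1 := pow_le_one₀ (hcut0 y) (hcut1 y)
            have a2 := hv1 y (by linarith)
            nlinarith
          have e3 : 0 ≤ 2 * (cut ρ y) ^ 2 * v y := by positivity
          nlinarith
      have h5 : B * (a0 * t ^ 2 * v y ^ 2 - ε') ≤ B * Lk t κ G y := by gcongr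
      have h6 : B * (a0 * t ^ 2 * v y ^ 2) = 97 * t ^ 2 * v y ^ 2 * S1 := by
        rw [hB]; field_simp
      nlinarith) x (by simp only [mem_closedBall_zero_iff]; linarith)
  have hc : cut ρ x = ρ ^ 2 - ‖x‖ ^ 2 := max_eq_right (by nlinarith [norm_nonneg x])
  simp only [hc] at this
  have := hG0 x
  have : 0 ≤ B * G x := by positivity
  linarith

lemma dd_sq (t : ℝ) (v : Euc d) (φ : Euc d → ℝ) (x : Euc d) :
    dd t v (fun y => φ y ^ 2) x = 2 * φ x * dd t v φ x +
      ((φ (x + t • v) - φ x) ^ 2 + (φ (x - t • v) - φ x) ^ 2) := by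
  simp only [dd]; ring

/-- The discrete form of `L (φ²) ≥ 2 φ L φ + a0 |∂_e φ|²`. -/
lemma Adm.Lk_sq_ge (hA : Adm F a0 S1 V 𝒞) {κ : Ctrl d ι} (hκ : κ ∈ 𝒞) {t ε : ℝ}
    {φ : Euc d → ℝ} {x e : Euc d} (he : e ∈ V) (hφ : 0 ≤ φ x) (hL : -ε ≤ Lk t κ φ x) :
    a0 * ((φ (x + t • e) - φ x) ^ 2 + (φ (x - t • e) - φ x) ^ 2) - 2 * φ x * ε ≤
      Lk t κ (fun y => φ y ^ 2) x := by
  have e1 : Lk t κ (fun y => φ y ^ 2) x = 2 * φ x * Lk t κ φ x +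
      ∑ k, κ.a k * ((φ (x + t • κ.ξ k) - φ x) ^ 2 + (φ (x - t • κ.ξ k) - φ x) ^ 2) := by
    simp only [Lk, dd_sq, Finset.mul_sum, ← Finset.sum_add_distrib]
    exact Finset.sum_congr rfl fun k _ => by ring
  obtain ⟨k, rfl, hk⟩ := hA.dir κ hκ e he
  have e2 := Finset.single_le_sum (f := fun k => κ.a k * ((φ (x + t • κ.ξ k) - φ x) ^ 2 +
      (φ (x - t • κ.ξ k) - φ x) ^ 2)) (fun j _ => mul_nonneg (hA.nonneg κ hκ j) (by positivity))
      (Finset.mem_univ k)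
  have e3 : a0 * ((φ (x + t • κ.ξ k) - φ x) ^ 2 + (φ (x - t • κ.ξ k) - φ x) ^ 2) ≤
      κ.a k * ((φ (x + t • κ.ξ k) - φ x) ^ 2 + (φ (x - t • κ.ξ k) - φ x) ^ 2) := by gcongr
  rw [e1]
  nlinarith

end bernstein

/-! ### First and second difference estimates -/

section differences
open Topology

variable {d : ℕ} {ι : Type} [Fintype ι]
variable {F : Mat d → ℝ} {a0 S1 : ℝ} {V : Set (Euc d)} {𝒞 : Set (Ctrl d ι)}

/-- The constant in the first difference estimate. -/
def cst1 (a0 S1 : ℝ) : ℝ := 8 * √(64 + 388 * S1 / a0)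

/-- The constant in the lower second difference estimate. -/
def cst2 (a0 S1 : ℝ) : ℝ := 45 * √(64 + 388 * S1 / a0) * cst1 a0 S1

/-- The constant in the two-sided second difference estimate. -/
def cst3 (a0 S1 : ℝ) : ℝ := cst2 a0 S1 * (1 + S1 / a0)

/-- The positive part of a discrete subsolution is a subsolution where it is positive. -/
lemma Lk_posPart {t : ℝ} {κ : Ctrl d ι} (ha : ∀ k, 0 ≤ κ.a k) {f : Euc d → ℝ} {x : Euc d}
    (hx : 0 < max 0 (f x)) : Lk t κ f x ≤ Lk t κ (fun y => max 0 (f y)) x := by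
  have hx0 : max 0 (f x) = f x := by
    rcases max_cases 0 (f x) with h | h
    · linarith [h.1]
    · exact h.1
  refine Lk_mono ha fun k => ?_
  simp only [dd, hx0]
  linarith [le_max_right 0 (f (x + t • κ.ξ k)), le_max_right 0 (f (x - t • κ.ξ k))]

lemma norm_le_of_dir {t : ℝ} (ht : 0 < t) {e y : Euc d} (he : ‖e‖ ≤ 1) (hy : y = t • e ∨ y = -(t • e)) :
    ‖y‖ ≤ t := by
  have : ‖y‖ = t * ‖e‖ := by
    rcases hy with rfl | rfl
    · rw [norm_smul, Real.norm_of_nonneg ht.le]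
    · rw [norm_neg, norm_smul, Real.norm_of_nonneg ht.le]
  rw [this]; nlinarith

lemma le_sqrt_aux {q v Q : ℝ} (h : (q * v) ^ 2 ≤ Q) : q * v ≤ √Q :=
  Real.le_sqrt_of_sq_le h

/-- First differences along `V` are bounded: `bernstein_est` for `v = (h - h (· + y))⁺ / t` and
`G = (h + 1)²`. -/
lemma grad_est (hA : Adm F a0 S1 V 𝒞) (hd : 1 ≤ d) (ha0 : 0 < a0) {t : ℝ} (ht : 0 < t)
    (ht1 : t ≤ 1 / 24) {g h : Euc d → ℝ} (hs : Scheme 𝒞 t (3 / 4) g h) {e y x : Euc d} (he : e ∈ V)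
    (hy : y = t • e ∨ y = -(t • e)) (hx : ‖x‖ ≤ 1 / 3) :
    h x - h (x + y) ≤ cst1 a0 S1 * t := by
  have hyt := norm_le_of_dir ht (hA.V_le e he) hy
  have hB := hs.le_one
  set f : Euc d → ℝ := fun z => 1 / t * (h z - h (z + y)) with hf
  have hfb : ∀ z, f z ≤ 2 / t := fun z => by
    have h1 := abs_le.1 (hB z); have h2 := abs_le.1 (hB (z + y))
    have : h z - h (z + y) ≤ 2 := by linarith [h1.2, h2.1]
    calc f z ≤ 1 / t * 2 := by simp only [hf]; gcongr
      _ = _ := by ring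
  have key := bernstein_est hA hd ha0 (ρ := 1 / 2) (K := 2) (Gm := 4) ht (by linarith)
    (by norm_num) le_rfl (v := fun z => max 0 (f z)) (G := fun z => (h z + 1) ^ 2)
    (fun z => le_max_left _ _)
    (fun z _ => by
      have : max 0 (f z) ≤ 2 / t := max_le (by positivity) (hfb z)
      rw [le_div_iff₀ ht] at this; linarith)
    (fun z => sq_nonneg _)
    (fun z _ => by
      have h1 := abs_le.1 (hB z)
      nlinarith [h1.1, h1.2])
    (fun z hz ε hε => by
      obtain ⟨κ, hκ, hk⟩ := hs.near z (by linarith) (ε * t / 4) (by positivity)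
      have hk2 := hs.sup (z + y) ((norm_add_le _ _).trans_lt (by linarith)) κ hκ
      have hc := hA.c_le κ hκ
      refine ⟨κ, hκ, fun hv => ?_, ?_⟩
      · refine le_trans ?_ (Lk_posPart (hA.nonneg κ hκ) hv)
        rw [hf, Lk_smul, Lk_sub, Lk_shift]
        have : 1 / t * (-(ε * t / 4)) ≤ 1 / t * (Lk t κ h z - Lk t κ h (z + y)) := by
          refine mul_le_mul_of_nonneg_left ?_ (by positivity)
          linarith
        have e1 : 1 / t * (-(ε * t / 4)) = -(ε / 4) := by field_simp
        linarith
      · have h1 := abs_le.1 (hB z)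
        have hLk : -(ε * t / 4) ≤ Lk t κ (fun z => h z + 1) z := by
          rw [Lk_add t κ h (fun _ => 1)]
          have : Lk t κ (fun _ => (1 : ℝ)) z = 0 := by simp [Lk, dd]; norm_num
          nlinarith [sq_nonneg t]
        have h2 := hA.Lk_sq_ge hκ (φ := fun z => h z + 1) (x := z) he (by linarith [h1.1]) hLk
        refine le_trans ?_ h2
        have h3 : t ^ 2 * (max 0 (f z)) ^ 2 ≤ (h (z + y) - h z) ^ 2 := by
          have : (max 0 (f z)) ^ 2 ≤ (f z) ^ 2 := by
            rcases max_cases 0 (f z) with h | h <;> rw [h.1]; simp; positivity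
          calc t ^ 2 * (max 0 (f z)) ^ 2 ≤ t ^ 2 * (f z) ^ 2 := by gcongr
            _ = _ := by simp only [hf]; field_simp; ring
        have h4 : (h (z + y) - h z) ^ 2 ≤ (h (z + t • e) + 1 - (h z + 1)) ^ 2 +
            (h (z - t • e) + 1 - (h z + 1)) ^ 2 := by
          rcases hy with rfl | rfl
          · nlinarith [sq_nonneg (h (z - t • e) + 1 - (h z + 1))]
          · rw [← sub_eq_add_neg]
            nlinarith [sq_nonneg (h (z + t • e) + 1 - (h z + 1))]
        have h5 := mul_le_mul_of_nonneg_left (h3.trans h4) ha0.le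
        have h6 : 2 * (h z + 1) * (ε * t / 4) ≤ ε := by
          have : ε * t ≤ ε := by nlinarith
          nlinarith [h1.1, h1.2, mul_pos hε ht]
        linarith) (x := x) (by linarith)
  have e1 : (16 : ℝ) * 2 ^ 2 + 97 * S1 / a0 * 4 = 64 + 388 * S1 / a0 := by ring
  rw [e1] at key
  have k1 := le_sqrt_aux key
  have hv0 : 0 ≤ max 0 (f x) := le_max_left _ _
  have hx2 : 1 / 8 ≤ (1 / 2 : ℝ) ^ 2 - ‖x‖ ^ 2 := by nlinarith [norm_nonneg x]
  have k2 : f x ≤ cst1 a0 S1 := by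
    have := le_max_right 0 (f x)
    unfold cst1
    nlinarith
  have k3 : f x * t = h x - h (x + y) := by simp only [hf]; field_simp
  rw [← k3]; gcongr

lemma cst1_nonneg (a0 S1 : ℝ) : 0 ≤ cst1 a0 S1 := by unfold cst1; positivity
lemma cst2_nonneg (a0 S1 : ℝ) : 0 ≤ cst2 a0 S1 := by
  have := cst1_nonneg a0 S1; unfold cst2; positivity

lemma grad_est_abs (hA : Adm F a0 S1 V 𝒞) (hd : 1 ≤ d) (ha0 : 0 < a0) {t : ℝ} (ht : 0 < t)
    (ht1 : t ≤ 1 / 24) {g h : Euc d → ℝ} (hs : Scheme 𝒞 t (3 / 4) g h) {e x : Euc d} (he : e ∈ V)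
    (hx : ‖x‖ ≤ 1 / 3) (hx' : ‖x + t • e‖ ≤ 1 / 3) :
    |h x - h (x + t • e)| ≤ cst1 a0 S1 * t := by
  have h1 := grad_est hA hd ha0 ht ht1 hs he (Or.inl rfl) hx
  have h2 := grad_est hA hd ha0 ht ht1 hs he (Or.inr rfl) hx'
  rw [add_neg_cancel_right] at h2
  exact abs_le.2 ⟨by linarith, h1⟩

set_option maxHeartbeats 1600000 in
/-- Second differences along `V` are bounded below: since the equation is a supremum of linear ones,
`-D²h` is a subsolution of the equation of a nearly optimal control, and `bernstein_est` applies
to its positive part, with the square of the first difference as `G`. -/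
lemma dd_lower (hA : Adm F a0 S1 V 𝒞) (hd : 1 ≤ d) (ha0 : 0 < a0) {t : ℝ} (ht : 0 < t)
    (ht1 : t ≤ 1 / 24) {g h : Euc d → ℝ} (hs : Scheme 𝒞 t (3 / 4) g h) {e x : Euc d} (he : e ∈ V)
    (hx : ‖x‖ ≤ 1 / 5) : -(cst2 a0 S1 * t ^ 2) ≤ dd t e h x := by
  have hte := norm_le_of_dir ht (hA.V_le e he) (Or.inl rfl)
  set C := cst1 a0 S1 with hC
  have hC0 : 0 ≤ C := cst1_nonneg _ _
  have hsm : ∀ z : Euc d, ‖z‖ ≤ 1 / 4 + t → ‖z‖ ≤ 1 / 3 ∧ ‖z + t • e‖ ≤ 1 / 3 ∧ ‖z - t • e‖ ≤ 1 / 3 :=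
    fun z hz => ⟨by linarith, (norm_add_le _ _).trans (by linarith),
      (norm_sub_le _ _).trans (by linarith)⟩
  have hg1 : ∀ z : Euc d, ‖z‖ ≤ 1 / 4 + t → |h z - h (z + t • e)| ≤ C * t := fun z hz =>
    grad_est_abs hA hd ha0 ht ht1 hs he (hsm z hz).1 (hsm z hz).2.1
  have hg2 : ∀ z : Euc d, ‖z‖ ≤ 1 / 4 + t → |h z - h (z - t • e)| ≤ C * t := fun z hz => by
    have := grad_est_abs hA hd ha0 ht ht1 hs he (x := z - t • e) (hsm z hz).2.2
      (by rw [sub_add_cancel]; exact (hsm z hz).1)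
    rwa [sub_add_cancel, abs_sub_comm] at this
  set f : Euc d → ℝ := fun z => (1 / t ^ 2) * (2 * h z - (h (z + t • e) + h (z + -(t • e)))) with hf
  set φ : Euc d → ℝ := fun z => C + 1 / t * (h z - h (z + t • e)) with hφ
  have hφb : ∀ z : Euc d, ‖z‖ ≤ 1 / 4 + t → 0 ≤ φ z ∧ φ z ≤ 2 * C := fun z hz => by
    have h1 := abs_le.1 (hg1 z hz)
    have e1 : -C ≤ 1 / t * (h z - h (z + t • e)) := by
      rw [one_div, inv_mul_eq_div, le_div_iff₀ ht]; linarith [h1.1]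
    have e2 : 1 / t * (h z - h (z + t • e)) ≤ C := by
      rw [one_div, inv_mul_eq_div, div_le_iff₀ ht]; linarith [h1.2]
    simp only [hφ]; constructor <;> linarith
  have key := bernstein_est hA hd ha0 (ρ := 1 / 4) (K := 2 * C) (Gm := 4 * C ^ 2) ht (by linarith)
    (by norm_num) (by norm_num) (v := fun z => max 0 (f z)) (G := fun z => (φ z) ^ 2)
    (fun z => le_max_left _ _)
    (fun z hz => by
      have h1 := (le_abs_self _).trans (hg1 z hz)
      have h2 := (le_abs_self _).trans (hg2 z hz)
      rw [sub_eq_add_neg z] at h2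
      have : f z ≤ 2 * C / t := by
        simp only [hf]
        rw [one_div, inv_mul_eq_div, div_le_div_iff₀ (by positivity) ht]
        nlinarith
      have : max 0 (f z) ≤ 2 * C / t := max_le (by positivity) this
      rw [le_div_iff₀ ht] at this; linarith)
    (fun z => sq_nonneg _)
    (fun z hz => by
      obtain ⟨h1, h2⟩ := hφb z hz
      nlinarith)
    (fun z hz ε hε => by
      set M := 2 / t ^ 2 + 4 * C / t + 1 with hM
      have hM0 : 0 < M := by positivity
      set ε' := ε / M with hε'
      have hε'0 : 0 < ε' := by positivity
      have hε'e : ε' * M = ε := by rw [hε']; field_simp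
      -- The control `κ` is nearly optimal at `z` and admissible at the neighbouring points.
      obtain ⟨κ, hκ, hk⟩ := hs.near z (by linarith) ε' hε'0
      have hk2 := hs.sup (z + t • e) ((norm_add_le _ _).trans_lt (by linarith)) κ hκ
      have hk3 := hs.sup (z + -(t • e)) ((norm_add_le _ _).trans_lt (by rw [norm_neg]; linarith)) κ hκ
      have hc := hA.c_le κ hκ
      refine ⟨κ, hκ, fun hv => ?_, ?_⟩
      · refine le_trans ?_ (Lk_posPart (hA.nonneg κ hκ) hv)
        rw [hf, Lk_smul, Lk_sub, Lk_smul, Lk_add t κ (fun z => h (z + t • e)), Lk_shift, Lk_shift]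
        have : 1 / t ^ 2 * (-(2 * ε')) ≤ 1 / t ^ 2 *
            (2 * Lk t κ h z - (Lk t κ h (z + t • e) + Lk t κ h (z + -(t • e)))) := by
          refine mul_le_mul_of_nonneg_left ?_ (by positivity)
          linarith
        have e1 : 1 / t ^ 2 * (-(2 * ε')) = -(ε' * (2 / t ^ 2)) := by ring
        have e2 : ε' * (2 / t ^ 2) ≤ ε' * M := by
          refine mul_le_mul_of_nonneg_left ?_ hε'0.le
          have : 0 ≤ 4 * C / t := by positivity
          linarith
        linarith
      · obtain ⟨h1, h1'⟩ := hφb z (by linarith)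
        have hLk : -(ε' / t) ≤ Lk t κ φ z := by
          rw [hφ, Lk_add t κ (fun _ => C), Lk_smul, Lk_sub, Lk_shift]
          have e0 : Lk t κ (fun _ => C) z = 0 := by
            simp only [Lk, dd]; exact Finset.sum_eq_zero fun k _ => by ring
          rw [e0, zero_add, one_div, inv_mul_eq_div, neg_div']
          refine div_le_div_of_nonneg_right ?_ ht.le
          linarith
        have h2 := hA.Lk_sq_ge hκ (φ := φ) (x := z) he h1 hLk
        refine le_trans ?_ h2
        have h3 : t ^ 2 * (max 0 (f z)) ^ 2 ≤ (φ (z - t • e) - φ z) ^ 2 := by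
          have : (max 0 (f z)) ^ 2 ≤ (f z) ^ 2 := by
            rcases max_cases 0 (f z) with h | h <;> rw [h.1]; simp; positivity
          calc t ^ 2 * (max 0 (f z)) ^ 2 ≤ t ^ 2 * (f z) ^ 2 := by gcongr
            _ = _ := by
              simp only [hf, hφ]
              rw [sub_add_cancel, ← sub_eq_add_neg]
              field_simp; ring
        have h5 := mul_le_mul_of_nonneg_left (h3.trans
          (le_add_of_nonneg_left (sq_nonneg (φ (z + t • e) - φ z)))) ha0.le
        have h6 : 2 * φ z * (ε' / t) ≤ ε := by
          calc 2 * φ z * (ε' / t) ≤ 2 * (2 * C) * (ε' / t) := by gcongr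
            _ = ε' * (4 * C / t) := by ring
            _ ≤ ε' * M := by
              refine mul_le_mul_of_nonneg_left ?_ hε'0.le
              have : 0 ≤ 2 / t ^ 2 := by positivity
              linarith
            _ = ε := hε'e
        linarith) (x := x) (by linarith)
  have e1 : 16 * (2 * C) ^ 2 + 97 * S1 / a0 * (4 * C ^ 2) = (64 + 388 * S1 / a0) * C ^ 2 := by ring
  rw [e1] at key
  have k1 := le_sqrt_aux key
  have hS1 := hA.S1_nonneg
  rw [Real.sqrt_mul (by positivity), Real.sqrt_sq hC0] at k1
  have hv0 : 0 ≤ max 0 (f x) := le_max_left _ _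
  have hx2 : 9 / 400 ≤ (1 / 4 : ℝ) ^ 2 - ‖x‖ ^ 2 := by nlinarith [norm_nonneg x]
  have k2 : f x ≤ cst2 a0 S1 := by
    have a1 := le_max_right 0 (f x)
    have a2 : 9 / 400 * max 0 (f x) ≤ ((1 / 4 : ℝ) ^ 2 - ‖x‖ ^ 2) * max 0 (f x) :=
      mul_le_mul_of_nonneg_right hx2 hv0
    have a3 : 0 ≤ √(64 + 388 * S1 / a0) * C := by positivity
    unfold cst2
    linarith
  have k3 : f x * t ^ 2 = - dd t e h x := by
    simp only [hf, dd]
    rw [← sub_eq_add_neg x]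
    field_simp; ring
  have k4 : f x * t ^ 2 ≤ cst2 a0 S1 * t ^ 2 := by gcongr
  linarith

/-- The upper bound follows from the lower one: the control supported on `V` turns the equation into
an upper bound for a positive combination of second differences along `V`. -/
lemma dd_abs_le (hA : Adm F a0 S1 V 𝒞) (hd : 1 ≤ d) (ha0 : 0 < a0) {t : ℝ} (ht : 0 < t)
    (ht1 : t ≤ 1 / 24) {g h : Euc d → ℝ} (hs : Scheme 𝒞 t (3 / 4) g h) {e x : Euc d} (he : e ∈ V)
    (hx : ‖x‖ ≤ 1 / 5) : |dd t e h x| ≤ cst3 a0 S1 * t ^ 2 := by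
  have hlow := fun e (he : e ∈ V) => dd_lower hA hd ha0 ht ht1 hs he hx
  have hS1 := hA.S1_nonneg
  have hC2 := cst2_nonneg a0 S1
  set C2 := cst2 a0 S1 with hC2d
  have hle : C2 * t ^ 2 ≤ cst3 a0 S1 * t ^ 2 := by
    unfold cst3; rw [← hC2d]; gcongr; nlinarith [div_nonneg hS1 ha0.le]
  refine abs_le.2 ⟨by linarith [hlow e he], ?_⟩
  obtain ⟨κ, hκ, hc, hk⟩ := hA.ex_zero
  have h1 := hs.sup x (by linarith) κ hκ
  rw [hc, zero_mul, add_zero] at h1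
  obtain ⟨k, rfl, hka⟩ := hA.dir κ hκ e he
  have h2 : ∀ j, 0 ≤ κ.a j * (dd t (κ.ξ j) h x + C2 * t ^ 2) := fun j => by
    rcases hk j with h0 | hV
    · rw [h0, zero_mul]
    · exact mul_nonneg (hA.nonneg κ hκ j) (by linarith [hlow _ hV])
  have h3 := Finset.single_le_sum (f := fun j => κ.a j * (dd t (κ.ξ j) h x + C2 * t ^ 2))
    (fun j _ => h2 j) (Finset.mem_univ k)
  have h4 : ∑ j, κ.a j * (dd t (κ.ξ j) h x + C2 * t ^ 2) ≤ S1 * (C2 * t ^ 2) := by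
    have e1 : ∑ j, κ.a j * (dd t (κ.ξ j) h x + C2 * t ^ 2) =
        Lk t κ h x + (∑ j, κ.a j) * (C2 * t ^ 2) := by
      simp only [Lk, mul_add, Finset.sum_add_distrib, Finset.sum_mul]
    have e2 : (∑ j, κ.a j) * (C2 * t ^ 2) ≤ S1 * (C2 * t ^ 2) := by
      gcongr; exact hA.sum_le κ hκ
    linarith
  have h5 : a0 * (dd t (κ.ξ k) h x + C2 * t ^ 2) ≤ κ.a k * (dd t (κ.ξ k) h x + C2 * t ^ 2) := by
    refine mul_le_mul_of_nonneg_right hka (by linarith [hlow _ he])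
  have h6 : dd t (κ.ξ k) h x + C2 * t ^ 2 ≤ S1 * (C2 * t ^ 2) / a0 := by
    rw [le_div_iff₀ ha0]; linarith
  have h7 : cst3 a0 S1 * t ^ 2 = C2 * t ^ 2 + S1 * (C2 * t ^ 2) / a0 := by
    unfold cst3; rw [← hC2d]; ring
  nlinarith [mul_nonneg hC2 (sq_nonneg t)]

end differences

/-! ### Affine approximation on the mesh -/

section lattice
open Topology

variable {d : ℕ} {ι : Type} [Fintype ι]
variable {F : Mat d → ℝ} {a0 S1 : ℝ} {V : Set (Euc d)} {𝒞 : Set (Ctrl d ι)}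

/-- Points reached from the origin in `m` coordinate steps of length `t`. -/
inductive Reach (t : ℝ) : ℕ → Euc d → Prop
  | zero : Reach t 0 0
  | add {m : ℕ} {x : Euc d} (i : Fin d) : Reach t m x → Reach t (m + 1) (x + t • EuclideanSpace.single i 1)
  | sub {m : ℕ} {x : Euc d} (i : Fin d) : Reach t m x → Reach t (m + 1) (x - t • EuclideanSpace.single i 1)

lemma Reach.comp {t : ℝ} {m n : ℕ} {x y : Euc d} (hx : Reach t m x) (hy : Reach t n y) :
    Reach t (m + n) (x + y) := by
  induction hy with
  | zero => simpa using hx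
  | add i _ ih => rw [← add_assoc, ← add_assoc]; exact ih.add i
  | sub i _ ih => rw [← add_assoc, ← add_sub_assoc]; exact ih.sub i

lemma reach_int (t : ℝ) (i : Fin d) (k : ℤ) :
    Reach t k.natAbs ((t * k) • (EuclideanSpace.single i 1 : Euc d)) := by
  have key : ∀ n : ℕ, Reach t n ((t * n) • (EuclideanSpace.single i 1 : Euc d)) ∧
      Reach t n ((t * -(n : ℝ)) • (EuclideanSpace.single i 1 : Euc d)) := by
    intro n
    induction n with
    | zero => simpa using (Reach.zero : Reach t 0 (0 : Euc d))
    | succ n ih =>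
      refine ⟨?_, ?_⟩
      · have := ih.1.add i
        rwa [← add_smul, show t * (n : ℝ) + t = t * ((n + 1 : ℕ) : ℝ) by push_cast; ring] at this
      · have := ih.2.sub i
        rwa [← sub_smul, show t * -(n : ℝ) - t = t * -((n + 1 : ℕ) : ℝ) by push_cast; ring] at this
  rcases Int.natAbs_eq k with h | h
  · have := (key k.natAbs).1
    have e : ((k.natAbs : ℕ) : ℝ) = (k : ℝ) := by
      conv_rhs => rw [h]
      rw [Int.cast_natCast]
    rw [e] at this
    exact this
  · have := (key k.natAbs).2
    have e : -((k.natAbs : ℕ) : ℝ) = (k : ℝ) := by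
      conv_rhs => rw [h]
      rw [Int.cast_neg, Int.cast_natCast]
    rw [e] at this
    exact this

lemma reach_sum (t : ℝ) (k : Fin d → ℤ) (s : Finset (Fin d)) :
    Reach t (∑ i ∈ s, (k i).natAbs) (∑ i ∈ s, (t * k i) • (EuclideanSpace.single i 1 : Euc d)) := by
  classical
  induction s using Finset.induction_on with
  | empty => simpa using (Reach.zero : Reach t 0 (0 : Euc d))
  | insert a s ha ih =>
    rw [Finset.sum_insert ha, Finset.sum_insert ha]
    exact (reach_int t a (k a)).comp ih

lemma norm_le_sum_abs (x : Euc d) : ‖x‖ ≤ ∑ i, |x i| := by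
  have h : x = ∑ i, x i • (EuclideanSpace.single i 1 : Euc d) := by
    have := (EuclideanSpace.basisFun (Fin d) ℝ).sum_repr x
    simpa using this.symm
  conv_lhs => rw [h]
  refine (norm_sum_le _ _).trans (Finset.sum_le_sum fun i _ => ?_)
  rw [norm_smul]; simp

lemma abs_coord_le (x : Euc d) (i : Fin d) : |x i| ≤ ‖x‖ := by
  simpa using PiLp.norm_apply_le x i

/-- The points reached by coordinate steps are dense at scale `t`. -/
lemma exists_reach {t : ℝ} (ht : 0 < t) (x : Euc d) : ∃ (m : ℕ) (y : Euc d), Reach t m y ∧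
    ‖x - y‖ ≤ d * t ∧ t * m ≤ d * (‖x‖ + t) := by
  let k : Fin d → ℤ := fun i => ⌊x i / t⌋
  let y : Euc d := ∑ i, (t * k i) • (EuclideanSpace.single i 1 : Euc d)
  have hy : ∀ i, y i = t * k i := fun i => by
    simp only [y, WithLp.ofLp_sum, Finset.sum_apply, PiLp.smul_apply, smul_eq_mul]
    rw [Finset.sum_eq_single i] <;> simp +contextual [Pi.single_apply, eq_comm]
  refine ⟨_, y, reach_sum t k Finset.univ, ?_, ?_⟩
  · refine (norm_le_sum_abs _).trans ?_
    have : ∀ i ∈ Finset.univ, |(x - y) i| ≤ t := fun i _ => by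
      have h1 := Int.floor_le (x i / t); have h2 := Int.lt_floor_add_one (x i / t)
      rw [le_div_iff₀ ht] at h1; rw [div_lt_iff₀ ht] at h2
      rw [PiLp.sub_apply, hy, abs_le]
      constructor <;> simp only [k] <;> nlinarith
    refine (Finset.sum_le_sum this).trans ?_
    simp
  · push_cast
    rw [Finset.mul_sum]
    have : ∀ i ∈ Finset.univ, t * (((k i).natAbs : ℕ) : ℝ) ≤ ‖x‖ + t := fun i _ => by
      have h1 := Int.floor_le (x i / t); have h2 := Int.lt_floor_add_one (x i / t)
      rw [le_div_iff₀ ht] at h1; rw [div_lt_iff₀ ht] at h2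
      have e : (((k i).natAbs : ℕ) : ℝ) = |(k i : ℝ)| := by
        rw [Nat.cast_natAbs]; push_cast; rfl
      rw [e]
      have h3 := abs_le.1 (abs_coord_le x i)
      have : |t * (k i : ℝ)| ≤ ‖x‖ + t := abs_le.2
        ⟨by simp only [k]; nlinarith [h3.1], by simp only [k]; nlinarith [h3.2]⟩
      rwa [abs_mul, abs_of_pos ht] at this
    refine (Finset.sum_le_sum this).trans ?_
    simp [mul_add]

/-- Forward difference along the `i`-th coordinate. -/
def fd (t : ℝ) (h : Euc d → ℝ) (i : Fin d) (x : Euc d) : ℝ :=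
  h (x + t • EuclideanSpace.single i 1) - h x

/-- A mixed difference is a difference of two centred second differences. -/
lemma fd_step (t : ℝ) (h : Euc d → ℝ) (i j : Fin d) (x : Euc d) :
    fd t h i (x + t • EuclideanSpace.single j 1) - fd t h i x =
    dd t ((1 / 2 : ℝ) • (EuclideanSpace.single i 1 + EuclideanSpace.single j 1)) h
      (x + t • ((1 / 2 : ℝ) • (EuclideanSpace.single i 1 + EuclideanSpace.single j 1))) -
    dd t ((1 / 2 : ℝ) • (EuclideanSpace.single i 1 - EuclideanSpace.single j 1)) h
      (x + t • ((1 / 2 : ℝ) • (EuclideanSpace.single i 1 + EuclideanSpace.single j 1))) := by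
  simp only [fd, dd]
  generalize (EuclideanSpace.single i 1 : Euc d) = a
  generalize (EuclideanSpace.single j 1 : Euc d) = b
  have e1 : x + t • ((1 / 2 : ℝ) • (a + b)) + t • ((1 / 2 : ℝ) • (a + b)) = x + t • b + t • a := by
    module
  have e2 : x + t • ((1 / 2 : ℝ) • (a + b)) - t • ((1 / 2 : ℝ) • (a + b)) = x := by module
  have e3 : x + t • ((1 / 2 : ℝ) • (a + b)) + t • ((1 / 2 : ℝ) • (a - b)) = x + t • a := by module
  have e4 : x + t • ((1 / 2 : ℝ) • (a + b)) - t • ((1 / 2 : ℝ) • (a - b)) = x + t • b := by module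
  rw [e1, e2, e3, e4]; ring

set_option maxHeartbeats 800000 in
/-- Taylor expansion along a path of `m` coordinate steps. -/
lemma reach_est (hA : Adm F a0 S1 V 𝒞) (hd : 1 ≤ d) (ha0 : 0 < a0) {t : ℝ} (ht : 0 < t)
    (ht1 : t ≤ 1 / 24) {g h : Euc d → ℝ} (hs : Scheme 𝒞 t (3 / 4) g h) {b : Euc d}
    (hb : ∀ i, t * b i = fd t h i 0) {m : ℕ} {x : Euc d} (hx : Reach t m x) :
    (m + 1) * t ≤ 1 / 5 → ‖x‖ ≤ m * t ∧
      (∀ i, |fd t h i x - fd t h i 0| ≤ 2 * cst3 a0 S1 * t ^ 2 * m) ∧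
      |h x - h 0 - ⟪b, x⟫| ≤ 2 * cst3 a0 S1 * t ^ 2 * m ^ 2 := by
  have hn : ∀ j : Fin d, ‖t • (EuclideanSpace.single j 1 : Euc d)‖ = t := fun j => by
    rw [norm_smul, Real.norm_of_nonneg ht.le]; simp
  have hC3 : 0 ≤ cst3 a0 S1 := by
    have := cst2_nonneg a0 S1; have := hA.S1_nonneg
    unfold cst3; positivity
  have hstep : ∀ (i j : Fin d) (y : Euc d), ‖y‖ + t ≤ 1 / 5 →
      |fd t h i (y + t • EuclideanSpace.single j 1) - fd t h i y| ≤ 2 * cst3 a0 S1 * t ^ 2 := by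
    intro i j y hy
    have hc : ‖y + t • ((1 / 2 : ℝ) • (EuclideanSpace.single i 1 + EuclideanSpace.single j 1 : Euc d))‖
        ≤ 1 / 5 := by
      refine (norm_add_le _ _).trans ?_
      have := norm_le_of_dir ht (hA.V_le _ (hA.V_add i j)) (Or.inl rfl)
      linarith
    have h1 := abs_le.1 (dd_abs_le hA hd ha0 ht ht1 hs (hA.V_add i j) hc)
    have h2 := abs_le.1 (dd_abs_le hA hd ha0 ht ht1 hs (hA.V_sub i j) hc)
    rw [fd_step, abs_le]
    constructor <;> linarith [h1.1, h1.2, h2.1, h2.2]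
  have hbi : ∀ j : Fin d, ⟪b, t • (EuclideanSpace.single j 1 : Euc d)⟫ = fd t h j 0 := fun j => by
    rw [inner_smul_right, EuclideanSpace.inner_single_right, ← hb j]; simp
  set K := 2 * cst3 a0 S1 * t ^ 2 with hK
  have hK0 : 0 ≤ K := by positivity
  induction hx with
  | zero => intro _; simp
  | @add m x j _ ih =>
    intro hm
    push_cast at hm ⊢
    obtain ⟨i1, i2, i3⟩ := ih (by linarith)
    refine ⟨(norm_add_le _ _).trans (by rw [hn]; linarith), fun i => ?_, ?_⟩
    · have h1 := abs_le.1 (hstep i j x (by linarith)); have h2 := abs_le.1 (i2 i)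
      rw [abs_le]; constructor <;> linarith [h1.1, h1.2, h2.1, h2.2]
    · have h2 := abs_le.1 (i2 j); have h3 := abs_le.1 i3
      have e : h (x + t • EuclideanSpace.single j 1) = h x + fd t h j x := by simp [fd]
      rw [inner_add_right, hbi, e, abs_le]
      constructor <;> nlinarith [h2.1, h2.2, h3.1, h3.2]
  | @sub m x j _ ih =>
    intro hm
    push_cast at hm ⊢
    obtain ⟨i1, i2, i3⟩ := ih (by linarith)
    have hnm : ‖x - t • (EuclideanSpace.single j 1 : Euc d)‖ ≤ (m + 1) * t :=
      (norm_sub_le _ _).trans (by rw [hn]; linarith)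
    have hi : ∀ i, |fd t h i (x - t • EuclideanSpace.single j 1) - fd t h i 0| ≤ K * (m + 1) := by
      intro i
      have h1 := hstep i j (x - t • EuclideanSpace.single j 1) (by linarith)
      rw [sub_add_cancel] at h1
      have h1 := abs_le.1 h1
      have h2 := abs_le.1 (i2 i)
      rw [abs_le]; constructor <;> linarith [h1.1, h1.2, h2.1, h2.2]
    refine ⟨hnm, hi, ?_⟩
    have h2 := abs_le.1 (hi j); have h3 := abs_le.1 i3
    have e : h (x - t • EuclideanSpace.single j 1) =
        h x - fd t h j (x - t • EuclideanSpace.single j 1) := by simp [fd]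
    rw [inner_sub_right, hbi, e, abs_le]
    have hmm : (0 : ℝ) ≤ m := by positivity
    have hKm := mul_nonneg hK0 hmm
    constructor <;> nlinarith [h2.1, h2.2, h3.1, h3.2]

/-- Quadratic approximation by an affine function at the origin, on the mesh and uniformly in `t`. -/
lemma mesh_affine (hA : Adm F a0 S1 V 𝒞) (hd : 1 ≤ d) (ha0 : 0 < a0) {t : ℝ} (ht : 0 < t)
    (ht1 : t ≤ 1 / 24) {g h : Euc d → ℝ} (hs : Scheme 𝒞 t (3 / 4) g h) :
    ∃ b : Euc d, ‖b‖ ≤ d * cst1 a0 S1 ∧ ∀ x : Euc d, d * (‖x‖ + t) + t ≤ 1 / 5 →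
      ∃ y, ‖x - y‖ ≤ d * t ∧ |h y - h 0 - ⟪b, y⟫| ≤ 2 * cst3 a0 S1 * (d * (‖x‖ + t)) ^ 2 := by
  let b : Euc d := WithLp.toLp 2 fun i => fd t h i 0 / t
  have hbi : ∀ i, t * b i = fd t h i 0 := fun i => by
    show t * (fd t h i 0 / t) = _
    field_simp
  have hC3 : 0 ≤ cst3 a0 S1 := by
    have := cst2_nonneg a0 S1; have := hA.S1_nonneg
    unfold cst3; positivity
  refine ⟨b, ?_, fun x hx => ?_⟩
  · refine (norm_le_sum_abs _).trans ?_
    have : ∀ i ∈ Finset.univ, |b i| ≤ cst1 a0 S1 := fun i _ => by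
      have h1 := grad_est_abs hA hd ha0 ht ht1 hs (x := 0) (hA.single_mem i) (by simp)
        (by rw [zero_add, norm_smul, Real.norm_of_nonneg ht.le]; simp; linarith)
      have h2 : |t * b i| ≤ cst1 a0 S1 * t := by
        rw [hbi, fd, abs_sub_comm]; exact h1
      rw [abs_mul, abs_of_pos ht, mul_comm] at h2
      exact le_of_mul_le_mul_right h2 ht
    refine (Finset.sum_le_sum this).trans ?_
    simp
  · obtain ⟨m, y, hr, h1, h2⟩ := exists_reach ht x
    refine ⟨y, h1, ?_⟩
    have h3 := (reach_est hA hd ha0 ht ht1 hs hbi hr (by linarith)).2.2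
    refine h3.trans ?_
    have : 2 * cst3 a0 S1 * t ^ 2 * m ^ 2 = 2 * cst3 a0 S1 * (t * m) ^ 2 := by ring
    rw [this]; gcongr

end lattice

/-! ### Limits along filters -/

section limits
open Topology

variable {d : ℕ}

/-- Sequences in a compact set converge along an ultrafilter; this replaces extraction of
subsequences. -/
lemma exists_ulim (U : Ultrafilter ℕ) {E : Type*} [TopologicalSpace E] {K : Set E} (hK : IsCompact K)
    {f : ℕ → E} (hf : ∀ n, f n ∈ K) : ∃ l ∈ K, Tendsto f U (𝓝 l) := by
  obtain ⟨l, hl, h⟩ := hK.ultrafilter_le_nhds (U.map f) (by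
    rw [le_principal_iff]
    exact (Filter.Eventually.of_forall hf : ∀ᶠ n in (U : Filter ℕ), f n ∈ K))
  exact ⟨l, hl, h⟩

/-- Asymptotic equicontinuity upgrades pointwise to uniform convergence on compact sets. -/
lemma unif_conv {U : Filter ℕ} [U.NeBot] {K : Set (Euc d)} (hK : IsCompact K)
    {un : ℕ → Euc d → ℝ} {u : Euc d → ℝ}
    (heq : ∀ ε > 0, ∃ δ > 0, ∀ᶠ n in U, ∀ x ∈ K, ∀ y ∈ K, ‖x - y‖ ≤ δ → |un n x - un n y| ≤ ε)
    (hp : ∀ x ∈ K, Tendsto (fun n => un n x) U (𝓝 (u x))) :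
    ∀ ε > 0, ∀ᶠ n in U, ∀ x ∈ K, |un n x - u x| ≤ ε := by
  intro ε hε
  obtain ⟨δ, hδ, hev⟩ := heq (ε / 3) (by positivity)
  have hu : ∀ x ∈ K, ∀ y ∈ K, ‖x - y‖ ≤ δ → |u x - u y| ≤ ε / 3 := fun x hx y hy hxy =>
    le_of_tendsto ((hp x hx).sub (hp y hy)).abs (hev.mono fun n hn => hn x hx y hy hxy)
  obtain ⟨T, hTK, hTf, hT⟩ := finite_approx_of_totallyBounded hK.totallyBounded δ hδ
  have h2 : ∀ᶠ n in U, ∀ y ∈ T, |un n y - u y| ≤ ε / 3 := by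
    rw [eventually_all_finite hTf]
    intro y hy
    have := (hp y (hTK hy)).eventually (Metric.closedBall_mem_nhds _ (show 0 < ε / 3 by positivity))
    filter_upwards [this] with n hn
    simpa [Real.dist_eq] using hn
  filter_upwards [hev, h2] with n h1 h2 x hx
  obtain ⟨y, hy, hxy⟩ := mem_iUnion₂.1 (hT hx)
  rw [mem_ball, dist_eq_norm] at hxy
  have a1 := h1 x hx y (hTK hy) hxy.le
  have a2 := h2 y hy
  have a3 := hu x hx y (hTK hy) hxy.le
  have : un n x - u x = (un n x - un n y) + (un n y - u y) - (u x - u y) := by ring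
  rw [this]
  refine (abs_sub _ _).trans ?_
  linarith [abs_add_le (un n x - un n y) (un n y - u y)]

/-- The second-order polynomial with gradient `p` and Hessian `X`. -/
def pol (p : Euc d) (X : Mat d) (y : Euc d) : ℝ := ⟪p, y⟫ + qf X y / 2

lemma pol_dd {p : Euc d} {X : Mat d} (hX : X.IsSymm) (t : ℝ) (y v : Euc d) :
    pol p X (y + t • v) + pol p X (y - t • v) - 2 * pol p X y = t ^ 2 * qf X v := by
  simp only [pol, sub_eq_add_neg, qf_add_vec hX, inner_add_right, inner_neg_right, qf_neg_vec,
    qf_smul_vec]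
  ring

/-- Discrete contact: near a strict contact point of the limit, the approximations have second
differences bounded by those of the test polynomial. -/
lemma limit_contact {U : Filter ℕ} {un : ℕ → Euc d → ℝ} {u : Euc d → ℝ} {x p : Euc d} {X : Mat d}
    (hX : X.IsSymm) {s κ : ℝ} (hs : 0 < s) (hκ : 0 < κ)
    (hun : ∀ ε > 0, ∀ᶠ n in U, ∀ y ∈ closedBall x s, |un n y - u y| ≤ ε)
    {t : ℕ → ℝ} (ht : ∀ n, 0 < t n) (ht0 : Tendsto t U (𝓝 0))
    (hj : ∀ y, ‖y‖ ≤ s → u (x + y) ≤ u x + ⟪p, y⟫ + qf X y / 2) :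
    ∀ᶠ n in U, ∃ z ∈ ball x s, ∀ v : Euc d, ‖v‖ ≤ 1 →
      dd (t n) v (un n) z ≤ (t n) ^ 2 * qf (X + κ • 1) v + 2 * (t n) ^ 3 := by
  have hX' : (X + κ • (1 : Mat d)).IsSymm := hX.add (Matrix.isSymm_one.smul κ)
  set e := κ / 2 * (s / 2) ^ 2 / 4 with he
  have he0 : 0 < e := by positivity
  have ht3 : Tendsto (fun n => t n ^ 3) U (𝓝 0) := by simpa using ht0.pow 3
  filter_upwards [hun e he0, ht0.eventually_lt_const (show (0 : ℝ) < s / 2 by positivity),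
    ht3.eventually_lt_const he0] with n h1 h2 h3
  set φ : Euc d → ℝ := fun y => un n (x + y) - pol p (X + κ • 1) y with hφ
  have hφ1 : ∀ y, ‖y‖ ≤ s → φ y ≤ u x + e - κ / 2 * ‖y‖ ^ 2 := fun y hy => by
    have a1 := (abs_le.1 (h1 (x + y) (by simpa using hy))).2
    have a2 := hj y hy
    simp only [hφ, pol, qf_add, qf_smul, qf_one]
    linarith
  have hφ0 : u x - e ≤ φ 0 := by
    have a1 := (abs_le.1 (h1 x (mem_closedBall_self hs.le))).1
    simp only [hφ, pol, add_zero, inner_zero_right, qf_zero_vec]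
    linarith
  have hbd : BddAbove (φ '' closedBall 0 s) := by
    refine ⟨u x + e, ?_⟩
    rintro _ ⟨y, hy, rfl⟩
    have := hφ1 y (by simpa using hy)
    nlinarith [sq_nonneg ‖y‖]
  obtain ⟨_, ⟨y, hy, rfl⟩, hyS⟩ := exists_lt_of_lt_csSup (s := φ '' closedBall 0 s)
    ⟨_, 0, mem_closedBall_self hs.le, rfl⟩
    (sub_lt_self (sSup (φ '' closedBall 0 s)) (pow_pos (ht n) 3))
  have hle : ∀ z, ‖z‖ ≤ s → φ z ≤ φ y + t n ^ 3 := fun z hz => by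
    have := le_csSup hbd ⟨z, by simpa using hz, rfl⟩
    linarith
  rw [mem_closedBall_zero_iff] at hy
  have hys : ‖y‖ < s / 2 := by
    have a1 := hφ1 y hy
    have a2 := hle 0 (by simpa using hs.le)
    have a3 : κ / 2 * ‖y‖ ^ 2 < κ / 2 * (s / 2) ^ 2 := by linarith
    have a4 : ‖y‖ ^ 2 < (s / 2) ^ 2 := lt_of_mul_lt_mul_left a3 (by positivity)
    exact (abs_lt_of_sq_lt_sq' a4 (by positivity)).2
  refine ⟨x + y, by simpa using (by linarith : ‖y‖ < s), fun v hv => ?_⟩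
  have htv : ‖t n • v‖ ≤ s / 2 := by
    rw [norm_smul, Real.norm_of_nonneg (ht n).le]; nlinarith [ht n]
  have b1 := hle (y + t n • v) ((norm_add_le _ _).trans (by linarith))
  have b2 := hle (y - t n • v) ((norm_sub_le _ _).trans (by linarith))
  have b3 := pol_dd (p := p) hX' (t n) y v
  simp only [hφ] at b1 b2
  simp only [dd]
  rw [show x + y + t n • v = x + (y + t n • v) by abel,
    show x + y - t n • v = x + (y - t n • v) by abel]
  linarith

end limits

/-! ### Limits of schemes -/

section existence
open Topology

variable {d : ℕ} {ι : Type} [Fintype ι] {F : Mat d → ℝ} {a0 S1 lam Lam : ℝ} {V : Set (Euc d)}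
  {𝒞 : Set (Ctrl d ι)}

lemma UpJet.exists_closedBall {u : Euc d → ℝ} {x p : Euc d} {X : Mat d} (hj : UpJet u x p X)
    {r : ℝ} (hx : x ∈ ball (0 : Euc d) r) : ∃ s > 0, closedBall x s ⊆ ball 0 r ∧
      ∀ y, ‖y‖ ≤ s → u (x + y) ≤ u x + ⟪p, y⟫ + qf X y / 2 := by
  obtain ⟨s1, hs1, h1⟩ := Metric.eventually_nhds_iff_ball.1 hj
  obtain ⟨s2, hs2, h2⟩ := Metric.isOpen_iff.1 isOpen_ball x hx
  have hm : 0 < min s1 s2 := lt_min hs1 hs2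
  refine ⟨min s1 s2 / 2, by positivity, fun y hy => h2 ?_, fun y hy => h1 y ?_⟩
  · rw [mem_closedBall] at hy; rw [mem_ball]; linarith [min_le_right s1 s2]
  · rw [mem_ball_zero_iff]; linarith [min_le_left s1 s2]

/-- To prove a subsolution inequality it suffices to treat strictly larger Hessians. -/
lemma QEll.nonneg_of_forall (hF : QEll lam Lam F) {X : Mat d} (hX : X.IsSymm)
    (h : ∀ κ : ℝ, 0 < κ → 0 ≤ F (X + κ • 1)) : 0 ≤ F X := by
  have h1 : ∀ κ : ℝ, 0 < κ → 0 ≤ F X + Lam * κ := fun κ hκ => (h κ hκ).trans (hF.up X hX κ hκ.le)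
  have h2 : Tendsto (fun κ : ℝ => F X + Lam * κ) (𝓝[>] 0) (𝓝 (F X + Lam * 0)) :=
    ((continuous_const.add (continuous_const.mul continuous_id)).tendsto 0).mono_left
      nhdsWithin_le_nhds
  have := ge_of_tendsto h2 (eventually_mem_nhdsWithin.mono fun κ hκ => h1 κ hκ)
  simpa using this

/-- Consistency of the scheme: its uniform limits are viscosity subsolutions. -/
lemma scheme_limit_sub (hA : Adm F a0 S1 V 𝒞) (hF : QEll lam Lam F)
    {U : Filter ℕ} [U.NeBot] {r : ℝ} {g h : Euc d → ℝ} {hn : ℕ → Euc d → ℝ} {t : ℕ → ℝ}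
    (ht : ∀ n, 0 < t n) (ht0 : Tendsto t U (𝓝 0)) (hs : ∀ n, Scheme 𝒞 (t n) r g (hn n))
    (hun : ∀ ε > 0, ∀ᶠ n in U, ∀ y ∈ closedBall (0 : Euc d) r, |hn n y - h y| ≤ ε) :
    SubP F (ball 0 r) h := by
  intro x hx p X hX hj
  refine hF.nonneg_of_forall hX fun κ hκ => ?_
  obtain ⟨s, hs0, hsub, hj'⟩ := hj.exists_closedBall hx
  have hX' : (X + κ • (1 : Mat d)).IsSymm := hX.add (Matrix.isSymm_one.smul κ)
  have hc := limit_contact hX hs0 hκ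
    (fun ε hε => (hun ε hε).mono fun n hn y hy => hn y (ball_subset_closedBall (hsub hy))) ht ht0 hj'
  have hlim : Tendsto (fun n => -((1 + 2 * S1) * t n)) U (𝓝 0) := by
    simpa using (ht0.const_mul (1 + 2 * S1)).neg
  refine le_of_tendsto hlim (hc.mono fun n ⟨z, hz, hv⟩ => ?_)
  have htn := ht n
  obtain ⟨c, hcC, hc⟩ := (hs n).near z (by simpa using hsub (ball_subset_closedBall hz))
    (t n ^ 3) (by positivity)
  have h1 : Lk (t n) c (hn n) z ≤
      t n ^ 2 * ∑ k, c.a k * qf (X + κ • 1) (c.ξ k) + 2 * t n ^ 3 * ∑ k, c.a k := by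
    rw [Lk, Finset.mul_sum, Finset.mul_sum, ← Finset.sum_add_distrib]
    refine Finset.sum_le_sum fun k _ => ?_
    have := mul_le_mul_of_nonneg_left (hv (c.ξ k) (hA.norm_le c hcC k)) (hA.nonneg c hcC k)
    linarith
  have h2 := mul_le_mul_of_nonneg_left (hA.sum_le c hcC) (show 0 ≤ 2 * t n ^ 3 by positivity)
  have h3 := mul_le_mul_of_nonneg_left (hA.le c hcC _ hX') (show 0 ≤ t n ^ 2 by positivity)
  have h4 : t n ^ 2 * (-((1 + 2 * S1) * t n)) ≤ t n ^ 2 * F (X + κ • 1) := by linarith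
  exact le_of_mul_le_mul_left h4 (by positivity)

/-- Consistency of the scheme: its uniform limits are viscosity supersolutions. -/
lemma scheme_limit_super (hA : Adm F a0 S1 V 𝒞) (hF : QEll lam Lam F)
    {U : Filter ℕ} [U.NeBot] {r : ℝ} {g h : Euc d → ℝ} {hn : ℕ → Euc d → ℝ} {t : ℕ → ℝ}
    (ht : ∀ n, 0 < t n) (ht0 : Tendsto t U (𝓝 0)) (hs : ∀ n, Scheme 𝒞 (t n) r g (hn n))
    (hun : ∀ ε > 0, ∀ᶠ n in U, ∀ y ∈ closedBall (0 : Euc d) r, |hn n y - h y| ≤ ε) :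
    SubP (dualF F) (ball 0 r) (-h) := by
  intro x hx p X hX hj
  refine hF.dual.nonneg_of_forall hX fun κ hκ => ?_
  obtain ⟨s, hs0, hsub, hj'⟩ := hj.exists_closedBall hx
  have hX' : (X + κ • (1 : Mat d)).IsSymm := hX.add (Matrix.isSymm_one.smul κ)
  have hc := limit_contact (un := fun n => -hn n) (u := -h) hX hs0 hκ
    (fun ε hε => (hun ε hε).mono fun n hn y hy => by
      have := hn y (ball_subset_closedBall (hsub hy))
      rw [Pi.neg_apply, Pi.neg_apply, ← neg_sub', abs_neg]; exact this) ht ht0 hj'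
  have hlim : Tendsto (fun n => -(2 * S1 * t n)) U (𝓝 0) := by
    simpa using (ht0.const_mul (2 * S1)).neg
  refine le_of_tendsto hlim (hc.mono fun n ⟨z, hz, hv⟩ => ?_)
  have htn := ht n
  obtain ⟨c, hcC, hc⟩ := hA.ex_eq (-(X + κ • 1)) hX'.neg
  have h0 := (hs n).sup z (by simpa using hsub (ball_subset_closedBall hz)) c hcC
  have h1 : t n ^ 2 * ∑ k, c.a k * qf (-(X + κ • 1)) (c.ξ k) - 2 * t n ^ 3 * ∑ k, c.a k ≤
      Lk (t n) c (hn n) z := by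
    rw [Lk, Finset.mul_sum, Finset.mul_sum, ← Finset.sum_sub_distrib]
    refine Finset.sum_le_sum fun k _ => ?_
    have := mul_le_mul_of_nonneg_left (hv (c.ξ k) (hA.norm_le c hcC k)) (hA.nonneg c hcC k)
    simp only [dd, Pi.neg_apply, qf_neg] at this ⊢
    linarith
  have h2 := mul_le_mul_of_nonneg_left (hA.sum_le c hcC) (show 0 ≤ 2 * t n ^ 3 by positivity)
  have h4 : t n ^ 2 * (-(2 * S1 * t n)) ≤ t n ^ 2 * dualF F (X + κ • 1) := by
    rw [dualF, ← hc]; linarith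
  exact le_of_mul_le_mul_left h4 (by positivity)

end existence

/-! ### The Dirichlet problem -/

section existence
open Topology

variable {d : ℕ} {F : Mat d → ℝ} {lam Lam : ℝ}

/-- Bound for the gradient at the origin of the harmonic functions built by the scheme. -/
def conB (d : ℕ) (lam Lam : ℝ) : ℝ := d * cst1 (wt0 lam d) ((d + 1) * Lam)

/-- Bound for the quadratic error at the origin of the harmonic functions built by the scheme,
increased by one to be positive. -/
def conQ (d : ℕ) (lam Lam : ℝ) : ℝ := 2 * cst3 (wt0 lam d) ((d + 1) * Lam) * d ^ 2 + 1

/-- Modulus of continuity `s ↦ inf_κ (κ + (Lg² / 4κ) (3/2) s)` of the harmonic functions with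
`Lg`-Lipschitz boundary data. -/
def HasMod (Lg : ℝ) (h : Euc d → ℝ) : Prop :=
  ∀ κ' > 0, ∀ x ∈ closedBall (0 : Euc d) (3 / 4), ∀ x' ∈ closedBall (0 : Euc d) (3 / 4),
    h x - h x' ≤ κ' + Lg ^ 2 / (4 * κ') * (3 / 2 * ‖x - x'‖)

lemma modulus_small (Lg : ℝ) {ε : ℝ} (hε : 0 < ε) :
    ∃ δ > 0, ∀ s : ℝ, s ≤ δ → Lg ^ 2 / (4 * ε) * (3 / 2 * s) ≤ ε := by
  have hA : 0 ≤ Lg ^ 2 / (4 * ε) := by positivity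
  refine ⟨ε / (Lg ^ 2 / (4 * ε) * (3 / 2) + 1), by positivity, fun s hs => ?_⟩
  rw [le_div_iff₀ (by positivity)] at hs
  rcases le_or_gt s 0 with h | h
  · nlinarith
  · linarith

lemma HasMod.equi {Lg : ℝ} {ε : ℝ} (hε : 0 < ε) :
    ∃ δ > 0, ∀ h : Euc d → ℝ, HasMod Lg h → ∀ x ∈ closedBall (0 : Euc d) (3 / 4),
      ∀ y ∈ closedBall (0 : Euc d) (3 / 4), ‖x - y‖ ≤ δ → |h x - h y| ≤ ε := by
  obtain ⟨δ, hδ, H⟩ := modulus_small Lg (half_pos hε)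
  refine ⟨δ, hδ, fun h hh x hx y hy hxy => abs_le.2 ⟨?_, ?_⟩⟩
  · have := hh _ (half_pos hε) y hy x hx
    have := H ‖y - x‖ (by rwa [norm_sub_rev])
    linarith
  · have := hh _ (half_pos hε) x hx y hy
    have := H ‖x - y‖ hxy
    linarith

set_option maxHeartbeats 1600000 in
/-- Existence for the Dirichlet problem in the ball of radius `3/4`, with uniform quadratic
approximation by an affine function at the origin. -/
lemma exists_harmonic (hd : 1 ≤ d) (hlam : 0 < lam) (hlL : lam ≤ Lam) (hF : QEll lam Lam F)
    (hconv : ConvexOn ℝ univ F) {g : Euc d → ℝ} (hg1 : ∀ x, |g x| ≤ 1) {Lg : ℝ} (hLg : 0 ≤ Lg)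
    (hg : ∀ x y, |g x - g y| ≤ Lg * ‖x - y‖) :
    ∃ (h : Euc d → ℝ) (b : Euc d), (∀ x, |h x| ≤ 1) ∧ HasMod Lg h ∧
      (∀ x, 3 / 4 ≤ ‖x‖ → h x = g x) ∧ SubP F (ball 0 (3 / 4)) h ∧
      SubP (dualF F) (ball 0 (3 / 4)) (-h) ∧ ‖b‖ ≤ conB d lam Lam ∧
      ∀ x : Euc d, ‖x‖ ≤ 1 / (10 * d) → |h x - h 0 - ⟪b, x⟫| ≤ conQ d lam Lam * ‖x‖ ^ 2 := by
  obtain ⟨V, 𝒞, hA⟩ := exists_adm hd hlam hlL hF hconv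
  have ha0 := wt0_pos hlam hd
  set t : ℕ → ℝ := fun n => 1 / ((n : ℝ) + 24) with htdef
  have ht : ∀ n, 0 < t n := fun n => by positivity
  have ht1 : ∀ n, t n ≤ 1 / 24 := fun n =>
    one_div_le_one_div_of_le (by norm_num) (by linarith [Nat.cast_nonneg (α := ℝ) n])
  have htt : Tendsto t atTop (𝓝 0) := by
    have : Tendsto (fun n : ℕ => (n : ℝ) + 24) atTop atTop :=
      tendsto_atTop_add_const_right _ _ tendsto_natCast_atTop_atTop
    simpa [htdef, Function.comp_def] using tendsto_inv_atTop_zero.comp this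
  let U : Ultrafilter ℕ := hyperfilter ℕ
  have ht0 : Tendsto t U (𝓝 0) := htt.mono_left Nat.hyperfilter_le_atTop
  choose hn hs using fun n => exists_scheme hA (ht n) (3 / 4) hg1
  choose bn hbn hbe using fun n => mesh_affine hA hd ha0 (ht n) (ht1 n) (hs n)
  choose h hh1 hlim using fun x => exists_ulim U (isCompact_Icc (a := (-1 : ℝ)) (b := 1))
    (f := fun n => hn n x) (fun n => abs_le.1 ((hs n).le_one x))
  obtain ⟨b, hb1, hblim⟩ := exists_ulim U (isCompact_closedBall (0 : Euc d) (conB d lam Lam))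
    (f := bn) (fun n => by simpa [conB] using hbn n)
  have hmod : ∀ n, ∀ x ∈ closedBall (0 : Euc d) (3 / 4), ∀ x' ∈ closedBall (0 : Euc d) (3 / 4),
      ∀ κ' > 0, hn n x - hn n x' ≤ κ' + Lg ^ 2 / (4 * κ') * (3 / 2 * ‖x - x'‖) +
        (Lg * t n + Lg ^ 2 / (4 * κ') * (3 / 2 * t n + t n ^ 2)) := fun n x hx x' hx' κ' hκ' => by
    have := modulus_est hA hd ha0 (ht n) (by norm_num) hLg hg (hs n)
      (x := x) (x' := x') (by linarith [mem_closedBall_zero_iff.1 hx, ht n])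
      (by linarith [mem_closedBall_zero_iff.1 hx', ht n]) hκ'
    linarith
  have herr : ∀ κ' : ℝ, Tendsto (fun n => Lg * t n + Lg ^ 2 / (4 * κ') * (3 / 2 * t n + t n ^ 2))
      U (𝓝 0) := fun κ' => by
    have := (ht0.const_mul Lg).add
      (((ht0.const_mul (3 / 2)).add (ht0.pow 2)).const_mul (Lg ^ 2 / (4 * κ')))
    simpa using this
  have heq : ∀ ε > 0, ∃ δ > 0, ∀ᶠ n in (U : Filter ℕ), ∀ x ∈ closedBall (0 : Euc d) (3 / 4),
      ∀ y ∈ closedBall (0 : Euc d) (3 / 4), ‖x - y‖ ≤ δ → |hn n x - hn n y| ≤ ε := by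
    intro ε hε
    have hε3 : 0 < ε / 3 := by positivity
    obtain ⟨δ, hδ, H⟩ := modulus_small Lg hε3
    refine ⟨δ, hδ, ?_⟩
    filter_upwards [(herr (ε / 3)).eventually_lt_const hε3] with n hn x hx y hy hxy
    refine abs_le.2 ⟨?_, ?_⟩
    · have := hmod n y hy x hx _ hε3
      have := H ‖y - x‖ (by rwa [norm_sub_rev])
      linarith
    · have := hmod n x hx y hy _ hε3
      have := H ‖x - y‖ hxy
      linarith
  have hun := unif_conv (isCompact_closedBall (0 : Euc d) (3 / 4)) heq (fun x _ => hlim x)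
  refine ⟨h, b, fun x => abs_le.2 (hh1 x), fun κ' hκ' x hx x' hx' => ?_, fun x hx => ?_,
    scheme_limit_sub hA hF ht ht0 hs hun, scheme_limit_super hA hF ht ht0 hs hun,
    by simpa using hb1, fun x hx => ?_⟩
  · have h2 := (herr κ').const_add (κ' + Lg ^ 2 / (4 * κ') * (3 / 2 * ‖x - x'‖))
    rw [add_zero] at h2
    exact le_of_tendsto_of_tendsto' ((hlim x).sub (hlim x')) h2
      fun n => hmod n x hx x' hx' κ' hκ'
  · refine tendsto_nhds_unique (hlim x) ?_
    simp only [fun n => (hs n).bd x hx]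
    exact tendsto_const_nhds
  · have hd' : (1 : ℝ) ≤ d := by exact_mod_cast hd
    have hdx : d * ‖x‖ ≤ 1 / 10 := by
      calc d * ‖x‖ ≤ d * (1 / (10 * d)) := by gcongr
        _ = 1 / 10 := by field_simp
    have hx10 : ‖x‖ ≤ 1 / 10 := by nlinarith [norm_nonneg x]
    have hdt : Tendsto (fun n => d * t n) U (𝓝 0) := by simpa using ht0.const_mul (d : ℝ)
    have hkey : ∀ E > 0, |h x - h 0 - ⟪b, x⟫| ≤
        E + 2 * cst3 (wt0 lam d) ((d + 1) * Lam) * (d * ‖x‖) ^ 2 := by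
      intro E hE
      obtain ⟨δ, hδ, hev⟩ := heq E hE
      have hL : Tendsto (fun n => |hn n x - hn n 0 - ⟪bn n, x⟫|) U
          (𝓝 |h x - h 0 - ⟪b, x⟫|) :=
        (((hlim x).sub (hlim 0)).sub (hblim.inner tendsto_const_nhds)).abs
      have hR : Tendsto (fun n => E + conB d lam Lam * (d * t n) +
          2 * cst3 (wt0 lam d) ((d + 1) * Lam) * (d * (‖x‖ + t n)) ^ 2) U
          (𝓝 (E + conB d lam Lam * 0 +
            2 * cst3 (wt0 lam d) ((d + 1) * Lam) * (d * (‖x‖ + 0)) ^ 2)) :=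
        ((hdt.const_mul _).const_add E).add
          ((((ht0.const_add ‖x‖).const_mul (d : ℝ)).pow 2).const_mul _)
      rw [mul_zero, add_zero, add_zero] at hR
      refine le_of_tendsto_of_tendsto hL hR ?_
      filter_upwards [hev, hdt.eventually_lt_const hδ,
        hdt.eventually_lt_const (show (0 : ℝ) < 1 / 20 by norm_num)] with n h1 h2 h3
      have ht' : t n ≤ d * t n := by nlinarith [ht n]
      obtain ⟨y, hy, hye⟩ := hbe n x (by rw [mul_add]; linarith)
      have hy2 : ‖y‖ ≤ 3 / 4 := by
        have : ‖y‖ ≤ ‖x‖ + ‖x - y‖ := by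
          calc ‖y‖ = ‖x - (x - y)‖ := by rw [sub_sub_cancel]
            _ ≤ _ := norm_sub_le _ _
        linarith
      have e1 := h1 x (by simp; linarith) y (by simpa using hy2) (hy.trans h2.le)
      have e2 : |⟪bn n, x - y⟫| ≤ conB d lam Lam * (d * t n) :=
        (abs_real_inner_le_norm _ _).trans
          (mul_le_mul (hbn n) hy (norm_nonneg _) ((norm_nonneg _).trans (hbn n)))
      have : hn n x - hn n 0 - ⟪bn n, x⟫ =
          (hn n x - hn n y) - ⟪bn n, x - y⟫ + (hn n y - hn n 0 - ⟪bn n, y⟫) := by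
        rw [inner_sub_right]; ring
      rw [this]
      refine (abs_add_le _ _).trans ?_
      have := abs_sub (hn n x - hn n y) ⟪bn n, x - y⟫
      linarith
    have : |h x - h 0 - ⟪b, x⟫| ≤ 2 * cst3 (wt0 lam d) ((d + 1) * Lam) * (d * ‖x‖) ^ 2 := by
      refine le_of_forall_pos_le_add fun E hE => ?_
      rw [add_comm]; exact hkey E hE
    rw [conQ]
    nlinarith [sq_nonneg ‖x‖]

end existence

/-! ### Stability under vanishing right-hand sides -/

section stability
open Topology

variable {d : ℕ} {F : Mat d → ℝ} {lam Lam : ℝ}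

/-- A symmetric matrix with a negative value of its form has an eigenvector with nonpositive eigenvalue. -/
lemma exists_neg_eigen {X : Mat d} (hX : X.IsSymm) (h : ∃ y, qf X y < 0) :
    ∃ (e : Euc d) (μ : ℝ), ‖e‖ = 1 ∧ 0 ≤ μ ∧ opM X e = -μ • e := by
  have hT : ((opM X).toLinearMap).IsSymmetric := fun x y => (inner_opM_symm hX x y).symm
  have hfr : Module.finrank ℝ (Euc d) = d := by simp
  set b := hT.eigenvectorBasis hfr with hb
  set μ := hT.eigenvalues hfr with hμ
  have hbk : ∀ k, opM X (b k) = μ k • b k := fun k => hT.apply_eigenvectorBasis hfr k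
  obtain ⟨y, hy⟩ := h
  by_contra! hcon
  have hpos : ∀ k, 0 ≤ μ k := fun k => by
    by_contra! hk
    exact hcon (b k) (-μ k) (b.norm_eq_one k) (by linarith) (by rw [neg_neg]; exact hbk k)
  have : qf X y = ∑ k, μ k * ⟪b k, y⟫ ^ 2 := by
    have e1 : y = ∑ k, ⟪b k, y⟫ • b k := (b.sum_repr' y).symm
    have e2 : opM X y = ∑ k, ⟪b k, y⟫ • (μ k • b k) := by
      conv_lhs => rw [e1]
      rw [map_sum]
      exact Finset.sum_congr rfl fun k _ => by rw [map_smul, hbk]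
    rw [qf, e2, inner_sum]
    refine Finset.sum_congr rfl fun k _ => ?_
    rw [inner_smul_right, inner_smul_right, real_inner_comm]; ring
  have h0 : 0 ≤ qf X y := by
    rw [this]; exact Finset.sum_nonneg fun k _ => mul_nonneg (hpos k) (sq_nonneg _)
  linarith

/-- Contact for a perturbed test function: the concave kink `-|⟪w, ·⟫|` shifts the gradient of the
test function at the contact point by `±w`. -/
lemma limit_contact_kink {U : Filter ℕ} {un : ℕ → Euc d → ℝ} {u : Euc d → ℝ} {x p w : Euc d}
    {X : Mat d} (hX : X.IsSymm) {s κ : ℝ} (hs : 0 < s) (hκ : 0 < κ)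
    (hc : ∀ n, ContinuousOn (un n) (closedBall x s))
    (hun : ∀ ε > 0, ∀ᶠ n in U, ∀ y ∈ closedBall x s, |un n y - u y| ≤ ε)
    (hj : ∀ y, ‖y‖ ≤ s → u (x + y) ≤ u x + ⟪p, y⟫ + qf X y / 2) (hw : ‖w‖ ≤ κ * s / 8) :
    ∀ᶠ n in U, ∃ y : Euc d, ‖y‖ < s ∧ ∃ σ : ℝ, |σ| = 1 ∧ 0 ≤ σ * ⟪w, y⟫ ∧
      UpJet (un n) (x + y) (p + opM (X + κ • 1) y - σ • w) (X + κ • 1) := by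
  have hX' : (X + κ • (1 : Mat d)).IsSymm := hX.add (Matrix.isSymm_one.smul κ)
  filter_upwards [hun (κ * s ^ 2 / 16) (by positivity)] with n h1
  set φ : Euc d → ℝ := fun y => un n (x + y) - pol p (X + κ • 1) y + |⟪w, y⟫| with hφ
  have hpc : Continuous (pol p (X + κ • 1)) :=
    (continuous_const.inner continuous_id).add ((continuous_qf _).div_const 2)
  have hφc : ContinuousOn φ (closedBall 0 s) := by
    refine ContinuousOn.add (ContinuousOn.sub ?_ hpc.continuousOn)
      (continuous_const.inner continuous_id).abs.continuousOn
    refine (hc n).comp (continuous_const.add continuous_id).continuousOn fun y hy => ?_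
    simpa using hy
  obtain ⟨y, hy, hmax⟩ := (isCompact_closedBall (0 : Euc d) s).exists_isMaxOn
    ⟨0, mem_closedBall_self hs.le⟩ hφc
  rw [mem_closedBall_zero_iff] at hy
  have hys : ‖y‖ < s := by
    have a1 := (abs_le.1 (h1 (x + y) (by simpa using hy))).2
    have a2 := hj y hy
    have a3 := (abs_le.1 (h1 x (mem_closedBall_self hs.le))).1
    have a4 : φ 0 ≤ φ y := hmax (mem_closedBall_self hs.le)
    have a5 : |⟪w, y⟫| ≤ κ * s / 8 * s := (abs_real_inner_le_norm _ _).trans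
      (mul_le_mul hw hy (norm_nonneg _) (by positivity))
    simp only [hφ, pol, qf_add, qf_smul, qf_one, add_zero, inner_zero_right, qf_zero_vec, abs_zero,
      norm_zero] at a4
    have a6 : κ / 2 * ‖y‖ ^ 2 < κ / 2 * s ^ 2 := by nlinarith [mul_pos hκ (pow_pos hs 2)]
    have a7 : ‖y‖ ^ 2 < s ^ 2 := lt_of_mul_lt_mul_left a6 (by positivity)
    exact (abs_lt_of_sq_lt_sq' a7 hs.le).2
  obtain ⟨σ, hσ1, hσ⟩ : ∃ σ : ℝ, |σ| = 1 ∧ σ * ⟪w, y⟫ = |⟪w, y⟫| := by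
    rcases le_total 0 ⟪w, y⟫ with h | h
    · exact ⟨1, by simp, by rw [abs_of_nonneg h, one_mul]⟩
    · exact ⟨-1, by simp, by rw [abs_of_nonpos h]; ring⟩
  refine ⟨y, hys, σ, hσ1, by rw [hσ]; positivity, ?_⟩
  have hnear : ∀ᶠ z in 𝓝 (0 : Euc d), ‖y + z‖ < s := by
    have : Tendsto (fun z : Euc d => ‖y + z‖) (𝓝 0) (𝓝 ‖y + 0‖) :=
      (continuous_const.add continuous_id).norm.tendsto 0
    rw [add_zero] at this
    exact this.eventually_lt_const hys
  filter_upwards [hnear] with z hz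
  have b1 : φ (y + z) ≤ φ y := hmax (mem_closedBall_zero_iff.2 hz.le)
  have b2 : σ * ⟪w, y + z⟫ ≤ |⟪w, y + z⟫| := by
    refine (le_abs_self _).trans ?_
    rw [abs_mul, hσ1, one_mul]
  simp only [hφ, pol, qf_add_vec hX', ← hσ, inner_add_right] at b1 b2
  rw [inner_sub_left, inner_add_left, real_inner_smul_left, add_assoc x y z]
  linarith

set_option maxHeartbeats 800000 in
/-- Stability: uniform limits of approximate subsolutions of the singular equation with vanishing
right-hand side are subsolutions of the limiting pure equation. The equation says nothing at contact
points with zero gradient; adding a concave kink to the test function moves the gradient there away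
from zero. -/
lemma stability (hd : 1 ≤ d) (hlam : 0 < lam) {U : Filter ℕ} [U.NeBot] {Fn : ℕ → Mat d → ℝ}
    {un : ℕ → Euc d → ℝ} {u : Euc d → ℝ} {en : ℕ → ℝ} {Θ r : ℝ} (hΘ : 0 < Θ)
    (hF : QEll lam Lam F) (hFn : ∀ X : Mat d, X.IsSymm → Tendsto (fun n => Fn n X) U (𝓝 (F X)))
    (hen : ∀ n, 0 ≤ en n) (he0 : Tendsto en U (𝓝 0))
    (hc : ∀ n, ContinuousOn (un n) (closedBall 0 r))
    (hun : ∀ ε > 0, ∀ᶠ n in U, ∀ y ∈ closedBall (0 : Euc d) r, |un n y - u y| ≤ ε)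
    (hs : ∀ n, SubS (Fn n) (en n) Θ 0 (ball 0 r) (un n)) : SubP F (ball 0 r) u := by
  intro x hx p X hX hj
  refine hF.nonneg_of_forall hX fun κ hκ => ?_
  have hX' : (X + κ • (1 : Mat d)).IsSymm := hX.add (Matrix.isSymm_one.smul κ)
  set X' := X + κ • (1 : Mat d) with hXdef
  obtain ⟨s0, hs0, hsub0, hj0⟩ := hj.exists_closedBall hx
  -- For a nonnegative Hessian the inequality holds by ellipticity alone.
  by_cases hpsd : ∀ y, 0 ≤ qf X' y
  · have := hF.mono' hd hlam (X := 0) (Y := X') Matrix.isSymm_zero hX' (fun y => by rw [qf_zero]; exact hpsd y)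
    rwa [hF.zero] at this
  push Not at hpsd
  obtain ⟨e, μ, he, hμ, hXe⟩ := exists_neg_eigen hX' hpsd
  -- It suffices to find a shift `w` keeping the gradient at the contact points away from zero.
  have main : ∀ (s : ℝ) (w : Euc d) (c : ℝ), 0 < s → s ≤ s0 → 0 < c → ‖w‖ ≤ κ * s / 8 →
      (∀ y : Euc d, ‖y‖ < s → ∀ σ : ℝ, |σ| = 1 → 0 ≤ σ * ⟪w, y⟫ → c ≤ ‖p + opM X' y - σ • w‖) →
      0 ≤ F X' := by
    intro s w c hs1 hss hc0 hw hlow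
    have hcl : closedBall x s ⊆ closedBall 0 r :=
      ((closedBall_subset_closedBall hss).trans hsub0).trans ball_subset_closedBall
    have hct := limit_contact_kink (p := p) (w := w) hX hs1 hκ (fun n => (hc n).mono hcl)
      (fun ε hε => (hun ε hε).mono fun n hn y hy => hn y (hcl hy))
      (fun y hy => hj0 y (hy.trans hss)) hw
    have hlim : Tendsto (fun n => Fn n X' + en n * (c ^ (-Θ) + 1 + (‖p‖ + ‖opM X'‖ * s + ‖w‖))) U
        (𝓝 (F X')) := by
      simpa using (hFn X' hX').add (he0.mul_const (c ^ (-Θ) + 1 + (‖p‖ + ‖opM X'‖ * s + ‖w‖)))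
    refine ge_of_tendsto hlim (hct.mono fun n ⟨y, hy, σ, hσ, hσw, hup⟩ => ?_)
    have hl := hlow y hy σ hσ hσw
    have hP : (0 : Euc d) + (p + opM X' y - σ • w) ≠ 0 := by
      rw [zero_add]; exact norm_pos_iff.1 (hc0.trans_le hl)
    have h1 := hs n (x + y) (hsub0 (by simpa using hy.le.trans hss)) _ X' hX' hup hP
    rw [zero_add] at h1
    have h2 : ‖p + opM X' y - σ • w‖ ^ (-Θ) ≤ c ^ (-Θ) :=
      Real.rpow_le_rpow_of_nonpos hc0 hl (by linarith)
    have h3 : ‖p + opM X' y - σ • w‖ ≤ ‖p‖ + ‖opM X'‖ * s + ‖w‖ := by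
      refine (norm_sub_le _ _).trans (add_le_add ((norm_add_le _ _).trans (add_le_add le_rfl ?_)) ?_)
      · exact ((opM X').le_opNorm y).trans (mul_le_mul_of_nonneg_left hy.le (norm_nonneg _))
      · rw [norm_smul, Real.norm_eq_abs, hσ, one_mul]
    have h4 := mul_le_mul_of_nonneg_left (add_le_add (add_le_add_left h2 1) h3) (hen n)
    linarith
  -- For `p = 0` the kink is taken along an eigenvector `e` with nonpositive eigenvalue, so that
  -- `opM X' y` and `-σ w` push the gradient in the same direction. For `p ≠ 0` no kink is needed.
  by_cases hp : p = 0
  · have hw : ‖(κ * s0 / 8) • e‖ = κ * s0 / 8 := by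
      rw [norm_smul, he, mul_one, Real.norm_of_nonneg (by positivity)]
    refine main s0 ((κ * s0 / 8) • e) (κ * s0 / 8) hs0 le_rfl (by positivity) hw.le
      fun y hy σ hσ hσw => ?_
    have hσσ : σ * σ = 1 := by rw [← abs_mul_abs_self, hσ, one_mul]
    have hi : ⟪p + opM X' y - σ • (κ * s0 / 8) • e, σ • e⟫ = -μ * (σ * ⟪e, y⟫) - κ * s0 / 8 := by
      rw [hp, zero_add, inner_sub_left, real_inner_smul_right, ← inner_opM_symm hX', hXe,
        real_inner_smul_right, real_inner_smul_left, real_inner_smul_left, real_inner_smul_right,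
        real_inner_self_eq_norm_sq, he, real_inner_comm e y]
      linear_combination (-(κ * s0 / 8)) * hσσ
    have hpos : 0 ≤ σ * ⟪e, y⟫ := by
      rw [real_inner_smul_left] at hσw
      have : 0 ≤ (κ * s0 / 8) * (σ * ⟪e, y⟫) := by linarith
      exact nonneg_of_mul_nonneg_right this (by positivity)
    have hn : ‖σ • e‖ = 1 := by rw [norm_smul, he, Real.norm_eq_abs, hσ, one_mul]
    have := abs_real_inner_le_norm (p + opM X' y - σ • (κ * s0 / 8) • e) (σ • e)
    rw [hn, mul_one, hi] at this
    refine le_trans ?_ this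
    rw [← abs_neg]
    refine le_trans ?_ (le_abs_self _)
    nlinarith
  · have hp0 : 0 < ‖p‖ := norm_pos_iff.2 hp
    have hden : 0 < ‖opM X'‖ + 1 := by positivity
    refine main (min s0 (‖p‖ / 2 / (‖opM X'‖ + 1))) 0 (‖p‖ / 2) (lt_min hs0 (by positivity))
      (min_le_left _ _) (by positivity) ?_ fun y hy σ hσ _ => ?_
    · rw [norm_zero]
      have : 0 < min s0 (‖p‖ / 2 / (‖opM X'‖ + 1)) := lt_min hs0 (by positivity)
      positivity
    · rw [smul_zero, sub_zero]
      have h1 : ‖y‖ * (‖opM X'‖ + 1) ≤ ‖p‖ / 2 :=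
        (le_div_iff₀ hden).1 (hy.le.trans (min_le_right _ _))
      have h2 := (opM X').le_opNorm y
      have h3 : ‖p‖ ≤ ‖p + opM X' y‖ + ‖opM X' y‖ := by
        calc ‖p‖ = ‖(p + opM X' y) - opM X' y‖ := by rw [add_sub_cancel_right]
          _ ≤ _ := norm_sub_le _ _
      nlinarith [norm_nonneg y]

end stability

/-! ### Compactness -/

section approximation
open Topology

variable {d : ℕ} {F : Mat d → ℝ} {lam Lam Θ : ℝ}

lemma HasMod.continuousOn {Lg : ℝ} {h : Euc d → ℝ} (hh : HasMod Lg h) :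
    ContinuousOn h (closedBall 0 (3 / 4)) := by
  rw [Metric.continuousOn_iff]
  intro x hx ε hε
  obtain ⟨δ, hδ, H⟩ := HasMod.equi (d := d) (Lg := Lg) (half_pos hε)
  refine ⟨δ, hδ, fun y hy hyx => ?_⟩
  rw [dist_eq_norm] at hyx
  have := H h hh y hy x hx hyx.le
  rw [Real.dist_eq]; linarith

lemma continuousOn_of_unif {U : Filter ℕ} [U.NeBot] {K : Set (Euc d)} {un : ℕ → Euc d → ℝ}
    {u : Euc d → ℝ} (hc : ∀ n, ContinuousOn (un n) K)
    (hun : ∀ ε > 0, ∀ᶠ n in U, ∀ y ∈ K, |un n y - u y| ≤ ε) : ContinuousOn u K := by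
  have : TendstoUniformlyOn un u U K := by
    rw [Metric.tendstoUniformlyOn_iff]
    intro ε hε
    filter_upwards [hun (ε / 2) (half_pos hε)] with n hn x hx
    rw [dist_comm, Real.dist_eq]
    linarith [hn x hx]
  exact this.continuousOn (Frequently.of_forall hc)

lemma SubS.mono_eps {ε ε' : ℝ} {q : Euc d} {s : Set (Euc d)} {u : Euc d → ℝ}
    (h : SubS F ε Θ q s u) (he : ε ≤ ε') : SubS F ε' Θ q s u := by
  intro x hx p X hX hj hp
  have h1 := h x hx p X hX hj hp
  have h2 : 0 ≤ ‖q + p‖ ^ (-Θ) + 1 + ‖p‖ := by positivity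
  have := mul_le_mul_of_nonneg_right he h2
  linarith

lemma SubP.subS {ε : ℝ} (hε : 0 ≤ ε) {q : Euc d} {s : Set (Euc d)} {u : Euc d → ℝ}
    (h : SubP F s u) : SubS F ε Θ q s u := by
  intro x hx p X hX hj _
  have h1 := h x hx p X hX hj
  have h2 : 0 ≤ ε * (‖q + p‖ ^ (-Θ) + 1 + ‖p‖) := by positivity
  linarith

lemma SubS.mono_set {ε : ℝ} {q : Euc d} {s s' : Set (Euc d)} {u : Euc d → ℝ}
    (h : SubS F ε Θ q s u) (hs : s' ⊆ s) : SubS F ε Θ q s' u := fun x hx => h x (hs hx)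

/-- A solution agrees on the ball of radius `3/4` with a globally Lipschitz function bounded
by one. -/
lemma exists_ext (hlam : 0 < lam) (hlL : lam ≤ Lam) (hΘ : 0 < Θ) (hF : QEll lam Lam F)
    {u : Euc d → ℝ} (hu : ContinuousOn u (ball 0 1)) (hub : ∀ x ∈ ball (0 : Euc d) 1, |u x| ≤ 1)
    (h1 : SubS F (lam / 2) Θ 0 (ball 0 1) u) (h2 : SubS (dualF F) (lam / 2) Θ 0 (ball 0 1) (-u)) :
    ∃ g : Euc d → ℝ, (∀ x, |g x| ≤ 1) ∧
      (∀ x y, |g x - g y| ≤ 1200 * Lam / lam * ‖x - y‖) ∧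
      ∀ x ∈ closedBall (0 : Euc d) (3 / 4), g x = u x := by
  have hLam : 0 < Lam := hlam.trans_le hlL
  have hK : 0 ≤ 1200 * Lam / lam := by positivity
  have hK1 : 10 ≤ 1200 * Lam / lam := by
    rw [le_div_iff₀ hlam]; linarith
  have hsub : closedBall (0 : Euc d) (3 / 4) ⊆ ball 0 1 := closedBall_subset_ball (by norm_num)
  have hlip : LipschitzOnWith ⟨1200 * Lam / lam, hK⟩ u (closedBall 0 (3 / 4)) := by
    refine LipschitzOnWith.of_dist_le_mul fun x hx y hy => ?_
    rw [Real.dist_eq, dist_eq_norm]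
    show |u x - u y| ≤ 1200 * Lam / lam * ‖x - y‖
    by_cases hxy : ‖y - x‖ ≤ 1 / 5
    · exact lipschitz_est hlam hlL hΘ hF hu hub h1 (by simpa using h2) (by simpa using hx) hxy
    · rw [norm_sub_rev] at hxy
      push Not at hxy
      have a1 := hub x (hsub hx)
      have a2 := hub y (hsub hy)
      have := abs_sub (u x) (u y)
      nlinarith
  obtain ⟨g, hg, hgu⟩ := hlip.extend_real
  refine ⟨fun x => max (-1) (min 1 (g x)), fun x => abs_le.2 ⟨le_max_left _ _, ?_⟩, fun x y => ?_,
    fun x hx => ?_⟩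
  · exact max_le (by norm_num) (min_le_left _ _)
  · have := ((hg.const_min 1).const_max (-1)).dist_le_mul x y
    rw [Real.dist_eq, dist_eq_norm] at this
    exact this
  · have := abs_le.1 (hub x (hsub hx))
    simp only [← hgu hx]
    rw [min_eq_right this.2, max_eq_right this.1]

/-- Ultralimits of uniformly elliptic operators. -/
lemma exists_limit_op (hd : 1 ≤ d) (hlam : 0 < lam) (U : Ultrafilter ℕ) {Fn : ℕ → Mat d → ℝ}
    (hF : ∀ n, QEll lam Lam (Fn n)) : ∃ F : Mat d → ℝ, QEll lam Lam F ∧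
      ∀ X : Mat d, X.IsSymm → Tendsto (fun n => Fn n X) U (𝓝 (F X)) := by
  have hex : ∀ X : Mat d, ∃ l : ℝ, X.IsSymm → Tendsto (fun n => Fn n X) U (𝓝 l) := fun X => by
    by_cases hX : X.IsSymm
    · obtain ⟨l, -, hl⟩ := exists_ulim U
        (isCompact_Icc (a := -(Lam * ‖opM X‖)) (b := Lam * ‖opM X‖))
        (f := fun n => Fn n X) (fun n => abs_le.1 ((hF n).abs_F_le hd hlam hX))
      exact ⟨l, fun _ => hl⟩
    · exact ⟨0, fun h => absurd h hX⟩
  choose F hFl using hex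
  refine ⟨F, ⟨?_, fun X Y hX hY h e he => ?_, fun X hX κ hκ => ?_⟩, hFl⟩
  · refine tendsto_nhds_unique (hFl 0 Matrix.isSymm_zero) ?_
    simp only [fun n => (hF n).zero]; exact tendsto_const_nhds
  · exact le_of_tendsto_of_tendsto' ((hFl X hX).add_const _) (hFl Y hY)
      fun n => (hF n).mono X Y hX hY h e he
  · exact le_of_tendsto_of_tendsto' (hFl _ (hX.add (Matrix.isSymm_one.smul κ)))
      ((hFl X hX).add_const _) fun n => (hF n).up X hX κ hκ

set_option maxHeartbeats 1600000 in
/-- Compactness: solutions with small right-hand side are close to harmonic functions with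
controlled affine approximation at the origin. The limit of a sequence of counterexamples and the limit
of the harmonic functions with the same boundary values coincide by comparison. -/
lemma approx (hd : 1 ≤ d) (hlam : 0 < lam) (hlL : lam ≤ Lam) (hΘ : 0 < Θ) {δ' : ℝ} (hδ' : 0 < δ') :
    ∃ ε > 0, ∀ F : Mat d → ℝ, QEll lam Lam F → ConvexOn ℝ univ F → ∀ u : Euc d → ℝ,
      ContinuousOn u (ball 0 1) → (∀ x ∈ ball (0 : Euc d) 1, |u x| ≤ 1) →
      SubS F ε Θ 0 (ball 0 1) u → SubS (dualF F) ε Θ 0 (ball 0 1) (-u) →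
      ∃ (h : Euc d → ℝ) (b : Euc d), ContinuousOn h (closedBall 0 (3 / 4)) ∧
        SubP F (ball 0 (3 / 4)) h ∧ SubP (dualF F) (ball 0 (3 / 4)) (-h) ∧
        ‖b‖ ≤ conB d lam Lam ∧
        (∀ x : Euc d, ‖x‖ ≤ 1 / (10 * d) → |h x - h 0 - ⟪b, x⟫| ≤ conQ d lam Lam * ‖x‖ ^ 2) ∧
        ∀ x ∈ closedBall (0 : Euc d) (3 / 4), |u x - h x| ≤ δ' := by
  by_contra hcon
  push Not at hcon
  set en : ℕ → ℝ := fun n => lam / 2 * (1 / ((n : ℝ) + 1)) with hendef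
  have hen : ∀ n, 0 < en n := fun n => by positivity
  have hen1 : ∀ n, en n ≤ lam / 2 := fun n => by
    have : 1 / ((n : ℝ) + 1) ≤ 1 := by
      rw [div_le_one (by positivity)]; linarith [Nat.cast_nonneg (α := ℝ) n]
    have := mul_le_mul_of_nonneg_left this (half_pos hlam).le
    simpa [hendef] using this
  let U : Ultrafilter ℕ := hyperfilter ℕ
  have he0 : Tendsto en U (𝓝 0) := by
    have := (tendsto_one_div_add_atTop_nhds_zero_nat (𝕜 := ℝ)).const_mul (lam / 2)
    rw [mul_zero] at this
    exact this.mono_left Nat.hyperfilter_le_atTop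
  choose Fn hFn hconv un hunc hunb hsub hsup hno using fun n => hcon (en n) (hen n)
  have hK : 0 ≤ 1200 * Lam / lam := by have := hlam.trans_le hlL; positivity
  choose gn hg1 hgl hgu using fun n => exists_ext hlam hlL hΘ (hFn n) (hunc n) (hunb n)
    ((hsub n).mono_eps (hen1 n)) ((hsup n).mono_eps (hen1 n))
  choose hn bn hh1 hhm hhb hhs hhS hb1 hbe using fun n =>
    exists_harmonic hd hlam hlL (hFn n) (hconv n) (hg1 n) hK (hgl n)
  have hcl : closedBall (0 : Euc d) (3 / 4) ⊆ ball 0 1 := closedBall_subset_ball (by norm_num)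
  have hbcl : ball (0 : Euc d) (3 / 4) ⊆ ball 0 1 := ball_subset_ball (by norm_num)
  have hcmp : IsCompact (closedBall (0 : Euc d) (3 / 4)) := isCompact_closedBall _ _
  obtain ⟨F, hF, hFl⟩ := exists_limit_op hd hlam U hFn
  have hFl' : ∀ X : Mat d, X.IsSymm → Tendsto (fun n => dualF (Fn n) X) U (𝓝 (dualF F X)) :=
    fun X hX => (hFl (-X) hX.neg).neg
  choose g _ hglim using fun x => exists_ulim U (isCompact_Icc (a := (-1 : ℝ)) (b := 1))
    (f := fun n => gn n x) (fun n => abs_le.1 (hg1 n x))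
  choose h _ hhlim using fun x => exists_ulim U (isCompact_Icc (a := (-1 : ℝ)) (b := 1))
    (f := fun n => hn n x) (fun n => abs_le.1 (hh1 n x))
  have hgun : ∀ ε > 0, ∀ᶠ n in (U : Filter ℕ), ∀ y ∈ closedBall (0 : Euc d) (3 / 4),
      |un n y - g y| ≤ ε := by
    have := unif_conv (U := (U : Filter ℕ)) hcmp (un := gn) (u := g) (fun ε hε => by
      refine ⟨ε / (1200 * Lam / lam + 1), by positivity, .of_forall fun n x _ y _ hxy => ?_⟩
      rw [le_div_iff₀ (by positivity)] at hxy
      refine (hgl n x y).trans ?_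
      linarith [norm_nonneg (x - y)]) (fun x _ => hglim x)
    intro ε hε
    filter_upwards [this ε hε] with n hn y hy
    rw [← hgu n y hy]; exact hn y hy
  have hhun : ∀ ε > 0, ∀ᶠ n in (U : Filter ℕ), ∀ y ∈ closedBall (0 : Euc d) (3 / 4),
      |hn n y - h y| ≤ ε :=
    unif_conv hcmp (fun ε hε => by
      obtain ⟨δ, hδ, H⟩ := HasMod.equi (d := d) (Lg := 1200 * Lam / lam) hε
      exact ⟨δ, hδ, .of_forall fun n => H _ (hhm n)⟩) (fun x _ => hhlim x)
  have hneg : ∀ {vn : ℕ → Euc d → ℝ} {v : Euc d → ℝ},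
      (∀ ε > 0, ∀ᶠ n in (U : Filter ℕ), ∀ y ∈ closedBall (0 : Euc d) (3 / 4), |vn n y - v y| ≤ ε) →
      ∀ ε > 0, ∀ᶠ n in (U : Filter ℕ), ∀ y ∈ closedBall (0 : Euc d) (3 / 4),
        |(-vn n) y - (-v) y| ≤ ε := fun H ε hε => by
    filter_upwards [H ε hε] with n hn y hy
    rw [Pi.neg_apply, Pi.neg_apply, ← neg_sub', abs_neg]; exact hn y hy
  have hunc' : ∀ n, ContinuousOn (un n) (closedBall 0 (3 / 4)) := fun n => (hunc n).mono hcl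
  have hhc : ∀ n, ContinuousOn (hn n) (closedBall 0 (3 / 4)) := fun n => (hhm n).continuousOn
  have hgc := continuousOn_of_unif hunc' hgun
  have hhc' := continuousOn_of_unif hhc hhun
  have s1 : SubP F (ball 0 (3 / 4)) g := stability hd hlam hΘ hF hFl (fun n => (hen n).le) he0
    hunc' hgun (fun n => (hsub n).mono_set hbcl)
  have s2 : SubP (dualF F) (ball 0 (3 / 4)) (-g) := stability hd hlam hΘ hF.dual hFl'
    (fun n => (hen n).le) he0 (fun n => (hunc' n).neg) (hneg hgun)
    (fun n => (hsup n).mono_set hbcl)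
  have s3 : SubP F (ball 0 (3 / 4)) h := stability hd hlam hΘ hF hFl (fun n => (hen n).le) he0
    hhc hhun (fun n => (hhs n).subS (hen n).le)
  have s4 : SubP (dualF F) (ball 0 (3 / 4)) (-h) := stability hd hlam hΘ hF.dual hFl'
    (fun n => (hen n).le) he0 (fun n => (hhc n).neg) (hneg hhun) (fun n => (hhS n).subS (hen n).le)
  have hbd : ∀ x ∈ sphere (0 : Euc d) (3 / 4), h x = g x := fun x hx => by
    refine tendsto_nhds_unique (hhlim x) ?_
    have : ∀ n, hn n x = gn n x := fun n => hhb n x (by simpa using (mem_sphere_zero_iff_norm.1 hx).ge)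
    simp only [this]; exact hglim x
  have c1 := comparison hd hlam hF hgc hhc' s1 s4 (fun x hx => (hbd x hx).ge)
  have c2 := comparison hd hlam hF hhc' hgc s3 s2 (fun x hx => (hbd x hx).le)
  obtain ⟨n, hn1, hn2⟩ := ((hgun (δ' / 2) (half_pos hδ')).and (hhun (δ' / 2) (half_pos hδ'))).exists
  obtain ⟨x, hx, hlt⟩ := hno n (hn n) (bn n) (hhc n) (hhs n) (hhS n) (hb1 n) (hbe n)
  have e1 := abs_le.1 (hn1 x hx)
  have e2 := abs_le.1 (hn2 x hx)
  have e3 : g x = h x := le_antisymm (c1 x hx) (c2 x hx)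
  have : |un n x - hn n x| ≤ δ' := abs_le.2 ⟨by linarith [e1.1, e2.2], by linarith [e1.2, e2.1]⟩
  linarith

end approximation

/-! ### Rescaling and conclusion -/

section final
open Topology

variable {d : ℕ} {F : Mat d → ℝ} {lam Lam Θ : ℝ}

/-- The operator `M ↦ F (c M) / c`. -/
def scaleF (c : ℝ) (F : Mat d → ℝ) (X : Mat d) : ℝ := F (c • X) / c

lemma dualF_scaleF (c : ℝ) (F : Mat d → ℝ) : dualF (scaleF c F) = scaleF c (dualF F) := by
  ext X; simp only [dualF, scaleF, smul_neg, neg_div]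

lemma QEll.scale (hF : QEll lam Lam F) {c : ℝ} (hc : 0 < c) : QEll lam Lam (scaleF c F) := by
  refine ⟨by simp [scaleF, hF.zero], fun X Y hX hY h e he => ?_, fun X hX κ hκ => ?_⟩
  · have := hF.mono (c • X) (c • Y) (hX.smul c) (hY.smul c)
      (fun y => by rw [qf_smul, qf_smul]; exact mul_le_mul_of_nonneg_left (h y) hc.le) e he
    rw [qf_smul, qf_smul] at this
    rw [scaleF, scaleF, le_div_iff₀ hc, add_mul, div_mul_cancel₀ _ hc.ne']
    linarith
  · have := hF.up (c • X) (hX.smul c) (c * κ) (by positivity)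
    rw [scaleF, scaleF, smul_add, smul_smul, div_le_iff₀ hc, add_mul, div_mul_cancel₀ _ hc.ne']
    linarith

/-- Rescaling of the singular inequality around an affine function. -/
lemma SubS.rescale {ε : ℝ} {u : Euc d → ℝ} (h : SubS F ε Θ 0 (ball 0 1) u) (hε : 0 ≤ ε)
    {ρ C B : ℝ} (hρ : 0 < ρ) (hρ1 : ρ ≤ 1) (hC : 0 < C) {b : Euc d} (hb : ‖b‖ ≤ B) (c : ℝ)
    (hsm : ε * ((2 * C * ρ) ^ (-Θ) + 1 + B + 2 * C * ρ) ≤ lam * C) :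
    SubS (scaleF (2 * C) F) (lam / 2) Θ ((2 * C * ρ)⁻¹ • b) (ball 0 1)
      (fun x => (u (ρ • x) - c - ρ * ⟪b, x⟫) / (2 * C * ρ ^ 2)) := by
  intro x hx p X hX hj hp
  set A := 2 * C * ρ with hA
  have hA0 : 0 < A := by positivity
  have hB : 0 ≤ B := (norm_nonneg _).trans hb
  have hup : UpJet u (ρ • x) (b + A • p) ((2 * C) • X) := by
    have hcont : Tendsto (fun y : Euc d => ρ⁻¹ • y) (𝓝 0) (𝓝 0) := by
      have := (continuous_const_smul (T := Euc d) ρ⁻¹).tendsto 0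
      rwa [smul_zero] at this
    filter_upwards [hcont.eventually hj] with y hy
    have hD : 0 < 2 * C * ρ ^ 2 := by positivity
    have e1 : ρ • (x + ρ⁻¹ • y) = ρ • x + y := by
      rw [smul_add, smul_smul, mul_inv_cancel₀ hρ.ne', one_smul]
    simp only [e1, qf_smul_vec, real_inner_smul_right, inner_add_right] at hy
    rw [div_le_iff₀ hD, add_mul, add_mul, div_mul_cancel₀ _ hD.ne'] at hy
    rw [inner_add_left, real_inner_smul_left, qf_smul]
    have e2 : ρ⁻¹ * ⟪p, y⟫ * (2 * C * ρ ^ 2) = A * ⟪p, y⟫ := by rw [hA]; field_simp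
    have e3 : ρ⁻¹ ^ 2 * qf X y / 2 * (2 * C * ρ ^ 2) = 2 * C * qf X y / 2 := by field_simp
    have e4 : ρ * (⟪b, x⟫ + ρ⁻¹ * ⟪b, y⟫) = ρ * ⟪b, x⟫ + ⟪b, y⟫ := by field_simp
    rw [e2, e3, e4] at hy
    linarith
  have hxm : ρ • x ∈ ball (0 : Euc d) 1 := by
    rw [mem_ball_zero_iff] at hx ⊢
    rw [norm_smul, Real.norm_of_nonneg hρ.le]
    nlinarith [norm_nonneg x]
  have e : b + A • p = A • (A⁻¹ • b + p) := by
    rw [smul_add, smul_smul, mul_inv_cancel₀ hA0.ne', one_smul]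
  have hne : (0 : Euc d) + (b + A • p) ≠ 0 := by
    rw [zero_add, e]; exact smul_ne_zero hA0.ne' hp
  have h1 := h _ hxm _ _ (hX.smul _) hup hne
  rw [zero_add] at h1
  set N := ‖A⁻¹ • b + p‖ ^ (-Θ) with hN
  have hN0 : 0 ≤ N := by positivity
  have h2 : ‖b + A • p‖ ^ (-Θ) = A ^ (-Θ) * N := by
    rw [e, norm_smul, Real.norm_of_nonneg hA0.le, Real.mul_rpow hA0.le (norm_nonneg _)]
  have h3 : ‖b + A • p‖ ≤ B + A * ‖p‖ := by
    refine (norm_add_le _ _).trans (add_le_add hb ?_)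
    rw [norm_smul, Real.norm_of_nonneg hA0.le]
  have hAΘ : 0 ≤ A ^ (-Θ) := by positivity
  have h4 : ‖b + A • p‖ ^ (-Θ) + 1 + ‖b + A • p‖ ≤
      (A ^ (-Θ) + 1 + B + A) * (N + 1 + ‖p‖) := by
    rw [h2]
    nlinarith [mul_nonneg hAΘ (norm_nonneg p), mul_nonneg hB hN0, mul_nonneg hB (norm_nonneg p),
      mul_nonneg hA0.le hN0, norm_nonneg p]
  have h5 := mul_le_mul_of_nonneg_left h4 hε
  have h6 := mul_le_mul_of_nonneg_right hsm (show 0 ≤ N + 1 + ‖p‖ by positivity)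
  rw [scaleF, le_div_iff₀ (by positivity)]
  linarith

lemma SubP.add_affine {s : Set (Euc d)} {h : Euc d → ℝ} (hh : SubP F s h) (c : ℝ) (b : Euc d) :
    SubP F s (fun x => h x - c - ⟪b, x⟫) := by
  intro x hx p X hX hj
  refine hh x hx (p + b) X hX ?_
  filter_upwards [hj] with y hy
  rw [inner_add_left]
  rw [inner_add_right] at hy
  linarith

lemma conQ_pos (hd : 1 ≤ d) (hlam : 0 < lam) (hlL : lam ≤ Lam) : 0 < conQ d lam Lam := by
  have h1 := wt0_pos hlam hd
  have h2 : 0 ≤ ((d : ℝ) + 1) * Lam := by have := hlam.trans_le hlL; positivity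
  have h3 : 0 ≤ cst3 (wt0 lam d) ((d + 1) * Lam) := by
    unfold cst3 cst2 cst1; positivity
  unfold conQ; positivity

/-- A Lipschitz bound for `u - ⟪b, ·⟫` at a critical point of `u` bounds `b`. -/
lemma norm_le_of_critical {u : Euc d → ℝ} (hu0 : u 0 = 0) (hg : HasGradientAt u 0 0) {b : Euc d}
    {ρ E : ℝ} (hρ : 0 < ρ) (hE : 0 ≤ E)
    (h : ∀ y : Euc d, ‖y‖ ≤ 1 / 5 → |u (ρ • y) - ρ * ⟪b, y⟫| ≤ ρ * E * ‖y‖) : ‖b‖ ≤ E := by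
  by_cases hb : b = 0
  · rw [hb, norm_zero]; exact hE
  have hb0 : 0 < ‖b‖ := norm_pos_iff.2 hb
  refine le_of_forall_pos_le_add fun η hη => ?_
  have hlo := hasGradientAt_iff_isLittleO_nhds_zero.1 hg
  simp only [zero_add, hu0, inner_zero_left, sub_zero] at hlo
  obtain ⟨r, hr, hball⟩ := Metric.eventually_nhds_iff_ball.1 (hlo.def hη)
  set τ := min (1 / 5) (r / (2 * ρ)) / ‖b‖ with hτ
  have hm : 0 < min (1 / 5) (r / (2 * ρ)) := lt_min (by norm_num) (by positivity)
  have hτ0 : 0 < τ := by positivity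
  have hy : ‖τ • b‖ = min (1 / 5) (r / (2 * ρ)) := by
    rw [norm_smul, Real.norm_of_nonneg hτ0.le, hτ, div_mul_cancel₀ _ hb0.ne']
  have h1 := h (τ • b) (by rw [hy]; exact min_le_left _ _)
  have hz : ‖ρ • τ • b‖ = ρ * ‖τ • b‖ := by rw [norm_smul, Real.norm_of_nonneg hρ.le]
  have h2 := hball (ρ • τ • b) (by
    rw [mem_ball_zero_iff, hz, hy]
    have : ρ * min (1 / 5) (r / (2 * ρ)) ≤ ρ * (r / (2 * ρ)) :=
      mul_le_mul_of_nonneg_left (min_le_right _ _) hρ.le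
    have e : ρ * (r / (2 * ρ)) = r / 2 := by field_simp
    linarith)
  rw [Real.norm_eq_abs, hz] at h2
  have h3 : ρ * ⟪b, τ • b⟫ ≤ ρ * (E + η) * ‖τ • b‖ := by
    have := (abs_le.1 h1).1
    have := (abs_le.1 h2).2
    linarith
  rw [real_inner_smul_right, real_inner_self_eq_norm_sq, norm_smul, Real.norm_of_nonneg hτ0.le] at h3
  have h4 : (ρ * τ * ‖b‖) * ‖b‖ ≤ (ρ * τ * ‖b‖) * (E + η) := by linarith
  exact le_of_mul_le_mul_left h4 (by positivity)

lemma hasGradientAt_zero_of_quad {h : Euc d → ℝ} (h0 : h 0 = 0) {r C : ℝ} (hr : 0 < r)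
    (hq : ∀ x : Euc d, ‖x‖ ≤ r → |h x| ≤ C * ‖x‖ ^ 2) : HasGradientAt h 0 0 := by
  rw [hasGradientAt_iff_isLittleO_nhds_zero]
  simp only [zero_add, h0, inner_zero_left, sub_zero]
  refine Asymptotics.IsBigO.trans_isLittleO (g := fun x : Euc d => ‖x‖ ^ 2) ?_
    (Asymptotics.isLittleO_norm_pow_id one_lt_two)
  refine Asymptotics.IsBigO.of_bound C ?_
  filter_upwards [Metric.closedBall_mem_nhds (0 : Euc d) hr] with x hx
  rw [Real.norm_eq_abs, Real.norm_of_nonneg (by positivity)]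
  exact hq x (by simpa using hx)

end final

/-- approximation by `F`-harmonic functions at a critical point
(Step 1 in the proof of Theorem 7.1). -/
theorem statement7
    (d : ℕ) (hd : 1 ≤ d) (lam Lam : ℝ) (hlam : 0 < lam) (hlL : lam ≤ Lam)
    (Θ : ℝ) (hΘ : 0 < Θ) (L : ℝ) (hL : 0 < L)
    (ω : ℝ → ℝ) (hωmono : MonotoneOn ω (Set.Ici 0)) (hωnn : ∀ t, 0 ≤ t → 0 ≤ ω t)
    (hω0 : Tendsto ω (nhdsWithin 0 (Set.Ioi 0)) (nhds 0)) :
    ∀ δ > (0:ℝ), ∃ ε > (0:ℝ),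
      ∀ F : Mat d → ℝ, UniformlyElliptic lam Lam F → ConvexOn ℝ Set.univ F →
      ∀ θ : Euc d → ℝ, ContinuousOn θ (closedBall 0 1) →
        (∀ x ∈ closedBall (0 : Euc d) 1, -1 < θ x ∧ θ x ≤ Θ) →
        (∀ x ∈ closedBall (0 : Euc d) 1, ∀ z ∈ closedBall (0 : Euc d) 1,
          |θ x - θ z| ≤ L * ω ‖x - z‖) →
      ∀ f : Euc d → ℝ, ContinuousOn f (ball 0 1) →
        (∀ x ∈ ball (0 : Euc d) 1, |f x| ≤ ε) →
      ∀ u : Euc d → ℝ, ContinuousOn u (ball 0 1) →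
        (∀ x ∈ ball (0 : Euc d) 1, |u x| ≤ 1) →
        ViscSol F θ f 0 u →
        u 0 = 0 → HasGradientAt u (0 : Euc d) 0 →
      ∃ h : Euc d → ℝ, ContinuousOn h (ball 0 (1/2)) ∧
        ViscSolPure F (fun _ => (0:ℝ)) h (ball 0 (1/2)) ∧
        h 0 = 0 ∧ HasGradientAt h (0 : Euc d) 0 ∧
        ∀ x ∈ ball (0 : Euc d) (1/2), |u x - h x| < δ := by
  have hLam : 0 < Lam := hlam.trans_le hlL
  intro δ hδ
  set C := conQ d lam Lam with hCdef
  have hC : 0 < C := conQ_pos hd hlam hlL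
  set K := 1200 * Lam / lam with hKdef
  have hK : 0 < K := by positivity
  have hB : 0 ≤ conB d lam Lam := by
    have := cst1_nonneg (wt0 lam d) ((d + 1) * Lam); unfold conB; positivity
  have hd' : (1 : ℝ) ≤ d := by exact_mod_cast hd
  have hd0 : (0 : ℝ) < d := by linarith
  -- The scale `ρ` makes the error `C * ρ * (2 + K)` smaller than `δ`.
  set ρ := min (1 / (10 * (d : ℝ))) (δ / (2 * (C * (2 + K)))) with hρdef
  have hρ : 0 < ρ := lt_min (by positivity) (by positivity)
  have hρd : ρ ≤ 1 / (10 * (d : ℝ)) := min_le_left _ _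
  have hρ10 : ρ ≤ 1 / 10 := hρd.trans (one_div_le_one_div_of_le (by norm_num) (by linarith))
  have hρδ : C * ρ * (2 + K) ≤ δ / 2 := by
    have := mul_le_mul_of_nonneg_left (min_le_right (1 / (10 * (d : ℝ))) (δ / (2 * (C * (2 + K)))))
      (show 0 ≤ C * (2 + K) by positivity)
    have e : C * (2 + K) * (δ / (2 * (C * (2 + K)))) = δ / 2 := by field_simp
    rw [e] at this
    calc C * ρ * (2 + K) = C * (2 + K) * ρ := by ring
      _ ≤ _ := this
  have hδ' : 0 < C * ρ ^ 2 := by positivity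
  obtain ⟨ε₁, hε₁, happ⟩ := approx (d := d) hd hlam hlL hΘ hδ'
  set M := (2 * C * ρ) ^ (-Θ) + 1 + conB d lam Lam + 2 * C * ρ with hMdef
  have hM : 0 < M := by positivity
  refine ⟨min ε₁ (lam * C / M), lt_min hε₁ (by positivity), ?_⟩
  intro F hFell hconv θ _ hθ _ f _ hf u hu hub hvisc hu0 hgrad
  have hF := hFell.qEll hlam hlL
  set ε := min ε₁ (lam * C / M) with hεdef
  have hε : 0 ≤ ε := le_min hε₁.le (by positivity)
  have hεM : ε * M ≤ lam * C := (le_div_iff₀ hM).1 (min_le_right _ _)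
  have hs1 := subS_of_visc hθ hf hvisc.1
  have hs2 := subS_of_visc_super hθ hf hvisc.2
  obtain ⟨h, b, hhc, hh1, hh2, hb, hq, hclose⟩ := happ F hF hconv u hu hub
    (hs1.mono_eps (min_le_left _ _)) (hs2.mono_eps (min_le_left _ _))
  have h00 : |h 0| ≤ C * ρ ^ 2 := by
    have := hclose 0 (mem_closedBall_self (by norm_num))
    rwa [hu0, zero_sub, abs_neg] at this
  -- Blow-up of `u` around the affine part of `h`.
  set u1 : Euc d → ℝ := fun x => (u (ρ • x) - h 0 - ρ * ⟪b, x⟫) / (2 * C * ρ ^ 2) with hu1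
  have hmaps : ∀ x ∈ ball (0 : Euc d) 1, ρ • x ∈ closedBall (0 : Euc d) (1 / 10) := fun x hx => by
    rw [mem_ball_zero_iff] at hx
    rw [mem_closedBall_zero_iff, norm_smul, Real.norm_of_nonneg hρ.le]
    nlinarith [norm_nonneg x]
  have hu1c : ContinuousOn u1 (ball 0 1) := by
    refine ((ContinuousOn.sub (hu.comp (continuous_const_smul ρ).continuousOn fun x hx => ?_)
      continuousOn_const).sub (continuous_const.mul
        (continuous_const.inner continuous_id)).continuousOn).div_const _
    exact closedBall_subset_ball (by norm_num) (hmaps x hx)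
  have hu1b : ∀ x ∈ ball (0 : Euc d) 1, |u1 x| ≤ 1 := fun x hx => by
    have a1 := hclose (ρ • x) (closedBall_subset_closedBall (by norm_num) (hmaps x hx))
    rw [mem_ball_zero_iff] at hx
    have hn : ‖ρ • x‖ ≤ ρ := by
      rw [norm_smul, Real.norm_of_nonneg hρ.le]; nlinarith [norm_nonneg x]
    have a2 := hq (ρ • x) (hn.trans hρd)
    have a3 : C * ‖ρ • x‖ ^ 2 ≤ C * ρ ^ 2 := by gcongr
    rw [real_inner_smul_right] at a2
    rw [hu1, abs_div, abs_of_pos (show 0 < 2 * C * ρ ^ 2 by positivity), div_le_one (by positivity)]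
    have e : u (ρ • x) - h 0 - ρ * ⟪b, x⟫ =
        (u (ρ • x) - h (ρ • x)) + (h (ρ • x) - h 0 - ρ * ⟪b, x⟫) := by ring
    rw [e]
    refine (abs_add_le _ _).trans ?_
    linarith
  have hr1 : SubS (scaleF (2 * C) F) (lam / 2) Θ ((2 * C * ρ)⁻¹ • b) (ball 0 1) u1 :=
    hs1.rescale hε hρ (by linarith) hC hb (h 0) hεM
  have hr2 : SubS (dualF (scaleF (2 * C) F)) (lam / 2) Θ (-((2 * C * ρ)⁻¹ • b)) (ball 0 1) (-u1) := by
    have := hs2.rescale hε hρ (by linarith) hC (b := -b) (by rwa [norm_neg]) (-h 0) hεM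
    rw [dualF_scaleF, ← smul_neg]
    convert this using 1
    ext x
    simp only [hu1, Pi.neg_apply, inner_neg_left]
    ring
  have hbK : ‖b‖ ≤ 2 * C * ρ * K := by
    refine norm_le_of_critical hu0 hgrad hρ (by positivity) fun y hy => ?_
    have := lipschitz_est hlam hlL hΘ (hF.scale (by positivity)) hu1c hu1b hr1 hr2
      (x0 := 0) (by norm_num) (y0 := y) (by simpa using hy)
    rw [zero_sub, norm_neg, abs_sub_comm] at this
    have e : u1 y - u1 0 = (u (ρ • y) - ρ * ⟪b, y⟫) / (2 * C * ρ ^ 2) := by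
      simp only [hu1, smul_zero, hu0, inner_zero_right]; ring
    rw [e, abs_div, abs_of_pos (show 0 < 2 * C * ρ ^ 2 by positivity),
      div_le_iff₀ (by positivity)] at this
    refine this.trans (le_of_eq ?_)
    rw [← hKdef]; ring
  have hsub : ball (0 : Euc d) (1 / 2) ⊆ ball 0 (3 / 4) := ball_subset_ball (by norm_num)
  have hp1 : SubP F (ball 0 (1 / 2)) (fun x => h x - h 0 - ⟪b, x⟫) :=
    fun x hx => hh1.add_affine (h 0) b x (hsub hx)
  have hp2 : SubP (dualF F) (ball 0 (1 / 2)) (-(fun x => h x - h 0 - ⟪b, x⟫)) := by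
    have : -(fun x => h x - h 0 - ⟪b, x⟫) = fun x => (-h) x - (-h 0) - ⟪-b, x⟫ := by
      ext x; simp only [Pi.neg_apply, inner_neg_left]; ring
    rw [this]
    exact fun x hx => hh2.add_affine (-h 0) (-b) x (hsub hx)
  refine ⟨fun x => h x - h 0 - ⟪b, x⟫, ?_, visc_of_subP hd hlam hF hp1 hp2, by simp, ?_,
    fun x hx => ?_⟩
  · exact ((hhc.mono (hsub.trans ball_subset_closedBall)).sub continuousOn_const).sub
      (continuous_const.inner continuous_id).continuousOn
  · exact hasGradientAt_zero_of_quad (by simp) (show 0 < 1 / (10 * (d : ℝ)) by positivity) hq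
  · have a1 := hclose x (ball_subset_closedBall (hsub hx))
    rw [mem_ball_zero_iff] at hx
    have a2 : |⟪b, x⟫| ≤ 2 * C * ρ * K * (1 / 2) := (abs_real_inner_le_norm _ _).trans
      (mul_le_mul hbK hx.le (norm_nonneg _) (by positivity))
    have a3 : C * ρ ^ 2 ≤ C * ρ := by nlinarith [mul_pos hC hρ]
    have e : u x - (h x - h 0 - ⟪b, x⟫) = (u x - h x) + h 0 + ⟪b, x⟫ := by ring
    rw [e]
    have := abs_add_three (u x - h x) (h 0) ⟪b, x⟫
    linarith

end
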